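/- arXiv:1503.06434 — 2 statements merged into one kernel-verified Lean document; each statement's English description precedes it below -/
import Mathlib

section
/- For all integers a ≥ 2, b ≥ 1, k ≥ 1, l_1, …, l_k ≥ 1 and any assignment α as in the construction, the polytope P(a, b, k, l, α) is a smooth Fano polytope of dimension n = a + 2b − 1 + Σ_{j=1}^k l_j with n + k + 3 vertices. -/
/-! ## Basic definitions: lattice polytopes, smooth Fano polytopes,
unimodular equivalence, F- and I-equivalence, primitive collections. -/

/-- A point of `ℝ^n` all of whose coordinates are integers. -/
def IsLatticePoint {n : ℕ} (x : Fin n → ℝ) : Prop := ∀ i, ∃ m : ℤ, x i = (m : ℝ)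

/-- The vertex set of a polytope: its extreme points. -/
def vertexSet {n : ℕ} (P : Set (Fin n → ℝ)) : Set (Fin n → ℝ) :=
  Set.extremePoints ℝ P

/-- A lattice `n`-polytope: the convex hull of finitely many lattice points,
of full dimension `n`. -/
def IsLatticePolytope {n : ℕ} (P : Set (Fin n → ℝ)) : Prop :=
  (∃ S : Finset (Fin n → ℝ), (∀ x ∈ S, IsLatticePoint x) ∧
    P = convexHull ℝ (S : Set (Fin n → ℝ))) ∧
  affineSpan ℝ P = ⊤

/-- A face of `P`: an exposed subset of `P`. -/
def IsFaceOf {n : ℕ} (F P : Set (Fin n → ℝ)) : Prop := IsExposed ℝ P F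

/-- A facet of `P`: a face of affine dimension `n - 1`. -/
def IsFacetOf {n : ℕ} (F P : Set (Fin n → ℝ)) : Prop :=
  IsFaceOf F P ∧ Module.finrank ℝ (vectorSpan ℝ F) + 1 = n

/-- A set `S` of points of `ℝ^n` forms a `ℤ`-basis of `ℤ^n`:
it consists of `n` lattice points whose matrix has determinant `±1`. -/
def IsUnimodularBasis {n : ℕ} (S : Set (Fin n → ℝ)) : Prop :=
  ∃ b : Fin n → (Fin n → ℝ), Function.Injective b ∧ Set.range b = S ∧
    (∀ i, IsLatticePoint (b i)) ∧ |(Matrix.of b).det| = 1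

/-- A smooth Fano `n`-polytope: a lattice `n`-polytope with the origin in its
interior such that the vertex set of every facet is a `ℤ`-basis of `ℤ^n`. -/
def IsSmoothFano {n : ℕ} (P : Set (Fin n → ℝ)) : Prop :=
  IsLatticePolytope P ∧ (0 : Fin n → ℝ) ∈ interior P ∧
    ∀ F : Set (Fin n → ℝ), IsFacetOf F P → IsUnimodularBasis (vertexSet P ∩ F)

/-- Two subsets of `ℝ^n` are unimodularly equivalent if an affine map of `ℝ^n`
mapping `ℤ^n` onto `ℤ^n` maps one onto the other. -/
def UnimodularEquiv {n : ℕ} (Q Q' : Set (Fin n → ℝ)) : Prop :=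
  ∃ φ : (Fin n → ℝ) →ᵃ[ℝ] (Fin n → ℝ),
    φ '' {x | IsLatticePoint x} = {x | IsLatticePoint x} ∧ φ '' Q = Q'

/-- One step of an I-sequence: the vertex set of one polytope is obtained from
the vertex set of the other by adding one new lattice point. -/
def IStep {n : ℕ} (P Q : Set (Fin n → ℝ)) : Prop :=
  (∃ w : Fin n → ℝ, IsLatticePoint w ∧ w ∉ vertexSet P ∧
    vertexSet Q = vertexSet P ∪ {w}) ∨
  (∃ w : Fin n → ℝ, IsLatticePoint w ∧ w ∉ vertexSet Q ∧
    vertexSet P = vertexSet Q ∪ {w})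

/-- I-equivalence of smooth Fano `n`-polytopes. -/
def IEquiv {n : ℕ} (P Q : Set (Fin n → ℝ)) : Prop :=
  ∃ (k : ℕ) (c : Fin (k + 1) → Set (Fin n → ℝ)),
    (∀ i, IsSmoothFano (c i)) ∧
    UnimodularEquiv P (c 0) ∧ UnimodularEquiv Q (c (Fin.last k)) ∧
    ∀ i : Fin k, IStep (c i.castSucc) (c i.succ)

/-- `Q` is the stellar subdivision of `P` at the new vertex `w`: `w` is the sum
of the vertices of a proper face `F` of `P`, and the facets of `Q` containing
`w` are exactly the sets `conv({w} ∪ (V(F') \ {v}))` for `F'` a facet of `P`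
containing `F` and `v` a vertex of `F`. -/
def IsStellarSubdivisionAt {n : ℕ} (P Q : Set (Fin n → ℝ)) (w : Fin n → ℝ) : Prop :=
  ∃ F : Set (Fin n → ℝ), IsFaceOf F P ∧ F.Nonempty ∧ F ≠ P ∧
    w = ∑ᶠ v ∈ vertexSet P ∩ F, v ∧
    {G : Set (Fin n → ℝ) | IsFacetOf G Q ∧ w ∈ G} =
      {G : Set (Fin n → ℝ) | ∃ F' v, IsFacetOf F' P ∧ F ⊆ F' ∧
        v ∈ vertexSet P ∩ F ∧
        G = convexHull ℝ (insert w ((vertexSet P ∩ F') \ {v}))}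

/-- One step of an F-sequence: an I-step which moreover is a stellar
subdivision (or its inverse). -/
def FStep {n : ℕ} (P Q : Set (Fin n → ℝ)) : Prop :=
  (∃ w : Fin n → ℝ, IsLatticePoint w ∧ w ∉ vertexSet P ∧
    vertexSet Q = vertexSet P ∪ {w} ∧ IsStellarSubdivisionAt P Q w) ∨
  (∃ w : Fin n → ℝ, IsLatticePoint w ∧ w ∉ vertexSet Q ∧
    vertexSet P = vertexSet Q ∪ {w} ∧ IsStellarSubdivisionAt Q P w)

/-- F-equivalence of smooth Fano `n`-polytopes. -/
def FEquiv {n : ℕ} (P Q : Set (Fin n → ℝ)) : Prop :=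
  ∃ (k : ℕ) (c : Fin (k + 1) → Set (Fin n → ℝ)),
    (∀ i, IsSmoothFano (c i)) ∧
    UnimodularEquiv P (c 0) ∧ UnimodularEquiv Q (c (Fin.last k)) ∧
    ∀ i : Fin k, FStep (c i.castSucc) (c i.succ)

/-- A smooth Fano polytope is F-isolated if every smooth Fano polytope
F-equivalent to it is unimodularly equivalent to it. -/
def FIsolated {n : ℕ} (P : Set (Fin n → ℝ)) : Prop :=
  ∀ Q : Set (Fin n → ℝ), IsSmoothFano Q → FEquiv Q P → UnimodularEquiv Q P

/-- A smooth Fano polytope is I-isolated if every smooth Fano polytope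
I-equivalent to it is unimodularly equivalent to it. -/
def IIsolated {n : ℕ} (P : Set (Fin n → ℝ)) : Prop :=
  ∀ Q : Set (Fin n → ℝ), IsSmoothFano Q → IEquiv Q P → UnimodularEquiv Q P

/-- A primitive collection of a smooth Fano polytope `P`: a nonempty set `A` of
vertices such that `conv(A)` is not a face of `P` but `conv(A \ {x})` is a face
of `P` for every `x ∈ A`. -/
def IsPrimitiveCollection {n : ℕ} (P A : Set (Fin n → ℝ)) : Prop :=
  A.Nonempty ∧ A ⊆ vertexSet P ∧ ¬ IsFaceOf (convexHull ℝ A) P ∧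
    ∀ x ∈ A, IsFaceOf (convexHull ℝ (A \ {x})) P

/-- The standard basis vector `e_i` of `ℝ^n`. -/
def stdBasis {n : ℕ} (i : Fin n) : Fin n → ℝ := fun q => if q = i then 1 else 0

/-- The polytope `T^n = conv{e_1, …, e_n, -(e_1 + ⋯ + e_n)}`,
corresponding to projective `n`-space. -/
def Tpoly (n : ℕ) : Set (Fin n → ℝ) :=
  convexHull ℝ (Set.range (stdBasis (n := n)) ∪ {fun _ => (-1 : ℝ)})

namespace PG

/-! The concrete polytope `P(a, b, k, l, α)` of dimension
`n = a + 2b - 1 + l_1 + ⋯ + l_k`, from the proof of Theorem `general`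
(coordinates are `0`-based: the paper's `e_q` is the standard basis vector at
index `q - 1`). An assignment `α j i : Fin b ⊕ Fin b` names the vertex
`α_{i,j}`, namely `y_{q+1}` for `Sum.inl q` and `u_{q+1}` for `Sum.inr q`. -/

/-- The dimension `n = a + 2b - 1 + ∑ l_j`. -/
def dim (a b k : ℕ) (l : Fin k → ℕ) : ℕ := a + 2 * b - 1 + ∑ j, l j

/-- `v_i = e_i` for `1 ≤ i ≤ a-1`, and
`v_a = -e_1 - ⋯ - e_{a+2b-2} + (a+b-1) e_{a+2b-1}`. -/
def v (a b k : ℕ) (l : Fin k → ℕ) (i : Fin a) : Fin (dim a b k l) → ℝ :=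
  if i.val < a - 1 then fun q => if q.val = i.val then 1 else 0
  else fun q => if q.val = a + 2 * b - 2 then ((a + b - 1 : ℕ) : ℝ)
    else if q.val < a + 2 * b - 2 then -1 else 0

/-- `y_j = e_{a-1+j}` for `1 ≤ j ≤ b-1`, and `y_b = e_{a+b-1} + ⋯ + e_{a+2b-2}`. -/
def y (a b k : ℕ) (l : Fin k → ℕ) (j : Fin b) : Fin (dim a b k l) → ℝ :=
  if j.val < b - 1 then fun q => if q.val = a - 1 + j.val then 1 else 0
  else fun q => if a + b - 2 ≤ q.val ∧ q.val ≤ a + 2 * b - 3 then 1 else 0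

/-- `z = -e_{a+2b-1}`. -/
def z (a b k : ℕ) (l : Fin k → ℕ) : Fin (dim a b k l) → ℝ :=
  fun q => if q.val = a + 2 * b - 2 then -1 else 0

/-- `t = e_{a+2b-1}`. -/
def t (a b k : ℕ) (l : Fin k → ℕ) : Fin (dim a b k l) → ℝ :=
  fun q => if q.val = a + 2 * b - 2 then 1 else 0

/-- `u_j = e_{a+b-1+j}` for `1 ≤ j ≤ b-1`, and
`u_b = e_a + ⋯ + e_{a+b-1} - e_{a+2b-1}`. -/
def u (a b k : ℕ) (l : Fin k → ℕ) (j : Fin b) : Fin (dim a b k l) → ℝ :=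
  if j.val < b - 1 then fun q => if q.val = a + b - 1 + j.val then 1 else 0
  else fun q => if a - 1 ≤ q.val ∧ q.val ≤ a + b - 2 then 1
    else if q.val = a + 2 * b - 2 then -1 else 0

/-- `l_1 + ⋯ + l_{j-1}`. -/
def Lprev (k : ℕ) (l : Fin k → ℕ) (j : Fin k) : ℕ :=
  ∑ j' ∈ Finset.univ.filter (fun j' => j' < j), l j'

/-- The vertex `α_{i,j} ∈ {y_1, …, y_b, u_1, …, u_b}` named by `α j i`. -/
def A (a b k : ℕ) (l : Fin k → ℕ) (α : (j : Fin k) → Fin (l j) → (Fin b ⊕ Fin b))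
    (j : Fin k) (i : Fin (l j)) : Fin (dim a b k l) → ℝ :=
  Sum.elim (y a b k l) (u a b k l) (α j i)

/-- `w_{i,j} = e_{a+2b-1+l_1+⋯+l_{j-1}+i}` for `1 ≤ i ≤ l_j`, and
`w_{l_j+1,j} = -(e_{a+2b-1+l_1+⋯+l_{j-1}+1} + ⋯ + e_{a+2b-1+l_1+⋯+l_j})
+ α_{1,j} + ⋯ + α_{l_j,j}`. -/
def w (a b k : ℕ) (l : Fin k → ℕ) (α : (j : Fin k) → Fin (l j) → (Fin b ⊕ Fin b))
    (j : Fin k) (i : Fin (l j + 1)) : Fin (dim a b k l) → ℝ :=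
  if i.val < l j then
    fun q => if q.val = a + 2 * b - 1 + Lprev k l j + i.val then 1 else 0
  else
    fun q => (∑ i' : Fin (l j), A a b k l α j i' q) -
      (if a + 2 * b - 1 + Lprev k l j ≤ q.val ∧
          q.val < a + 2 * b - 1 + Lprev k l j + l j then 1 else 0)

/-- The polytope `P(a, b, k, l, α)`. -/
def P (a b k : ℕ) (l : Fin k → ℕ)
    (α : (j : Fin k) → Fin (l j) → (Fin b ⊕ Fin b)) :
    Set (Fin (dim a b k l) → ℝ) :=
  convexHull ℝ
    (Set.range (v a b k l) ∪ Set.range (y a b k l) ∪ {z a b k l, t a b k l} ∪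
      Set.range (u a b k l) ∪ ⋃ j, Set.range (w a b k l α j))

end PG

/-- A point of a convex hull at which a linear functional attains its maximum is a convex
combination of generators at which the maximum is attained. -/
theorem mem_convexHull_image_of_le {E ι : Type*} [AddCommGroup E] [Module ℝ E] (G : ι → E)
    (f : E →ₗ[ℝ] ℝ) (c : ℝ) (hle : ∀ i, f (G i) ≤ c) {x : E}
    (hx : x ∈ convexHull ℝ (Set.range G)) (hc : c ≤ f x) :
    x ∈ convexHull ℝ (G '' {i | f (G i) = c}) := by
  set K := convexHull ℝ (G '' {i | f (G i) = c}) with hK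
  have key : convexHull ℝ (Set.range G) ⊆ {x | f x ≤ c ∧ (c ≤ f x → x ∈ K)} := by
    refine convexHull_min ?_ ?_
    · rintro _ ⟨i, rfl⟩
      exact ⟨hle i, fun h => subset_convexHull ℝ _ ⟨i, le_antisymm (hle i) h, rfl⟩⟩
    · rw [convex_iff_forall_pos]
      rintro p ⟨hp, hp'⟩ q ⟨hq, hq'⟩ s r hs hr hsr
      have hf : f (s • p + r • q) = s * f p + r * f q := by simp
      have h1 : s * f p ≤ s * c := mul_le_mul_of_nonneg_left hp hs.le
      have h2 : r * f q ≤ r * c := mul_le_mul_of_nonneg_left hq hr.le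
      have h3 : s * c + r * c = c := by rw [← add_mul, hsr, one_mul]
      refine ⟨by rw [hf]; linarith, fun h => ?_⟩
      rw [hf] at h
      exact convex_convexHull ℝ _ (hp' (le_of_mul_le_mul_left (by linarith) hs))
        (hq' (le_of_mul_le_mul_left (by linarith) hr)) hs.le hr.le hsr
  exact (key hx).2 hc

theorem le_of_mem_convexHull_range {E ι : Type*} [AddCommGroup E] [Module ℝ E] (G : ι → E)
    (f : E →ₗ[ℝ] ℝ) (c : ℝ) (hle : ∀ i, f (G i) ≤ c) {x : E}
    (hx : x ∈ convexHull ℝ (Set.range G)) : f x ≤ c := by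
  have : convexHull ℝ (Set.range G) ⊆ {x | f x ≤ c} :=
    convexHull_min (by rintro _ ⟨i, rfl⟩; exact hle i) (convex_halfSpace_le f.isLinear c)
  exact this hx

/-- If some functional is strictly maximal at each generator, then the extreme points of the
convex hull are exactly the generators. -/
theorem extremePoints_convexHull_range_of_strictMax {n : ℕ} {ι : Type*} (G : ι → Fin n → ℝ)
    (hG : ∀ i, ∃ f : (Fin n → ℝ) →ₗ[ℝ] ℝ, ∀ j, j ≠ i → f (G j) < f (G i)) :
    Set.extremePoints ℝ (convexHull ℝ (Set.range G)) = Set.range G := by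
  refine extremePoints_convexHull_subset.antisymm ?_
  rintro _ ⟨i, rfl⟩
  obtain ⟨f, hf⟩ := hG i
  have hle : ∀ j, f (G j) ≤ f (G i) := fun j => by
    by_cases h : j = i
    · rw [h]
    · exact (hf j h).le
  refine exposedPoints_subset_extremePoints
    ⟨subset_convexHull ℝ _ ⟨i, rfl⟩, f.toContinuousLinearMap, fun p hp => ⟨?_, fun h => ?_⟩⟩
  · exact le_of_mem_convexHull_range G f _ hle hp
  · have := mem_convexHull_image_of_le G f _ hle hp h
    have hs : {j | f (G j) = f (G i)} = {i} := by
      ext j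
      refine ⟨fun hj => ?_, fun hj => by rw [Set.mem_singleton_iff.1 hj]; rfl⟩
      by_contra hne
      exact (hf j hne).ne hj
    simpa [hs] using this

/-- If `0` lies in the convex hull of a spanning family, and the only functionals that are
nonpositive on the family vanish on it, then `0` is an interior point. -/
theorem zero_mem_interior_convexHull_range {n : ℕ} {ι : Type*} (G : ι → Fin n → ℝ)
    (hspan : affineSpan ℝ (Set.range G) = ⊤)
    (hG : ∀ f : (Fin n → ℝ) →ₗ[ℝ] ℝ, (∀ i, f (G i) ≤ 0) → ∀ i, f (G i) = 0) :
    (0 : Fin n → ℝ) ∈ interior (convexHull ℝ (Set.range G)) := by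
  have hne := interior_convexHull_nonempty_iff_affineSpan_eq_top.2 hspan
  have hconv := convex_convexHull ℝ (Set.range G)
  by_contra h0
  obtain ⟨f, hf⟩ := geometric_hahn_banach_open_point hconv.interior isOpen_interior h0
  have hle : ∀ i, f (G i) ≤ 0 := fun i => by
    have h1 : G i ∈ closure (interior (convexHull ℝ (Set.range G))) := by
      rw [hconv.closure_interior_eq_closure_of_nonempty_interior hne]
      exact subset_closure (subset_convexHull ℝ _ ⟨i, rfl⟩)
    have h2 : closure (interior (convexHull ℝ (Set.range G))) ⊆ {x | f x ≤ 0} :=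
      closure_minimal (fun x hx => by simpa using (hf x hx).le)
        (isClosed_le f.continuous continuous_const)
    exact h2 h1
  have hz := hG f.toLinearMap hle
  obtain ⟨p, hp⟩ := hne
  have h3 := le_of_mem_convexHull_range G (-f.toLinearMap) 0
    (fun i => by simpa using (hz i).ge) (interior_subset hp)
  have h4 := hf p hp
  simp only [LinearMap.neg_apply, ContinuousLinearMap.coe_coe, map_zero] at h3 h4
  linarith

/-- A family of `n` lattice points whose integral span contains the standard basis has
determinant `±1`. -/
theorem abs_det_eq_one_of_single_mem_span {n : ℕ} (B : Fin n → Fin n → ℝ)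
    (hB : ∀ i, IsLatticePoint (B i))
    (hspan : ∀ q, (Pi.single q 1 : Fin n → ℝ) ∈ Submodule.span ℤ (Set.range B)) :
    |(Matrix.of B).det| = 1 := by
  simp only [Submodule.mem_span_range_iff_exists_fun] at hspan
  choose C hC using hspan
  choose B₀ hB₀ using hB
  have hmap : Matrix.of B = (Matrix.of B₀).map (Int.castRingHom ℝ) := by
    ext i j
    simp [hB₀]
  have hmul : (Matrix.of C).map (Int.castRingHom ℝ) * Matrix.of B = 1 := by
    ext q j
    have := congrFun (hC q) j
    simp only [Finset.sum_apply, Pi.smul_apply, Pi.single_apply, eq_comm (a := j)] at this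
    simpa [Matrix.mul_apply, Matrix.one_apply] using this
  have hdet := congrArg Matrix.det hmul
  rw [Matrix.det_mul, hmap, ← RingHom.mapMatrix_apply, ← RingHom.mapMatrix_apply,
    ← RingHom.map_det, ← RingHom.map_det, Matrix.det_one, ← map_mul] at hdet
  have hunit : (Matrix.of C).det * (Matrix.of B₀).det = 1 := (Int.castRingHom ℝ).injective_int (by rw [hdet, map_one])
  have habs := Int.isUnit_iff_abs_eq.1 (IsUnit.of_mul_eq_one_right _ hunit)
  rw [hmap, ← RingHom.mapMatrix_apply, ← RingHom.map_det]
  simp only [eq_intCast]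
  exact_mod_cast habs

/-- A functional with prescribed values on a family of nonzero determinant. -/
theorem exists_linearMap_of_det_ne_zero {n : ℕ} (B : Fin n → Fin n → ℝ)
    (hB : (Matrix.of B).det ≠ 0) (c : Fin n → ℝ) :
    ∃ f : (Fin n → ℝ) →ₗ[ℝ] ℝ, ∀ i, f (B i) = c i := by
  have hu : IsUnit (Matrix.of B).det := isUnit_iff_ne_zero.2 hB
  refine ⟨dotProductBilin ℝ ℝ ((Matrix.of B)⁻¹.mulVec c), fun i => ?_⟩
  have := congrFun (Matrix.mulVec_mulVec c (Matrix.of B) (Matrix.of B)⁻¹) i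
  rw [Matrix.mul_nonsing_inv _ hu, Matrix.one_mulVec] at this
  rw [← this]
  exact dotProduct_comm ((Matrix.of B)⁻¹.mulVec c) (B i)

/-- The generators on a facet of a polytope containing `0` in its interior span the space. -/
theorem exists_functional_of_isFacetOf {n : ℕ} {ι : Type*} (hn : 2 ≤ n) (G : ι → Fin n → ℝ)
    (h0 : (0 : Fin n → ℝ) ∈ interior (convexHull ℝ (Set.range G))) {F : Set (Fin n → ℝ)}
    (hF : IsFacetOf F (convexHull ℝ (Set.range G))) :
    ∃ (f : (Fin n → ℝ) →ₗ[ℝ] ℝ) (c : ℝ), 0 < c ∧ (∀ i, f (G i) ≤ c) ∧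
      (∀ i, G i ∈ F ↔ f (G i) = c) ∧
      Submodule.span ℝ (G '' {i | f (G i) = c}) = ⊤ := by
  obtain ⟨hexp, hdim⟩ := hF
  have hFne : F.Nonempty := by
    rw [Set.nonempty_iff_ne_empty]
    intro hempty
    rw [hempty, vectorSpan_empty, finrank_bot] at hdim
    omega
  obtain ⟨f, hf⟩ := hexp hFne
  obtain ⟨x₀, hx₀⟩ := hFne
  have hx₀' := hx₀
  rw [hf] at hx₀'
  obtain ⟨hx₀P, hx₀max⟩ := hx₀'
  have hle : ∀ i, f (G i) ≤ f x₀ := fun i => hx₀max _ (subset_convexHull ℝ _ ⟨i, rfl⟩)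
  have hmem : ∀ x, x ∈ F ↔ x ∈ convexHull ℝ (Set.range G) ∧ f x = f x₀ := fun x => by
    rw [hf]
    refine ⟨fun h => ⟨h.1, le_antisymm (hx₀max _ h.1) (h.2 _ hx₀P)⟩, fun h => ⟨h.1, ?_⟩⟩
    rw [h.2]
    exact hx₀max
  have hc0 : 0 ≤ f x₀ := by simpa using hx₀max 0 (interior_subset h0)
  have hc : 0 < f x₀ := by
    refine hc0.lt_of_ne fun hzero => ?_
    have hf0 : (f : (Fin n → ℝ) →L[ℝ] ℝ) = 0 := by
      have hmax : IsLocalMax f 0 := by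
        filter_upwards [mem_interior_iff_mem_nhds.1 h0] with p hp
        simpa [← hzero] using hx₀max p hp
      have := hmax.hasFDerivAt_eq_zero f.hasFDerivAt
      exact this
    have hFP : F = convexHull ℝ (Set.range G) := by
      ext p
      rw [hmem, hf0]
      simp
    have htop : affineSpan ℝ F = ⊤ := by
      rw [hFP]
      exact (convex_convexHull ℝ _).interior_nonempty_iff_affineSpan_eq_top.1 ⟨0, h0⟩
    rw [← direction_affineSpan, htop, AffineSubspace.direction_top, finrank_top] at hdim
    simp at hdim
  refine ⟨f.toLinearMap, f x₀, hc, hle, fun i => ?_, ?_⟩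
  · rw [hmem]
    exact and_iff_right (subset_convexHull ℝ _ ⟨i, rfl⟩)
  set W := Submodule.span ℝ (G '' {i | f.toLinearMap (G i) = f x₀}) with hW
  have hFW : F ⊆ W := fun x hx => by
    have h1 := (hmem x).1 hx
    have := mem_convexHull_image_of_le G f.toLinearMap (f x₀) hle h1.1 h1.2.ge
    exact convexHull_min Submodule.subset_span W.convex this
  have hVW : vectorSpan ℝ F < W := by
    refine lt_of_le_of_ne ?_ ?_
    · rw [vectorSpan_def, Submodule.span_le]
      rintro _ ⟨p, hp, q, hq, rfl⟩
      exact W.sub_mem (hFW hp) (hFW hq)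
    · intro heq
      have h1 : x₀ ∈ vectorSpan ℝ F := by rw [heq]; exact hFW hx₀
      have h2 : vectorSpan ℝ F ≤ LinearMap.ker f.toLinearMap := by
        rw [vectorSpan_def, Submodule.span_le]
        rintro _ ⟨p, hp, q, hq, rfl⟩
        simp [((hmem p).1 hp).2, ((hmem q).1 hq).2]
      have h3 : f x₀ = 0 := h2 h1
      exact hc.ne' h3
  have h1 := Submodule.finrank_lt_finrank_of_lt hVW
  have h2 := Submodule.finrank_le W
  simp only [Module.finrank_fintype_fun_eq_card, Fintype.card_fin] at h2
  exact Submodule.eq_top_of_finrank_eq (by simp; omega)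

namespace PG

/-- Indices of the vertices `v_i`, `y_j`, `u_j`, `t` (`true`) and `z` (`false`). -/
abbrev Base (a b : ℕ) : Type := (Fin a ⊕ Fin b) ⊕ (Fin b ⊕ Bool)

/-- Indices of all the vertices of `P(a, b, k, l, α)`. -/
abbrev Index (a b k : ℕ) (l : Fin k → ℕ) : Type := Base a b ⊕ (Σ j : Fin k, Fin (l j + 1))

namespace Base

variable {a b : ℕ}

abbrev v (i : Fin a) : Base a b := Sum.inl (Sum.inl i)
abbrev y (j : Fin b) : Base a b := Sum.inl (Sum.inr j)
abbrev u (j : Fin b) : Base a b := Sum.inr (Sum.inl j)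
abbrev t : Base a b := Sum.inr (Sum.inr true)
abbrev z : Base a b := Sum.inr (Sum.inr false)

/-- The index of the vertex named by a value of `α`. -/
abbrev ofSum : Fin b ⊕ Fin b → Base a b := Sum.elim y u

end Base

/-- The linear relations among `v_i`, `y_j`, `u_j`, `t`, `z`. -/
structure BaseRel {a b : ℕ} {M : Type*} [AddCommGroup M] (g : Base a b → M) : Prop where
  sum_v_add_sum_y : ∑ i, g (Base.v i) + ∑ j, g (Base.y j) = (a + b - 1) • g Base.t
  z_eq : g Base.z = -g Base.t
  sum_u : ∑ j, g (Base.u j) = ∑ j, g (Base.y j) - g Base.t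

/-- The linear relations among the vertices of `P(a, b, k, l, α)`. -/
structure Rel {a b k : ℕ} {l : Fin k → ℕ} (α : (j : Fin k) → Fin (l j) → (Fin b ⊕ Fin b))
    {M : Type*} [AddCommGroup M] (g : Index a b k l → M) : Prop where
  base : BaseRel fun i => g (Sum.inl i)
  sum_w : ∀ j, ∑ i, g (Sum.inr ⟨j, i⟩) = ∑ i, g (Sum.inl (Base.ofSum (α j i)))

theorem BaseRel.map {a b : ℕ} {M N : Type*} [AddCommGroup M] [AddCommGroup N]
    {g : Base a b → M} (hg : BaseRel g) (φ : M →+ N) : BaseRel fun i => φ (g i) where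
  sum_v_add_sum_y := by
    simp only [← map_sum, ← map_add, ← map_nsmul, hg.sum_v_add_sum_y]
  z_eq := by rw [hg.z_eq, map_neg]
  sum_u := by simp only [← map_sum, ← map_sub, hg.sum_u]

theorem BaseRel.sub {a b : ℕ} {M : Type*} [AddCommGroup M] {g h : Base a b → M}
    (hg : BaseRel g) (hh : BaseRel h) : BaseRel fun i => g i - h i where
  sum_v_add_sum_y := by
    simp only [Finset.sum_sub_distrib, smul_sub, ← hg.sum_v_add_sum_y, ← hh.sum_v_add_sum_y]
    abel
  z_eq := by rw [hg.z_eq, hh.z_eq]; abel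
  sum_u := by
    simp only [Finset.sum_sub_distrib, hg.sum_u, hh.sum_u]
    abel

theorem Rel.map {a b k : ℕ} {l : Fin k → ℕ} {α : (j : Fin k) → Fin (l j) → (Fin b ⊕ Fin b)}
    {M N : Type*} [AddCommGroup M] [AddCommGroup N] {g : Index a b k l → M} (hg : Rel α g)
    (φ : M →+ N) : Rel α fun i => φ (g i) where
  base := hg.base.map φ
  sum_w j := by simp only [← map_sum, hg.sum_w]

theorem Rel.sub {a b k : ℕ} {l : Fin k → ℕ} {α : (j : Fin k) → Fin (l j) → (Fin b ⊕ Fin b)}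
    {M : Type*} [AddCommGroup M] {g h : Index a b k l → M} (hg : Rel α g) (hh : Rel α h) :
    Rel α fun i => g i - h i where
  base := hg.base.sub hh.base
  sum_w j := by simp only [Finset.sum_sub_distrib, hg.sum_w, hh.sum_w]

theorem eq_zero_of_sum_eq_zero {ι M : Type*} [Fintype ι] [AddCommGroup M] {f : ι → M} (i₀ : ι)
    (hf : ∀ i, i ≠ i₀ → f i = 0) (hsum : ∑ i, f i = 0) (i : ι) : f i = 0 := by
  by_cases h : i = i₀
  · rw [h, ← hsum, Fintype.sum_eq_single i₀ hf]
  · exact hf i h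

/-- A set of base indices missing none of the five primitive collections omits three indices
whose values are determined by the remaining ones through the linear relations. -/
theorem exists_determined_base {a b : ℕ} (T : Set (Base a b))
    (hvy : ¬ ((∀ i, Base.v i ∈ T) ∧ ∀ j, Base.y j ∈ T))
    (hyz : ¬ ((∀ j, Base.y j ∈ T) ∧ Base.z ∈ T))
    (hzt : ¬ (Base.z ∈ T ∧ Base.t ∈ T))
    (htu : ¬ (Base.t ∈ T ∧ ∀ j, Base.u j ∈ T))
    (huv : ¬ ((∀ j, Base.u j ∈ T) ∧ ∀ i, Base.v i ∈ T)) :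
    ∃ R : Finset (Base a b), R.card = 3 ∧ (∀ i ∈ R, i ∉ T) ∧
      ∀ (M : Type) [AddCommGroup M] (g : Base a b → M), BaseRel g →
        (∀ i, i ∉ R → g i = 0) → ∀ i, g i = 0 := by
  classical
  have hcases : ((¬ ∀ i, Base.v i ∈ T) ∧ (¬ ∀ j, Base.y j ∈ T) ∧ Base.t ∉ T) ∨
      ((¬ ∀ i, Base.v i ∈ T) ∧ Base.z ∉ T ∧ Base.t ∉ T) ∨
      ((¬ ∀ i, Base.v i ∈ T) ∧ Base.z ∉ T ∧ ¬ ∀ j, Base.u j ∈ T) ∨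
      ((¬ ∀ j, Base.y j ∈ T) ∧ Base.z ∉ T ∧ ¬ ∀ j, Base.u j ∈ T) ∨
      ((¬ ∀ j, Base.y j ∈ T) ∧ Base.t ∉ T ∧ ¬ ∀ j, Base.u j ∈ T) := by tauto
  have collect : ∀ {M : Type} [AddCommGroup M] {g : Base a b → M}, (∀ i, g (Base.v i) = 0) →
      (∀ j, g (Base.y j) = 0) → (∀ j, g (Base.u j) = 0) → g Base.t = 0 → g Base.z = 0 →
      ∀ i, g i = 0 := by
    rintro M _ g hv hy hu ht hz ((i | i) | (i | _ | _))
    exacts [hv i, hy i, hu i, hz, ht]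
  rcases hcases with ⟨h1, h2, h3⟩ | ⟨h1, h2, h3⟩ | ⟨h1, h2, h3⟩ | ⟨h1, h2, h3⟩ | ⟨h1, h2, h3⟩
  · obtain ⟨i, hi⟩ := not_forall.1 h1
    obtain ⟨j, hj⟩ := not_forall.1 h2
    refine ⟨{Base.v i, Base.y j, Base.t}, by simp, by simp [hi, hj, h3], fun M _ g hg h => ?_⟩
    have hz : g Base.z = 0 := h _ (by simp)
    have ht : g Base.t = 0 := by simpa [hz] using hg.z_eq
    have hu : ∀ j, g (Base.u j) = 0 := fun j => h _ (by simp)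
    have hy := eq_zero_of_sum_eq_zero (f := fun j => g (Base.y j)) j
      (fun j' hj' => h _ (by simpa using hj')) (by simpa [hu, ht] using hg.sum_u.symm)
    have hv := eq_zero_of_sum_eq_zero (f := fun i => g (Base.v i)) i
      (fun i' hi' => h _ (by simpa using hi')) (by simpa [hy, ht] using hg.sum_v_add_sum_y)
    exact collect hv hy hu ht hz
  · obtain ⟨i, hi⟩ := not_forall.1 h1
    refine ⟨{Base.v i, Base.z, Base.t}, by simp, by simp [hi, h2, h3], fun M _ g hg h => ?_⟩
    have hu : ∀ j, g (Base.u j) = 0 := fun j => h _ (by simp)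
    have hy : ∀ j, g (Base.y j) = 0 := fun j => h _ (by simp)
    have ht : g Base.t = 0 := by simpa [hu, hy] using hg.sum_u
    have hz : g Base.z = 0 := by simpa [ht] using hg.z_eq
    have hv := eq_zero_of_sum_eq_zero (f := fun i => g (Base.v i)) i
      (fun i' hi' => h _ (by simpa using hi')) (by simpa [hy, ht] using hg.sum_v_add_sum_y)
    exact collect hv hy hu ht hz
  · obtain ⟨i, hi⟩ := not_forall.1 h1
    obtain ⟨j, hj⟩ := not_forall.1 h3
    refine ⟨{Base.v i, Base.u j, Base.z}, by simp, by simp [hi, h2, hj], fun M _ g hg h => ?_⟩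
    have ht : g Base.t = 0 := h _ (by simp)
    have hy : ∀ j, g (Base.y j) = 0 := fun j => h _ (by simp)
    have hz : g Base.z = 0 := by simpa [ht] using hg.z_eq
    have hu := eq_zero_of_sum_eq_zero (f := fun j => g (Base.u j)) j
      (fun j' hj' => h _ (by simpa using hj')) (by simpa [hy, ht] using hg.sum_u)
    have hv := eq_zero_of_sum_eq_zero (f := fun i => g (Base.v i)) i
      (fun i' hi' => h _ (by simpa using hi')) (by simpa [hy, ht] using hg.sum_v_add_sum_y)
    exact collect hv hy hu ht hz
  · obtain ⟨i, hi⟩ := not_forall.1 h1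
    obtain ⟨j, hj⟩ := not_forall.1 h3
    refine ⟨{Base.y i, Base.u j, Base.z}, by simp, by simp [hi, h2, hj], fun M _ g hg h => ?_⟩
    have ht : g Base.t = 0 := h _ (by simp)
    have hv : ∀ i, g (Base.v i) = 0 := fun i => h _ (by simp)
    have hz : g Base.z = 0 := by simpa [ht] using hg.z_eq
    have hy := eq_zero_of_sum_eq_zero (f := fun j => g (Base.y j)) i
      (fun j' hj' => h _ (by simpa using hj')) (by simpa [hv, ht] using hg.sum_v_add_sum_y)
    have hu := eq_zero_of_sum_eq_zero (f := fun j => g (Base.u j)) j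
      (fun j' hj' => h _ (by simpa using hj')) (by simpa [hy, ht] using hg.sum_u)
    exact collect hv hy hu ht hz
  · obtain ⟨i, hi⟩ := not_forall.1 h1
    obtain ⟨j, hj⟩ := not_forall.1 h3
    refine ⟨{Base.y i, Base.u j, Base.t}, by simp, by simp [hi, h2, hj], fun M _ g hg h => ?_⟩
    have hz : g Base.z = 0 := h _ (by simp)
    have hv : ∀ i, g (Base.v i) = 0 := fun i => h _ (by simp)
    have ht : g Base.t = 0 := by simpa [hz] using hg.z_eq
    have hy := eq_zero_of_sum_eq_zero (f := fun j => g (Base.y j)) i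
      (fun j' hj' => h _ (by simpa using hj')) (by simpa [hv, ht] using hg.sum_v_add_sum_y)
    have hu := eq_zero_of_sum_eq_zero (f := fun j => g (Base.u j)) j
      (fun j' hj' => h _ (by simpa using hj')) (by simpa [hy, ht] using hg.sum_u)
    exact collect hv hy hu ht hz

theorem card_index {a b k : ℕ} (l : Fin k → ℕ) (ha : 2 ≤ a) :
    Fintype.card (Index a b k l) = dim a b k l + (3 + k) := by
  simp only [Index, Base, Fintype.card_sum, Fintype.card_fin, Fintype.card_bool,
    Fintype.card_sigma, Finset.sum_add_distrib, Finset.sum_const, Finset.card_univ, smul_eq_mul,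
    mul_one, dim]
  omega

/-- A set of indices containing no primitive collection lies in a set of `dim` indices that
determine all other values through the linear relations. -/
theorem exists_determining {a b k : ℕ} {l : Fin k → ℕ} (ha : 2 ≤ a)
    (α : (j : Fin k) → Fin (l j) → (Fin b ⊕ Fin b)) (T : Set (Index a b k l))
    (hvy : ¬ ((∀ i, Sum.inl (Base.v i) ∈ T) ∧ ∀ j, Sum.inl (Base.y j) ∈ T))
    (hyz : ¬ ((∀ j, Sum.inl (Base.y j) ∈ T) ∧ Sum.inl Base.z ∈ T))
    (hzt : ¬ (Sum.inl Base.z ∈ T ∧ Sum.inl Base.t ∈ T))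
    (htu : ¬ (Sum.inl Base.t ∈ T ∧ ∀ j, Sum.inl (Base.u j) ∈ T))
    (huv : ¬ ((∀ j, Sum.inl (Base.u j) ∈ T) ∧ ∀ i, Sum.inl (Base.v i) ∈ T))
    (hw : ∀ j, ¬ ∀ i, Sum.inr ⟨j, i⟩ ∈ T) :
    ∃ D : Finset (Index a b k l), D.card = dim a b k l ∧ T ⊆ D ∧
      ∀ (M : Type) [AddCommGroup M] (g : Index a b k l → M), Rel α g →
        (∀ i ∈ D, g i = 0) → ∀ i, g i = 0 := by
  classical
  obtain ⟨R, hRcard, hRT, hR⟩ := exists_determined_base (Sum.inl ⁻¹' T) hvy hyz hzt htu huv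
  choose m hm using fun j => not_forall.1 (hw j)
  refine ⟨(R.disjSum (Finset.univ.sigma fun j => {m j}))ᶜ, ?_, ?_, ?_⟩
  · rw [Finset.card_compl, card_index l ha, Finset.card_disjSum, Finset.card_sigma, hRcard]
    simp
  · intro i hi
    rw [Finset.mem_coe, Finset.mem_compl, Finset.mem_disjSum]
    rintro (⟨i, hiR, rfl⟩ | ⟨⟨j, i⟩, hiR, rfl⟩)
    · exact hRT i hiR hi
    · obtain rfl : i = m j := by simpa using hiR
      exact hm j hi
  · intro M _ g hg hD
    have hbase : ∀ i, g (Sum.inl i) = 0 :=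
      hR M _ hg.base fun i hi => hD _ (by simpa using hi)
    rintro (i | ⟨j, i⟩)
    · exact hbase i
    · exact eq_zero_of_sum_eq_zero (f := fun i => g (Sum.inr ⟨j, i⟩)) (m j)
        (fun i hi => hD _ (by simpa using hi)) (by simpa [hbase] using hg.sum_w j) i

/-- The vertices of `P(a, b, k, l, α)`. -/
def vert (a b k : ℕ) (l : Fin k → ℕ) (α : (j : Fin k) → Fin (l j) → (Fin b ⊕ Fin b)) :
    Index a b k l → Fin (dim a b k l) → ℝ :=
  Sum.elim
    (Sum.elim (Sum.elim (v a b k l) (y a b k l))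
      (Sum.elim (u a b k l) fun s => if s then t a b k l else z a b k l))
    fun p => w a b k l α p.1 p.2

theorem P_eq_convexHull_range_vert (a b k : ℕ) (l : Fin k → ℕ)
    (α : (j : Fin k) → Fin (l j) → (Fin b ⊕ Fin b)) :
    P a b k l α = convexHull ℝ (Set.range (vert a b k l α)) := by
  rw [P]
  congr 1
  ext x
  simp only [vert, Set.mem_union, Set.mem_range, Set.mem_insert_iff, Set.mem_singleton_iff,
    Set.mem_iUnion, Sum.exists, Sum.elim_inl, Sum.elim_inr, Bool.exists_bool, Sigma.exists,
    if_true, Bool.false_eq_true, if_false, eq_comm (a := x)]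
  tauto

theorem isLatticePoint_vert {a b k : ℕ} {l : Fin k → ℕ}
    (α : (j : Fin k) → Fin (l j) → (Fin b ⊕ Fin b)) (i : Index a b k l) :
    IsLatticePoint (vert a b k l α i) := by
  have hy : ∀ j, IsLatticePoint (y a b k l j) := fun j q => by
    unfold y
    split_ifs
    exacts [⟨if q.val = a - 1 + j.val then 1 else 0, by push_cast; rfl⟩,
      ⟨if a + b - 2 ≤ q.val ∧ q.val ≤ a + 2 * b - 3 then 1 else 0, by push_cast; rfl⟩]
  have hu : ∀ j, IsLatticePoint (u a b k l j) := fun j q => by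
    unfold u
    split_ifs
    exacts [⟨if q.val = a + b - 1 + j.val then 1 else 0, by push_cast; rfl⟩,
      ⟨if a - 1 ≤ q.val ∧ q.val ≤ a + b - 2 then 1
        else if q.val = a + 2 * b - 2 then -1 else 0, by push_cast; rfl⟩]
  have hA : ∀ j i, IsLatticePoint (A a b k l α j i) := fun j i => by
    unfold A
    rcases α j i with s | s
    exacts [hy s, hu s]
  rcases i with (((i | i) | (i | _ | _)) | ⟨j, i⟩) <;> intro q
  · change ∃ m : ℤ, v a b k l i q = m
    unfold v
    split_ifs
    exacts [⟨if q.val = i.val then 1 else 0, by push_cast; rfl⟩,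
      ⟨if q.val = a + 2 * b - 2 then ((a + b - 1 : ℕ) : ℤ)
        else if q.val < a + 2 * b - 2 then -1 else 0, by push_cast; rfl⟩]
  · exact hy i q
  · exact hu i q
  · exact ⟨if q.val = a + 2 * b - 2 then -1 else 0, by push_cast; rfl⟩
  · exact ⟨if q.val = a + 2 * b - 2 then 1 else 0, by push_cast; rfl⟩
  · change ∃ m : ℤ, w a b k l α j i q = m
    unfold w
    split_ifs
    · exact ⟨if q.val = a + 2 * b - 1 + Lprev k l j + i.val then 1 else 0, by push_cast; rfl⟩
    · choose c hc using fun i' => hA j i' q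
      exact ⟨(∑ i', c i') - (if a + 2 * b - 1 + Lprev k l j ≤ q.val ∧
          q.val < a + 2 * b - 1 + Lprev k l j + l j then 1 else 0), by push_cast; simp [hc]⟩

theorem sum_ite_eq_add {m : ℕ} (s q : ℕ) :
    (∑ i : Fin m, if q = s + i.val then (1 : ℝ) else 0) =
      if s ≤ q ∧ q < s + m then 1 else 0 := by
  split_ifs with h
  · rw [Finset.sum_eq_single ⟨q - s, by omega⟩]
    · rw [if_pos (by simp; omega)]
    · intro i _ hi
      rw [if_neg]
      intro h'
      exact hi (Fin.ext (by simp; omega))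
    · simp
  · refine Finset.sum_eq_zero fun i _ => if_neg ?_
    have := i.isLt
    omega

theorem sum_v_apply {a : ℕ} (b k : ℕ) (l : Fin k → ℕ) (ha : 1 ≤ a) (q : Fin (dim a b k l)) :
    ∑ i, v a b k l i q = (if q.val < a - 1 then 1 else 0) +
      if q.val = a + 2 * b - 2 then ((a + b - 1 : ℕ) : ℝ)
        else if q.val < a + 2 * b - 2 then -1 else 0 := by
  obtain ⟨a, rfl⟩ := Nat.exists_eq_add_of_le' ha
  rw [Fin.sum_univ_castSucc]
  have := sum_ite_eq_add (m := a) 0 q.val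
  simp only [zero_add, zero_le, true_and] at this
  simp [v, this]

theorem sum_y_apply (a : ℕ) {b : ℕ} (k : ℕ) (l : Fin k → ℕ) (hb : 1 ≤ b)
    (q : Fin (dim a b k l)) :
    ∑ j, y a b k l j q = (if a - 1 ≤ q.val ∧ q.val < a - 1 + (b - 1) then 1 else 0) +
      if a + b - 2 ≤ q.val ∧ q.val ≤ a + 2 * b - 3 then 1 else 0 := by
  obtain ⟨b, rfl⟩ := Nat.exists_eq_add_of_le' hb
  rw [Fin.sum_univ_castSucc]
  have := sum_ite_eq_add (m := b) (a - 1) q.val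
  simp [y, this]

theorem sum_u_apply (a : ℕ) {b : ℕ} (k : ℕ) (l : Fin k → ℕ) (hb : 1 ≤ b)
    (q : Fin (dim a b k l)) :
    ∑ j, u a b k l j q = (if a + b - 1 ≤ q.val ∧ q.val < a + b - 1 + (b - 1) then 1 else 0) +
      if a - 1 ≤ q.val ∧ q.val ≤ a + b - 2 then 1
        else if q.val = a + 2 * b - 2 then -1 else 0 := by
  obtain ⟨b, rfl⟩ := Nat.exists_eq_add_of_le' hb
  rw [Fin.sum_univ_castSucc]
  have := sum_ite_eq_add (m := b) (a + b) q.val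
  simp only [add_tsub_cancel_right, ← add_assoc]
  simp [u, this, ← add_assoc]

theorem rel_vert {a b k : ℕ} {l : Fin k → ℕ} (ha : 2 ≤ a) (hb : 1 ≤ b)
    (α : (j : Fin k) → Fin (l j) → (Fin b ⊕ Fin b)) : Rel α (vert a b k l α) where
  base :=
    { sum_v_add_sum_y := by
        ext q
        simp only [vert, Sum.elim_inl, Sum.elim_inr, Pi.add_apply, Finset.sum_apply,
          Pi.smul_apply, if_true, t, sum_v_apply b k l (by omega : 1 ≤ a),
          sum_y_apply a k l hb, nsmul_eq_mul]
        split_ifs <;> first | omega | norm_num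
      z_eq := by
        ext q
        simp [vert, t, z]
        split_ifs <;> simp
      sum_u := by
        ext q
        simp only [vert, Sum.elim_inl, Sum.elim_inr, Pi.sub_apply, Finset.sum_apply,
          if_true, t, sum_u_apply a k l hb, sum_y_apply a k l hb]
        split_ifs <;> first | omega | norm_num }
  sum_w j := by
    ext q
    rw [Fin.sum_univ_castSucc]
    have h := sum_ite_eq_add (m := l j) (a + 2 * b - 1 + Lprev k l j) q.val
    have hA : ∀ i, vert a b k l α (Sum.inl (Base.ofSum (α j i))) = A a b k l α j i := by
      intro i
      unfold A
      rcases α j i with s | s <;> rfl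
    simp only [hA]
    simp [vert, w, h]

theorem sum_castLE_eq_Lprev {k : ℕ} (l : Fin k → ℕ) (j : Fin k) :
    ∑ i : Fin j.val, l (Fin.castLE j.isLt.le i) = Lprev k l j := by
  rw [Lprev]
  refine Finset.sum_bij (fun i _ => Fin.castLE j.isLt.le i) ?_ ?_ ?_ ?_
  · intro i _
    exact Finset.mem_filter.2 ⟨Finset.mem_univ _, i.isLt⟩
  · intro i _ i' _ h
    simpa using h
  · intro i hi
    exact ⟨⟨i.val, (Finset.mem_filter.1 hi).2⟩, Finset.mem_univ _, rfl⟩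
  · intros
    rfl

/-- An additive subgroup containing all vertices contains the standard basis. -/
theorem single_mem_of_vert_mem {a b k : ℕ} {l : Fin k → ℕ} (ha : 2 ≤ a) (hb : 1 ≤ b)
    (α : (j : Fin k) → Fin (l j) → (Fin b ⊕ Fin b))
    (N : Submodule ℤ (Fin (dim a b k l) → ℝ)) (hN : ∀ i, vert a b k l α i ∈ N)
    (q : Fin (dim a b k l)) : (Pi.single q 1 : Fin (dim a b k l) → ℝ) ∈ N := by
  have hsingle : (Pi.single q 1 : Fin (dim a b k l) → ℝ) =
      fun r => if r.val = q.val then 1 else 0 := by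
    ext r
    simp [Pi.single_apply, Fin.ext_iff]
  rw [hsingle]
  have hq := q.isLt
  rcases lt_or_ge q.val (a - 1) with h1 | h1
  · convert hN (Sum.inl (Base.v ⟨q.val, by omega⟩)) using 1
    simp [vert, v, h1]
  rcases lt_or_ge q.val (a + b - 2) with h2 | h2
  · convert hN (Sum.inl (Base.y ⟨q.val - (a - 1), by omega⟩)) using 1
    simp only [vert, y, Sum.elim_inl, Sum.elim_inr]
    rw [if_pos (by omega), Nat.add_sub_cancel' h1]
  have hu : ∀ r, a + b - 1 ≤ r → r < a + 2 * b - 2 →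
      (fun s : Fin (dim a b k l) => if s.val = r then (1 : ℝ) else 0) ∈ N := by
    intro r hr hr'
    convert hN (Sum.inl (Base.u ⟨r - (a + b - 1), by omega⟩)) using 1
    simp only [vert, u, Sum.elim_inl, Sum.elim_inr]
    rw [if_pos (by omega), Nat.add_sub_cancel' hr]
  rcases lt_or_ge q.val (a + b - 1) with h3 | h3
  · have hmem : vert a b k l α (Sum.inl (Base.y ⟨b - 1, by omega⟩)) -
        ∑ j : Fin (b - 1), (fun s : Fin (dim a b k l) =>
          if s.val = a + b - 1 + j.val then (1 : ℝ) else 0) ∈ N :=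
      N.sub_mem (hN _) (N.sum_mem fun j _ => hu _ (by omega) (by have := j.isLt; omega))
    convert hmem using 1
    ext r
    simp only [vert, y, Sum.elim_inl, Sum.elim_inr, lt_irrefl, if_false, Pi.sub_apply,
      Finset.sum_apply, sum_ite_eq_add]
    split_ifs <;> first | omega | norm_num
  rcases lt_or_ge q.val (a + 2 * b - 2) with h4 | h4
  · exact hu _ h3 h4
  rcases lt_or_ge q.val (a + 2 * b - 1) with h5 | h5
  · convert hN (Sum.inl Base.t) using 1
    simp only [vert, Sum.elim_inl, Sum.elim_inr, if_true]
    rw [show q.val = a + 2 * b - 2 by omega]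
    rfl
  · obtain ⟨⟨j, i⟩, hji⟩ := finSigmaFinEquiv.surjective
      (⟨q.val - (a + 2 * b - 1), by unfold dim at hq; omega⟩ : Fin (∑ j, l j))
    have hval := congrArg Fin.val hji
    rw [finSigmaFinEquiv_apply, sum_castLE_eq_Lprev] at hval
    convert hN (Sum.inr ⟨j, i.castSucc⟩) using 1
    simp only at hval
    simp only [vert, w, Sum.elim_inr, Fin.val_castSucc, i.isLt, if_true]
    rw [show q.val = a + 2 * b - 1 + Lprev k l j + i.val by omega]

end PG

namespace PG

/-- Values of a functional on the base vertices. -/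
def baseValues {a b : ℕ} (v : Fin a → ℝ) (y u : Fin b → ℝ) (t z : ℝ) : Base a b → ℝ :=
  Sum.elim (Sum.elim v y) (Sum.elim u fun s => if s then t else z)

theorem baseRel_baseValues {a b : ℕ} (hb : 1 ≤ b) {v : Fin a → ℝ} {y u : Fin b → ℝ} {t z : ℝ}
    (h1 : ∑ i, v i + ∑ j, y j = (a + b - 1) * t) (h2 : z = -t)
    (h3 : ∑ j, u j = ∑ j, y j - t) : BaseRel (baseValues v y u t z) where
  sum_v_add_sum_y := by
    have hcast : ((a + b - 1 : ℕ) : ℝ) = a + b - 1 := by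
      rw [Nat.cast_sub (by omega)]
      push_cast
      ring
    simpa [baseValues, hcast] using h1
  z_eq := h2
  sum_u := h3

theorem single_one_lt_one {ι : Type*} [DecidableEq ι] (i j : ι) (h : j ≠ i) :
    (Pi.single i 1 : ι → ℝ) j < 1 := by
  simp [h]

theorem exists_baseRel_strictMax {a b : ℕ} (ha : 2 ≤ a) (hb : 1 ≤ b) (i : Base a b) :
    ∃ c : Base a b → ℝ, BaseRel c ∧ c i = 1 ∧ ∀ j, j ≠ i → c j < 1 := by
  have hA : (2 : ℝ) ≤ a := by exact_mod_cast ha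
  have hB : (1 : ℝ) ≤ b := by exact_mod_cast hb
  rcases i with (i | i) | (i | _ | _)
  · refine ⟨baseValues (Pi.single i 1) (fun _ => -1 / b) (fun _ => -1 / b) 0 0,
      baseRel_baseValues hb ?_ ?_ ?_, by simp [baseValues], ?_⟩
    · simp
      field_simp
      ring
    · simp
    · simp
    · have hneg : (-1 : ℝ) / b < 1 := by rw [div_lt_one (by linarith)]; linarith
      rintro ((j | j) | (j | _ | _)) hj
      · exact single_one_lt_one i j (by simpa using hj)
      · exact hneg
      · exact hneg
      · exact zero_lt_one
      · exact zero_lt_one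
  · refine ⟨baseValues (fun _ => -1 / ((a + b) * a)) (Pi.single i 1)
      (fun _ => (1 - 1 / (a + b)) / b) (1 / (a + b)) (-(1 / (a + b))),
      baseRel_baseValues hb ?_ ?_ ?_, by simp [baseValues], ?_⟩
    · simp
      field_simp
      ring
    · rfl
    · simp
      field_simp
    · have hpos : (0 : ℝ) < 1 / (a + b) := by positivity
      have hlt : (1 : ℝ) / (a + b) < 1 := by rw [div_lt_one (by linarith)]; linarith
      rintro ((j | j) | (j | _ | _)) hj
      · change (-1 : ℝ) / ((a + b) * a) < 1
        rw [div_lt_one (by positivity)]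
        nlinarith
      · exact single_one_lt_one i j (by simpa using hj)
      · change (1 - 1 / ((a : ℝ) + b)) / b < 1
        rw [div_lt_one (by linarith)]
        linarith
      · change -(1 / ((a : ℝ) + b)) < 1
        linarith
      · exact hlt
  · refine ⟨baseValues (fun _ => -(a + b) / (2 * a)) (fun _ => 1 / (2 * b)) (Pi.single i 1)
      (-1 / 2) (1 / 2), baseRel_baseValues hb ?_ ?_ ?_, by simp [baseValues], ?_⟩
    · simp
      field_simp
      ring
    · norm_num
    · simp
      field_simp
      norm_num
    · rintro ((j | j) | (j | _ | _)) hj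
      · change -((a : ℝ) + b) / (2 * a) < 1
        rw [div_lt_one (by linarith)]
        linarith
      · change (1 : ℝ) / (2 * b) < 1
        rw [div_lt_one (by linarith)]
        linarith
      · exact single_one_lt_one i j (by simpa using hj)
      · change (1 : ℝ) / 2 < 1
        norm_num
      · change (-1 : ℝ) / 2 < 1
        norm_num
  · refine ⟨baseValues (fun _ => -(a + b - 3 / 2) / a) (fun _ => -1 / (2 * b))
      (fun _ => 1 / (2 * b)) (-1) 1, baseRel_baseValues hb ?_ ?_ ?_, by simp [baseValues], ?_⟩
    · simp
      field_simp
      ring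
    · norm_num
    · simp
      field_simp
      norm_num
    · rintro ((j | j) | (j | _ | _)) hj
      · change -((a : ℝ) + b - 3 / 2) / a < 1
        rw [div_lt_one (by linarith)]
        linarith
      · change (-1 : ℝ) / (2 * b) < 1
        rw [div_lt_one (by linarith)]
        linarith
      · change (1 : ℝ) / (2 * b) < 1
        rw [div_lt_one (by linarith)]
        linarith
      · exact absurd rfl hj
      · change (-1 : ℝ) < 1
        norm_num
  · refine ⟨baseValues (fun _ => (a + b - 1) / (a + b)) (fun _ => (a + b - 1) / (a + b))
      (fun _ => (a + b - 1) / (a + b) - 1 / b) 1 (-1),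
      baseRel_baseValues hb ?_ ?_ ?_, by simp [baseValues], ?_⟩
    · simp
      field_simp
    · norm_num
    · simp
      field_simp
    · have hlt : ((a : ℝ) + b - 1) / (a + b) < 1 := by
        rw [div_lt_one (by linarith)]
        linarith
      have hpos : (0 : ℝ) < 1 / b := by positivity
      rintro ((j | j) | (j | _ | _)) hj
      · exact hlt
      · exact hlt
      · change ((a : ℝ) + b - 1) / (a + b) - 1 / b < 1
        linarith
      · change (-1 : ℝ) < 1
        norm_num
      · exact absurd rfl hj

theorem exists_rel_strictMax {a b k : ℕ} {l : Fin k → ℕ} (ha : 2 ≤ a) (hb : 1 ≤ b)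
    (hl : ∀ j, 1 ≤ l j) (α : (j : Fin k) → Fin (l j) → (Fin b ⊕ Fin b)) (i : Index a b k l) :
    ∃ c : Index a b k l → ℝ, Rel α c ∧ ∀ j, j ≠ i → c j < c i := by
  rcases i with i | ⟨j₀, i₀⟩
  · obtain ⟨c, hc, hci, hlt⟩ := exists_baseRel_strictMax ha hb i
    have hle : ∀ j, c j ≤ 1 := fun j => by
      by_cases h : j = i
      · rw [h, hci]
      · exact (hlt j h).le
    refine ⟨Sum.elim c fun p => (∑ i, c (Base.ofSum (α p.1 i))) / (l p.1 + 1),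
      ⟨hc, fun j => ?_⟩, ?_⟩
    · have : (l j : ℝ) + 1 ≠ 0 := by positivity
      change ∑ _i : Fin (l j + 1), (∑ i, c (Base.ofSum (α j i))) / ((l j : ℝ) + 1) =
        ∑ i, c (Base.ofSum (α j i))
      rw [Finset.sum_const, Finset.card_univ, Fintype.card_fin, nsmul_eq_mul]
      push_cast
      field_simp
    · rintro (j | ⟨j, i'⟩) hj
      · simpa [hci] using hlt j (by simpa using hj)
      · have hsum : ∑ i, c (Base.ofSum (α j i)) ≤ l j := by
          simpa using Finset.sum_le_card_nsmul Finset.univ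
            (fun i => c (Base.ofSum (α j i))) 1 fun i _ => hle _
        simp only [Sum.elim_inr, Sum.elim_inl, hci]
        rw [div_lt_one (by positivity)]
        linarith
  · have hpos : ∀ j, (0 : ℝ) < l j := fun j => by exact_mod_cast hl j
    refine ⟨Sum.elim 0 fun p => if p.1 = j₀ then
      (if p = ⟨j₀, i₀⟩ then 1 + 1 / (l j₀ : ℝ) else 0) - 1 / l j₀ else 0,
      ⟨⟨by simp, by simp, by simp⟩, fun j => ?_⟩, ?_⟩
    · by_cases h : j = j₀
      · subst h
        have := (hpos j).ne'
        simp
        field_simp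
        ring
      · simp [h]
    · have h1 : 0 < 1 / (l j₀ : ℝ) := one_div_pos.2 (hpos j₀)
      rintro (j | ⟨j, i'⟩) hj
      · simp
      · have hne : (⟨j, i'⟩ : Σ j : Fin k, Fin (l j + 1)) ≠ ⟨j₀, i₀⟩ := fun h => hj (by rw [h])
        simp only [Sum.elim_inr, if_neg hne, if_true]
        split_ifs <;> linarith

/-- The family of vertices indexed by a determining set of indices is unimodular. -/
theorem abs_det_eq_one_of_determining {a b k : ℕ} {l : Fin k → ℕ} (ha : 2 ≤ a) (hb : 1 ≤ b)
    (α : (j : Fin k) → Fin (l j) → (Fin b ⊕ Fin b)) {D : Finset (Index a b k l)}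
    (hD : ∀ (M : Type) [AddCommGroup M] (g : Index a b k l → M), Rel α g →
      (∀ i ∈ D, g i = 0) → ∀ i, g i = 0) (e : Fin (dim a b k l) ≃ D) :
    |(Matrix.of fun q => vert a b k l α (e q)).det| = 1 := by
  refine abs_det_eq_one_of_single_mem_span _ (fun q => isLatticePoint_vert α _) ?_
  refine single_mem_of_vert_mem ha hb α _ fun i => ?_
  rw [← Submodule.Quotient.mk_eq_zero]
  refine hD _ _ ((rel_vert ha hb α).map (Submodule.mkQ _).toAddMonoidHom) (fun i hi => ?_) i
  refine (Submodule.Quotient.mk_eq_zero _).2 (Submodule.subset_span ⟨e.symm ⟨i, hi⟩, ?_⟩)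
  simp

/-- Any real values satisfying the linear relations are the values of a linear functional. -/
theorem exists_linearMap_of_rel {a b k : ℕ} {l : Fin k → ℕ} (ha : 2 ≤ a) (hb : 1 ≤ b)
    (α : (j : Fin k) → Fin (l j) → (Fin b ⊕ Fin b)) (c : Index a b k l → ℝ) (hc : Rel α c) :
    ∃ f : (Fin (dim a b k l) → ℝ) →ₗ[ℝ] ℝ, ∀ i, f (vert a b k l α i) = c i := by
  obtain ⟨D, hcard, -, hD⟩ := exists_determining ha α ∅ (fun h => h.1 ⟨0, by omega⟩)
    (fun h => h.2) (fun h => h.1) (fun h => h.1) (fun h => h.1 ⟨0, by omega⟩)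
    (fun j h => h 0)
  let e := (Finset.equivFinOfCardEq hcard).symm
  have hdet := abs_det_eq_one_of_determining ha hb α hD e
  obtain ⟨f, hf⟩ := exists_linearMap_of_det_ne_zero (fun q => vert a b k l α (e q))
    (fun h => by simp [h] at hdet) (fun q => c (e q))
  refine ⟨f, fun i => sub_eq_zero.1 ?_⟩
  refine hD ℝ _ (((rel_vert ha hb α).map f.toAddMonoidHom).sub hc) (fun i hi => ?_) i
  have := hf (e.symm ⟨i, hi⟩)
  simp only [Equiv.apply_symm_apply] at this
  exact sub_eq_zero.2 this

theorem exists_strictMax_vert {a b k : ℕ} {l : Fin k → ℕ} (ha : 2 ≤ a) (hb : 1 ≤ b)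
    (hl : ∀ j, 1 ≤ l j) (α : (j : Fin k) → Fin (l j) → (Fin b ⊕ Fin b)) (i : Index a b k l) :
    ∃ f : (Fin (dim a b k l) → ℝ) →ₗ[ℝ] ℝ,
      ∀ j, j ≠ i → f (vert a b k l α j) < f (vert a b k l α i) := by
  obtain ⟨c, hc, hlt⟩ := exists_rel_strictMax ha hb hl α i
  obtain ⟨f, hf⟩ := exists_linearMap_of_rel ha hb α c hc
  exact ⟨f, by simpa only [hf] using hlt⟩

theorem vert_injective {a b k : ℕ} {l : Fin k → ℕ} (ha : 2 ≤ a) (hb : 1 ≤ b)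
    (hl : ∀ j, 1 ≤ l j) (α : (j : Fin k) → Fin (l j) → (Fin b ⊕ Fin b)) :
    Function.Injective (vert a b k l α) := by
  intro i j hij
  by_contra hne
  obtain ⟨f, hf⟩ := exists_strictMax_vert ha hb hl α j
  exact (hf i hne).ne (by rw [hij])

theorem vertexSet_P {a b k : ℕ} {l : Fin k → ℕ} (ha : 2 ≤ a) (hb : 1 ≤ b)
    (hl : ∀ j, 1 ≤ l j) (α : (j : Fin k) → Fin (l j) → (Fin b ⊕ Fin b)) :
    vertexSet (P a b k l α) = Set.range (vert a b k l α) := by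
  rw [vertexSet, P_eq_convexHull_range_vert]
  exact extremePoints_convexHull_range_of_strictMax _ (exists_strictMax_vert ha hb hl α)

theorem affineSpan_range_vert {a b k : ℕ} {l : Fin k → ℕ} (ha : 2 ≤ a) (hb : 1 ≤ b)
    (α : (j : Fin k) → Fin (l j) → (Fin b ⊕ Fin b)) :
    affineSpan ℝ (Set.range (vert a b k l α)) = ⊤ := by
  have h0 : (0 : Fin (dim a b k l) → ℝ) ∈ affineSpan ℝ (Set.range (vert a b k l α)) := by
    refine convexHull_subset_affineSpan _ ?_
    have hz := (rel_vert ha hb α).base.z_eq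
    have := convex_convexHull ℝ (Set.range (vert a b k l α))
      (subset_convexHull ℝ _ ⟨Sum.inl Base.z, rfl⟩) (subset_convexHull ℝ _ ⟨Sum.inl Base.t, rfl⟩)
      (by norm_num : (0 : ℝ) ≤ 1 / 2) (by norm_num : (0 : ℝ) ≤ 1 / 2) (by norm_num)
    simpa [hz] using this
  rw [AffineSubspace.affineSpan_eq_top_iff_vectorSpan_eq_top_of_nonempty ℝ _ _
      (Set.range_nonempty_iff_nonempty.2 ⟨Sum.inl Base.z⟩),
    ← direction_affineSpan, eq_top_iff]
  have hmem : ∀ i, vert a b k l α i ∈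
      (affineSpan ℝ (Set.range (vert a b k l α))).direction.restrictScalars ℤ := fun i => by
    simpa using AffineSubspace.vsub_mem_direction
      (subset_affineSpan ℝ (Set.range (vert a b k l α)) ⟨i, rfl⟩) h0
  have hsingle := single_mem_of_vert_mem ha hb α _ hmem
  rw [← (Pi.basisFun ℝ (Fin (dim a b k l))).span_eq, Submodule.span_le]
  rintro _ ⟨q, rfl⟩
  rw [Pi.basisFun_apply]
  exact hsingle q

theorem zero_mem_interior_P {a b k : ℕ} {l : Fin k → ℕ} (ha : 2 ≤ a) (hb : 1 ≤ b)
    (α : (j : Fin k) → Fin (l j) → (Fin b ⊕ Fin b)) :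
    (0 : Fin (dim a b k l) → ℝ) ∈ interior (convexHull ℝ (Set.range (vert a b k l α))) := by
  refine zero_mem_interior_convexHull_range _ (affineSpan_range_vert ha hb α) fun f hf => ?_
  have hrel := (rel_vert ha hb α).map f.toAddMonoidHom
  simp only [LinearMap.toAddMonoidHom_coe] at hrel
  have hz := hrel.base.z_eq
  have hfz := hf (Sum.inl Base.z)
  have hft := hf (Sum.inl Base.t)
  have ht : f (vert a b k l α (Sum.inl Base.t)) = 0 := by linarith
  have hz : f (vert a b k l α (Sum.inl Base.z)) = 0 := by linarith
  have hvy := hrel.base.sum_v_add_sum_y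
  rw [ht, smul_zero] at hvy
  have hv0 := Finset.sum_nonpos fun i (_ : i ∈ Finset.univ) => hf (Sum.inl (Base.v i))
  have hy0 := Finset.sum_nonpos fun i (_ : i ∈ Finset.univ) => hf (Sum.inl (Base.y i))
  have hv := (Finset.sum_eq_zero_iff_of_nonpos fun i _ => hf (Sum.inl (Base.v i))).1
    (by linarith)
  have hysum : ∑ i, f (vert a b k l α (Sum.inl (Base.y i))) = 0 := by linarith
  have hy := (Finset.sum_eq_zero_iff_of_nonpos fun i _ => hf (Sum.inl (Base.y i))).1 hysum
  have husum := hrel.base.sum_u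
  rw [ht, hysum, sub_zero] at husum
  have hu := (Finset.sum_eq_zero_iff_of_nonpos fun i _ => hf (Sum.inl (Base.u i))).1 husum
  have hbase : ∀ i, f (vert a b k l α (Sum.inl i)) = 0 := by
    rintro ((i | i) | (i | _ | _))
    exacts [hv i (Finset.mem_univ _), hy i (Finset.mem_univ _), hu i (Finset.mem_univ _), hz, ht]
  rintro (i | ⟨j, i⟩)
  · exact hbase i
  · refine (Finset.sum_eq_zero_iff_of_nonpos fun i _ => hf (Sum.inr ⟨j, i⟩)).1 ?_ i
      (Finset.mem_univ _)
    rw [hrel.sum_w]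
    exact Finset.sum_eq_zero fun i _ => hbase _

/-- The vertices on a facet contain no primitive collection, and therefore form a lattice
basis. -/
theorem isUnimodularBasis_of_isFacetOf {a b k : ℕ} {l : Fin k → ℕ} (ha : 2 ≤ a) (hb : 1 ≤ b)
    (hl : ∀ j, 1 ≤ l j) (α : (j : Fin k) → Fin (l j) → (Fin b ⊕ Fin b))
    {F : Set (Fin (dim a b k l) → ℝ)} (hF : IsFacetOf F (P a b k l α)) :
    IsUnimodularBasis (vertexSet (P a b k l α) ∩ F) := by
  classical
  rw [vertexSet_P ha hb hl]
  rw [P_eq_convexHull_range_vert] at hF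
  obtain ⟨f, c, hc, hle, hmem, hspan⟩ := exists_functional_of_isFacetOf
    (by unfold dim; omega) _ (zero_mem_interior_P ha hb α) hF
  set T := {i | f (vert a b k l α i) = c} with hT
  have hrel := (rel_vert ha hb α).map f.toAddMonoidHom
  simp only [LinearMap.toAddMonoidHom_coe] at hrel
  have hA : (2 : ℝ) ≤ a := by exact_mod_cast ha
  have hB : (1 : ℝ) ≤ b := by exact_mod_cast hb
  have hvy := hrel.base.sum_v_add_sum_y
  have hz := hrel.base.z_eq
  have hyu := hrel.base.sum_u
  have hcast : ((a + b - 1 : ℕ) : ℝ) = a + b - 1 := by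
    rw [Nat.cast_sub (by omega)]
    push_cast
    ring
  rw [nsmul_eq_mul, hcast] at hvy
  have hlet := hle (Sum.inl Base.t)
  have hlez := hle (Sum.inl Base.z)
  have hconst : ∀ {m : ℕ} (g : Fin m → ℝ), (∀ i, g i = c) → ∑ i, g i = m * c :=
    fun g hg => by simp [hg]
  have hbound : ∀ {m : ℕ} (g : Fin m → ℝ), (∀ i, g i ≤ c) → ∑ i, g i ≤ m * c :=
    fun g hg => by simpa using Finset.sum_le_card_nsmul Finset.univ g c fun i _ => hg i
  have hsumy := hbound _ fun i => hle (Sum.inl (Base.y i))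
  have hsumu := hbound _ fun i => hle (Sum.inl (Base.u i))
  obtain ⟨D, hcard, hTD, hD⟩ := exists_determining ha α T
    (by
      rintro ⟨h1, h2⟩
      rw [hconst _ h1, hconst _ h2] at hvy
      nlinarith)
    (by
      rintro ⟨h1, h2⟩
      have h2 : f (vert a b k l α (Sum.inl Base.z)) = c := h2
      rw [hconst _ h1] at hyu
      linarith)
    (by
      rintro ⟨h1, h2⟩
      have h1 : f (vert a b k l α (Sum.inl Base.z)) = c := h1
      have h2 : f (vert a b k l α (Sum.inl Base.t)) = c := h2
      linarith)
    (by
      rintro ⟨h1, h2⟩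
      have h1 : f (vert a b k l α (Sum.inl Base.t)) = c := h1
      rw [hconst _ h2] at hyu
      linarith)
    (by
      rintro ⟨h1, h2⟩
      rw [hconst _ h2] at hvy
      rw [hconst _ h1] at hyu
      nlinarith)
    (by
      intro j h
      have h1 := hrel.sum_w j
      rw [hconst _ h] at h1
      have h2 := hbound _ fun i => hle (Sum.inl (Base.ofSum (α j i)))
      push_cast at h1
      linarith)
  have hTeq : T = D := by
    refine Set.eq_of_subset_of_ncard_le hTD ?_ D.finite_toSet
    rw [Set.ncard_coe_finset, hcard]
    have h1 := finrank_span_le_card (R := ℝ) (vert a b k l α '' T)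
    rw [hspan, finrank_top, Module.finrank_fintype_fun_eq_card, Fintype.card_fin,
      ← Set.ncard_eq_toFinset_card'] at h1
    exact h1.trans (Set.ncard_image_le T.toFinite)
  let e := (Finset.equivFinOfCardEq hcard).symm
  refine ⟨fun q => vert a b k l α (e q),
    (vert_injective ha hb hl α).comp (Subtype.val_injective.comp e.injective), ?_,
    fun q => isLatticePoint_vert α _, abs_det_eq_one_of_determining ha hb α hD e⟩
  ext x
  constructor
  · rintro ⟨q, rfl⟩
    refine ⟨⟨_, rfl⟩, (hmem _).2 ?_⟩
    have : (e q : Index a b k l) ∈ T := by rw [hTeq]; exact (e q).2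
    exact this
  · rintro ⟨⟨i, rfl⟩, hx⟩
    have hi : i ∈ D := by
      rw [← Finset.mem_coe, ← hTeq]
      exact (hmem i).1 hx
    exact ⟨e.symm ⟨i, hi⟩, by simp⟩

end PG

/-- For `a ≥ 2`, `b ≥ 1`, `k ≥ 1`, `l_1, …, l_k ≥ 1` and any
assignment `α` as in the construction, the polytope `P(a, b, k, l, α)` is a
smooth Fano polytope of dimension `n = a + 2b - 1 + ∑ l_j` with `n + k + 3`
vertices. -/
theorem PG_isSmoothFano (a b k : ℕ) (l : Fin k → ℕ)
    (ha : 2 ≤ a) (hb : 1 ≤ b) (hk : 1 ≤ k) (hl : ∀ j, 1 ≤ l j)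
    (α : (j : Fin k) → Fin (l j) → (Fin b ⊕ Fin b))
    (hα : ∀ s : Fin b ⊕ Fin b, ∃ j i, α j i = s) :
    IsSmoothFano (PG.P a b k l α) ∧
    (vertexSet (PG.P a b k l α)).ncard = PG.dim a b k l + k + 3 := by

  refine ⟨⟨⟨⟨(Set.finite_range (PG.vert a b k l α)).toFinset, ?_, ?_⟩, ?_⟩, ?_, fun F hF =>
    PG.isUnimodularBasis_of_isFacetOf ha hb hl α hF⟩, ?_⟩
  · intro x hx
    obtain ⟨i, rfl⟩ := (Set.Finite.mem_toFinset _).1 hx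
    exact PG.isLatticePoint_vert α i
  · rw [Set.Finite.coe_toFinset, PG.P_eq_convexHull_range_vert]
  · rw [PG.P_eq_convexHull_range_vert, affineSpan_convexHull, PG.affineSpan_range_vert ha hb]
  · rw [PG.P_eq_convexHull_range_vert]
    exact PG.zero_mem_interior_P ha hb α
  · rw [PG.vertexSet_P ha hb hl, Set.ncard_range_of_injective (PG.vert_injective ha hb hl α),
      Nat.card_eq_fintype_card, PG.card_index l ha]
    omega
end

section
/- For all integers n and ρ with n ≥ 5 and 3 ≤ ρ ≤ n, there exists an I-isolated smooth Fano n-polytope with n + ρ vertices. -/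
lemma linear_le_of_mem_convexHull {n : ℕ} {S : Set (Fin n → ℝ)} {g : (Fin n → ℝ) →ₗ[ℝ] ℝ} {c : ℝ}
    (hg : ∀ x ∈ S, g x ≤ c) {x : Fin n → ℝ} (hx : x ∈ convexHull ℝ S) : g x ≤ c :=
  convexHull_min (t := {x | g x ≤ c}) hg (convex_halfSpace_le g.isLinear c) hx

lemma linear_eq_zero_of_nonneg_of_zero_mem_interior {n : ℕ} {Q : Set (Fin n → ℝ)}
    (h0 : (0 : Fin n → ℝ) ∈ interior Q) {f : (Fin n → ℝ) →ₗ[ℝ] ℝ} (hf : ∀ x ∈ Q, 0 ≤ f x) :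
    f = 0 := by
  have key : ∀ x, 0 ≤ f x := by
    intro x
    have hc : Filter.Tendsto (fun ε : ℝ => ε • x) (nhdsWithin 0 (Set.Ioi 0)) (nhds 0) := by
      have : Filter.Tendsto (fun ε : ℝ => ε • x) (nhds 0) (nhds ((0 : ℝ) • x)) :=
        (continuous_id.smul continuous_const).tendsto 0
      rw [zero_smul] at this
      exact this.mono_left nhdsWithin_le_nhds
    have h1 := hc.eventually (mem_interior_iff_mem_nhds.1 h0)
    obtain ⟨ε, hε, hε'⟩ := (h1.and self_mem_nhdsWithin).exists
    have := hf _ hε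
    rw [map_smul, smul_eq_mul] at this
    exact nonneg_of_mul_nonneg_right this hε'
  ext i
  have h1 := key (Pi.single i 1)
  have h2 := key (-Pi.single i 1)
  rw [map_neg] at h2
  simp only [LinearMap.coe_comp, LinearMap.coe_single, Function.comp_apply, LinearMap.zero_apply]
  linarith

lemma vertexSet_convexHull_subset {n : ℕ} (S : Set (Fin n → ℝ)) :
    vertexSet (convexHull ℝ S) ⊆ S := extremePoints_convexHull_subset

namespace IsLatticePolytope

variable {n : ℕ} {Q : Set (Fin n → ℝ)}

lemma vertexSet_finite (hQ : IsLatticePolytope Q) : (vertexSet Q).Finite := by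
  obtain ⟨⟨S, -, rfl⟩, -⟩ := hQ
  exact S.finite_toSet.subset (vertexSet_convexHull_subset _)

lemma convexHull_vertexSet (hQ : IsLatticePolytope Q) : convexHull ℝ (vertexSet Q) = Q := by
  have hfin := hQ.vertexSet_finite
  obtain ⟨⟨S, -, rfl⟩, -⟩ := hQ
  have h := closure_convexHull_extremePoints (S.finite_toSet.isCompact_convexHull (𝕜 := ℝ))
    (convex_convexHull ℝ _)
  change closure (convexHull ℝ (vertexSet _)) = _ at h
  rwa [(hfin.isCompact_convexHull (𝕜 := ℝ)).isClosed.closure_eq] at h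

end IsLatticePolytope

lemma IsSmoothFano.linear_eq_zero {n : ℕ} {Q : Set (Fin n → ℝ)} (hQ : IsSmoothFano Q)
    {f : (Fin n → ℝ) →ₗ[ℝ] ℝ} (hf : ∀ x ∈ vertexSet Q, 0 ≤ f x) : f = 0 := by
  refine linear_eq_zero_of_nonneg_of_zero_mem_interior hQ.2.1 fun x hx => ?_
  rw [← hQ.1.convexHull_vertexSet] at hx
  have := linear_le_of_mem_convexHull (g := -f) (c := 0) (by simpa using hf) hx
  simpa using this

lemma IsSmoothFano.zero_notMem_vertexSet {n : ℕ} {Q : Set (Fin n → ℝ)} (hn : 0 < n)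
    (hQ : IsSmoothFano Q) : (0 : Fin n → ℝ) ∉ vertexSet Q := by
  intro h
  have : Nonempty (Fin n) := ⟨⟨0, hn⟩⟩
  exact Set.disjoint_left.1 (disjoint_interior_extremePoints Q) hQ.2.1 h

/-- A set of vectors is determining if only the zero functional vanishes on it. -/
def IsDetermining {n : ℕ} (F : Set (Fin n → ℝ)) : Prop :=
  ∀ h : (Fin n → ℝ) →ₗ[ℝ] ℝ, (∀ x ∈ F, h x = 0) → h = 0

lemma isDetermining_iff_span_eq_top {n : ℕ} {F : Set (Fin n → ℝ)} :
    IsDetermining F ↔ Submodule.span ℝ F = ⊤ := by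
  constructor
  · intro hF
    by_contra h
    obtain ⟨f, hf, hf'⟩ := Submodule.exists_le_ker_of_lt_top _ (lt_top_iff_ne_top.2 h)
    exact hf (hF f fun x hx => hf' (Submodule.subset_span hx))
  · intro h f hf
    have : Submodule.span ℝ F ≤ LinearMap.ker f := Submodule.span_le.2 hf
    rw [h, top_le_iff] at this
    exact LinearMap.ker_eq_top.1 this

lemma finrank_vectorSpan_add_one_eq_iff {n : ℕ} {F : Set (Fin n → ℝ)} (hne : F.Nonempty)
    {g : (Fin n → ℝ) →ₗ[ℝ] ℝ} (hg : ∀ x ∈ F, g x = 1) :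
    Module.finrank ℝ (vectorSpan ℝ F) + 1 = n ↔ IsDetermining F := by
  obtain ⟨x₀, hx₀⟩ := hne
  have hx₀0 : x₀ ≠ 0 := by
    rintro rfl
    simpa using hg 0 hx₀
  have hker : vectorSpan ℝ F ≤ LinearMap.ker g := by
    rw [vectorSpan_eq_span_vsub_set_right ℝ hx₀, Submodule.span_le]
    rintro _ ⟨y, hy, rfl⟩
    simp [hg y hy, hg x₀ hx₀]
  have hsup : vectorSpan ℝ F ⊔ Submodule.span ℝ {x₀} = Submodule.span ℝ F := by
    apply le_antisymm
    · refine sup_le ?_ (Submodule.span_mono (by simpa using hx₀))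
      rw [vectorSpan_eq_span_vsub_set_right ℝ hx₀, Submodule.span_le]
      rintro _ ⟨y, hy, rfl⟩
      exact Submodule.sub_mem _ (Submodule.subset_span hy) (Submodule.subset_span hx₀)
    · rw [Submodule.span_le]
      intro y hy
      have h1 : y - x₀ ∈ vectorSpan ℝ F := vsub_mem_vectorSpan ℝ hy hx₀
      have h2 : y = (y - x₀) + x₀ := by abel
      rw [h2]
      exact Submodule.add_mem _ (Submodule.mem_sup_left h1)
        (Submodule.mem_sup_right (Submodule.mem_span_singleton_self x₀))
  have hinf : vectorSpan ℝ F ⊓ Submodule.span ℝ {x₀} = ⊥ := by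
    rw [eq_bot_iff]
    rintro y ⟨hy1, hy2⟩
    obtain ⟨c, rfl⟩ := Submodule.mem_span_singleton.1 hy2
    have := hker hy1
    simp only [LinearMap.mem_ker, map_smul, hg x₀ hx₀, smul_eq_mul, mul_one] at this
    simp [this]
  have hfr := Submodule.finrank_sup_add_finrank_inf_eq (vectorSpan ℝ F) (Submodule.span ℝ {x₀})
  rw [hsup, hinf, finrank_bot, add_zero, finrank_span_singleton hx₀0] at hfr
  rw [← hfr, isDetermining_iff_span_eq_top]
  constructor
  · intro h
    exact Submodule.eq_top_of_finrank_eq (by simpa using h)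
  · intro h
    rw [h]
    simp

lemma linear_eq_zero_on_face {n : ℕ} {S : Set (Fin n → ℝ)} {g h : (Fin n → ℝ) →ₗ[ℝ] ℝ}
    (hg : ∀ x ∈ S, g x ≤ 1) (hh : ∀ x ∈ S, g x = 1 → h x = 0) {x : Fin n → ℝ}
    (hx : x ∈ convexHull ℝ S) (hgx : g x = 1) : h x = 0 := by
  obtain ⟨ι, _, w, z, hw0, hw1, hz, rfl⟩ := mem_convexHull_iff_exists_fintype.1 hx
  have h0 : ∑ i, w i * (1 - g (z i)) = 0 := by
    simp only [map_sum, map_smul, smul_eq_mul] at hgx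
    simp only [mul_sub, mul_one, Finset.sum_sub_distrib, hw1, hgx, sub_self]
  rw [Finset.sum_eq_zero_iff_of_nonneg fun i _ =>
    mul_nonneg (hw0 i) (sub_nonneg.2 (hg _ (hz i)))] at h0
  simp only [map_sum, map_smul, smul_eq_mul]
  refine Finset.sum_eq_zero fun i hi => ?_
  rcases mul_eq_zero.1 (h0 i hi) with h1 | h1
  · rw [h1, zero_mul]
  · rw [hh _ (hz i) (sub_eq_zero.1 h1).symm, mul_zero]

lemma notMem_vertexSet_of_smul_eq_sum {n : ℕ} {Q : Set (Fin n → ℝ)} (hQ : Convex ℝ Q)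
    (h0 : (0 : Fin n → ℝ) ∈ Q) {t : Fin n → ℝ} (ht : t ≠ 0) {ι : Type} [Fintype ι]
    {p : ι → Fin n → ℝ} {c : ι → ℝ} {l : ℝ} (hp : ∀ i, p i ∈ Q)
    (hpt : ∀ i, c i ≠ 0 → p i ≠ t)
    (hc : ∀ i, 0 ≤ c i) (hl : 0 < l) (hcl : ∑ i, c i ≤ l) (h : l • t = ∑ i, c i • p i) :
    t ∉ vertexSet Q := by
  classical
  intro htv
  have h1 := ((Convex.mem_extremePoints_iff_mem_sdiff_convexHull_sdiff hQ).1 htv).2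
  apply h1
  have hz : (0 : Fin n → ℝ) ∈ Q \ {t} := ⟨h0, fun h => ht h.symm⟩
  rw [mem_convexHull_iff_exists_fintype]
  refine ⟨Option ι, inferInstance, fun o => o.elim ((l - ∑ i, c i) / l) fun i => c i / l,
    fun o => o.elim 0 fun i => if c i = 0 then 0 else p i, ?_, ?_, ?_, ?_⟩
  · rintro (_ | i)
    · exact div_nonneg (by linarith) hl.le
    · exact div_nonneg (hc i) hl.le
  · rw [Fintype.sum_option]
    simp only [Option.elim_none, Option.elim_some]
    rw [← Finset.sum_div, ← add_div, sub_add_cancel, div_self hl.ne']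
  · rintro (_ | i)
    · exact hz
    · simp only [Option.elim_some]
      split_ifs with hi
      · exact hz
      · exact ⟨hp i, hpt i hi⟩
  · rw [Fintype.sum_option]
    simp only [Option.elim_none, Option.elim_some, smul_zero, zero_add]
    have : t = l⁻¹ • ∑ i, c i • p i := by rw [← h, smul_smul, inv_mul_cancel₀ hl.ne', one_smul]
    conv_rhs => rw [this]
    rw [Finset.smul_sum]
    refine Finset.sum_congr rfl fun i _ => ?_
    split_ifs with hi
    · simp [hi]
    · rw [smul_smul, div_eq_inv_mul]

lemma zero_mem_interior_convexHull {n : ℕ} (hn : 0 < n) {S : Set (Fin n → ℝ)}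
    (hS : ∀ f : (Fin n → ℝ) →ₗ[ℝ] ℝ, (∀ x ∈ S, f x ≤ 0) → f = 0) :
    (0 : Fin n → ℝ) ∈ interior (convexHull ℝ S) ∧ affineSpan ℝ (convexHull ℝ S) = ⊤ := by
  have haff : affineSpan ℝ S = ⊤ := by
    have hne : S.Nonempty := by
      by_contra h
      rw [Set.not_nonempty_iff_eq_empty] at h
      have h1 := hS (LinearMap.proj ⟨0, hn⟩) (by simp [h])
      have h2 := congrArg (fun f => f (Pi.single ⟨0, hn⟩ 1)) h1
      simp at h2
    have hd : vectorSpan ℝ S = ⊤ := by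
      by_contra h
      obtain ⟨f, hf, hf'⟩ := Submodule.exists_le_ker_of_lt_top _ (lt_top_iff_ne_top.2 h)
      obtain ⟨x₀, hx₀⟩ := hne
      have hconst : ∀ x ∈ S, f x = f x₀ := fun x hx => by
        have := hf' (vsub_mem_vectorSpan ℝ hx hx₀)
        simpa [sub_eq_zero] using this
      rcases le_total (f x₀) 0 with h0 | h0
      · exact hf (hS f fun x hx => (hconst x hx).le.trans h0)
      · refine hf (neg_eq_zero.1 (hS (-f) fun x hx => ?_))
        simpa [hconst x hx] using h0
    exact (AffineSubspace.affineSpan_eq_top_iff_vectorSpan_eq_top_of_nonempty ℝ _ _ hne).2 hd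
  have h_int : (interior (convexHull ℝ S)).Nonempty :=
    interior_convexHull_nonempty_iff_affineSpan_eq_top.2 haff
  refine ⟨?_, by rw [affineSpan_convexHull, haff]⟩
  by_contra h0
  obtain ⟨f, hf⟩ := geometric_hahn_banach_open_point (convex_convexHull ℝ S).interior
    isOpen_interior h0
  have hle : ∀ x ∈ convexHull ℝ S, f x ≤ 0 := by
    intro x hx
    have hx' : x ∈ closure (interior (convexHull ℝ S)) := by
      rw [(convex_convexHull ℝ S).closure_interior_eq_closure_of_nonempty_interior h_int]
      exact subset_closure hx
    exact closure_minimal (s := interior (convexHull ℝ S)) (t := {x | f x ≤ 0})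
      (fun y hy => by simpa using (hf y hy).le) (isClosed_le f.continuous continuous_const) hx'
  have hf0 : (f : (Fin n → ℝ) →ₗ[ℝ] ℝ) = 0 := hS _ fun x hx => hle x (subset_convexHull ℝ S hx)
  obtain ⟨a, ha⟩ := h_int
  have h1 := hf a ha
  have h2 : f a = 0 := congrArg (fun g => g a) hf0
  rw [h2, map_zero] at h1
  exact lt_irrefl _ h1

lemma IsFacetOf.exists_linear {n : ℕ} (hn : 2 ≤ n) {S F : Set (Fin n → ℝ)}
    (h0 : (0 : Fin n → ℝ) ∈ interior (convexHull ℝ S)) (hF : IsFacetOf F (convexHull ℝ S)) :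
    ∃ g : (Fin n → ℝ) →ₗ[ℝ] ℝ, (∀ x ∈ S, g x ≤ 1) ∧
      F = {x ∈ convexHull ℝ S | g x = 1} ∧ IsDetermining {x ∈ S | g x = 1} := by
  obtain ⟨hexp, hfr⟩ := hF
  have hne : F.Nonempty := by
    by_contra h
    rw [Set.not_nonempty_iff_eq_empty] at h
    rw [h, vectorSpan_empty, finrank_bot] at hfr
    omega
  obtain ⟨l, hl⟩ := hexp hne
  obtain ⟨x₀, hx₀⟩ := hne
  have hx₀' := hx₀
  rw [hl] at hx₀'
  obtain ⟨hx₀Q, hmax⟩ := hx₀'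
  have hc0 : 0 ≤ l x₀ := by simpa using hmax 0 (interior_subset h0)
  have hc : 0 < l x₀ := by
    refine lt_of_le_of_ne hc0 fun hc => ?_
    have hl0 : -(l : (Fin n → ℝ) →ₗ[ℝ] ℝ) = 0 :=
      linear_eq_zero_of_nonneg_of_zero_mem_interior h0 fun x hx => by
        have := hmax x hx
        simp only [LinearMap.neg_apply, ContinuousLinearMap.coe_coe]
        linarith
    have hl0' : ∀ x, l x = 0 := fun x => by
      have := congrArg (fun g => g x) hl0
      simpa using this
    have hFQ : F = convexHull ℝ S := by
      rw [hl]
      ext x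
      simp [hl0']
    have hspan : vectorSpan ℝ F = ⊤ := by
      rw [hFQ, ← direction_affineSpan,
        (interior_convexHull_nonempty_iff_affineSpan_eq_top.1 ⟨0, h0⟩ ▸
          affineSpan_convexHull S : affineSpan ℝ (convexHull ℝ S) = ⊤),
        AffineSubspace.direction_top]
    rw [hspan, finrank_top] at hfr
    simp at hfr
  set g : (Fin n → ℝ) →ₗ[ℝ] ℝ := (l x₀)⁻¹ • (l : (Fin n → ℝ) →ₗ[ℝ] ℝ) with hg
  have hgx : ∀ x, g x = l x / l x₀ := fun x => by simp [hg, div_eq_inv_mul]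
  have hgQ : ∀ x ∈ convexHull ℝ S, g x ≤ 1 := fun x hx => by
    rw [hgx, div_le_one hc]
    exact hmax x hx
  have hFg : F = {x ∈ convexHull ℝ S | g x = 1} := by
    rw [hl]
    ext x
    simp only [Set.mem_ofPred_eq, hgx, div_eq_one_iff_eq hc.ne', and_congr_right_iff]
    intro hx
    exact ⟨fun h => le_antisymm (hmax x hx) (h x₀ hx₀Q), fun h y hy => h ▸ hmax y hy⟩
  have hFdet : IsDetermining F := by
    refine (finrank_vectorSpan_add_one_eq_iff ⟨x₀, hx₀⟩ (g := g) fun x hx => ?_).1 hfr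
    rw [hFg] at hx
    exact hx.2
  have hgS : ∀ x ∈ S, g x ≤ 1 := fun x hx => hgQ x (subset_convexHull ℝ S hx)
  refine ⟨g, hgS, hFg, fun h hh => hFdet h fun x hx => ?_⟩
  rw [hFg] at hx
  exact linear_eq_zero_on_face hgS (fun x hx h1 => hh x ⟨hx, h1⟩) hx.1 hx.2

/-- A linear functional which is integral on lattice points. -/
def IsLatticeIntegral {n : ℕ} (h : (Fin n → ℝ) →ₗ[ℝ] ℝ) : Prop :=
  ∀ y, IsLatticePoint y → ∃ m : ℤ, h y = m

lemma exists_int_det {n : ℕ} {B : Matrix (Fin n) (Fin n) ℝ} (hB : ∀ i j, ∃ m : ℤ, B i j = m) :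
    ∃ m : ℤ, B.det = m := by
  choose M hM using hB
  refine ⟨(Matrix.of M).det, ?_⟩
  change _ = Int.castRingHom ℝ _
  rw [RingHom.map_det]
  congr 1
  ext i j
  simp [hM]

lemma IsUnimodularBasis.exists_dual {n : ℕ} {D : Set (Fin n → ℝ)} (hD : IsUnimodularBasis D)
    {x₀ : Fin n → ℝ} (hx₀ : x₀ ∈ D) :
    ∃ h : (Fin n → ℝ) →ₗ[ℝ] ℝ, h x₀ = 1 ∧ (∀ x ∈ D, x ≠ x₀ → h x = 0) ∧ IsLatticeIntegral h := by
  obtain ⟨b, hinj, rfl, hlat, hdet⟩ := hD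
  obtain ⟨i, rfl⟩ := hx₀
  have hd : (Matrix.of b).det ≠ 0 := fun h => by simp [h] at hdet
  have hcr : ∀ j, (Matrix.of b).transpose.cramer (b j) = Pi.single j (Matrix.of b).det :=
    fun j => Matrix.cramer_transpose_row_self (Matrix.of b) j
  refine ⟨(Matrix.of b).det⁻¹ • (LinearMap.proj i ∘ₗ (Matrix.of b).transpose.cramer), ?_, ?_, ?_⟩
  · simp [hcr, hd]
  · rintro _ ⟨j, rfl⟩ hji
    have : i ≠ j := fun h => hji (h ▸ rfl)
    simp [hcr, this]
  · intro y hy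
    obtain ⟨m, hm⟩ : ∃ m : ℤ, (Matrix.of b).transpose.cramer y i = m := by
      rw [Matrix.cramer_apply]
      refine exists_int_det fun k l => ?_
      rw [Matrix.updateCol_apply]
      split_ifs
      · exact hy k
      · exact hlat l k
    rcases eq_or_eq_neg_of_abs_eq hdet with h | h
    · exact ⟨m, by simp [h, hm]⟩
    · exact ⟨-m, by simp [h, hm]⟩

lemma isUnimodularBasis_range {n : ℕ} {b : Fin n → (Fin n → ℝ)} (hlat : ∀ i, IsLatticePoint (b i))
    (hb : IsDetermining (Set.range b))
    (h_int : ∀ h : (Fin n → ℝ) →ₗ[ℝ] ℝ, (∀ i, ∃ m : ℤ, h (b i) = m) → IsLatticeIntegral h) :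
    IsUnimodularBasis (Set.range b) := by
  classical
  have hd : (Matrix.of b).det ≠ 0 := by
    intro h
    obtain ⟨v, hv, hv0⟩ := Matrix.exists_mulVec_eq_zero_iff.2 h
    have h1 := hb (LinearMap.toSpanSingleton ℝ ℝ 1 ∘ₗ dotProductBilin ℝ ℝ v) ?_
    · apply hv
      ext i
      have := congrArg (fun f => f (Pi.single i 1)) h1
      simpa using this
    · rintro _ ⟨i, rfl⟩
      have := congrFun hv0 i
      rw [Matrix.mulVec, dotProduct_comm] at this
      simpa using this
  have hu : IsUnit (Matrix.of b).det := isUnit_iff_ne_zero.2 hd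
  have hmul := Matrix.mul_nonsing_inv (Matrix.of b) hu
  have hrow : ∀ i j, (Matrix.vecMul (b i) (Matrix.of b)⁻¹) j = if i = j then 1 else 0 := by
    intro i j
    have := congrFun (congrFun hmul i) j
    rw [Matrix.one_apply] at this
    exact this
  have hinv : ∀ i j, ∃ m : ℤ, (Matrix.of b)⁻¹ i j = m := by
    intro i j
    have := h_int (LinearMap.proj j ∘ₗ (Matrix.of b)⁻¹.vecMulLinear) (fun k => by
      simp only [LinearMap.coe_comp, LinearMap.coe_proj, Function.comp_apply,
        Matrix.vecMulLinear_apply, Function.eval, hrow]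
      split_ifs
      · exact ⟨1, by simp⟩
      · exact ⟨0, by simp⟩) (Pi.single i 1) (fun k => by
        rcases eq_or_ne k i with rfl | h
        · exact ⟨1, by simp⟩
        · exact ⟨0, by simp [h]⟩)
    simpa using this
  obtain ⟨m, hm⟩ := exists_int_det (B := Matrix.of b) (fun i j => hlat i j)
  obtain ⟨m', hm'⟩ := exists_int_det hinv
  have h1 : (m : ℝ) * m' = 1 := by
    rw [← hm, ← hm', ← Matrix.det_mul, hmul, Matrix.det_one]
  have h2 : m * m' = 1 := by exact_mod_cast h1
  refine ⟨b, ?_, rfl, hlat, ?_⟩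
  · intro i j hij
    by_contra h
    have h3 := hrow i j
    rw [hij, hrow j j] at h3
    simp [h] at h3
  · rw [hm]
    rcases Int.eq_one_or_neg_one_of_mul_eq_one h2 with h | h <;> simp [h]

lemma IsSmoothFano.exists_dual {n : ℕ} {Q : Set (Fin n → ℝ)} (hQ : IsSmoothFano Q)
    {g : (Fin n → ℝ) →ₗ[ℝ] ℝ} (hg : ∀ x ∈ vertexSet Q, g x ≤ 1)
    (hdet : IsDetermining {x ∈ vertexSet Q | g x = 1}) {x₀ : Fin n → ℝ} (hx₀ : x₀ ∈ vertexSet Q)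
    (hgx₀ : g x₀ = 1) :
    ∃ h : (Fin n → ℝ) →ₗ[ℝ] ℝ, h x₀ = 1 ∧
      (∀ x ∈ vertexSet Q, g x = 1 → x ≠ x₀ → h x = 0) ∧ IsLatticeIntegral h := by
  have hsub : vertexSet Q ⊆ Q := extremePoints_subset
  have hgQ : ∀ x ∈ Q, g x ≤ 1 := fun x hx => by
    rw [← hQ.1.convexHull_vertexSet] at hx
    exact linear_le_of_mem_convexHull hg hx
  have hF : IsFacetOf {x ∈ Q | g x = 1} Q := by
    constructor
    · intro _
      refine ⟨LinearMap.toContinuousLinearMap g, ?_⟩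
      ext x
      simp only [Set.mem_ofPred_eq, LinearMap.coe_toContinuousLinearMap', and_congr_right_iff]
      intro hx
      constructor
      · intro h y hy
        rw [h]
        exact hgQ y hy
      · intro h
        exact le_antisymm (hgQ x hx) (hgx₀ ▸ h x₀ (hsub hx₀))
    · rw [finrank_vectorSpan_add_one_eq_iff (F := {x ∈ Q | g x = 1})
        ⟨x₀, hsub hx₀, hgx₀⟩ (g := g) fun x hx => hx.2]
      exact fun h hh => hdet h fun x hx => hh x ⟨hsub hx.1, hx.2⟩
  obtain ⟨h, h1, h2, h3⟩ := (hQ.2.2 _ hF).exists_dual ⟨hx₀, hsub hx₀, hgx₀⟩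
  exact ⟨h, h1, fun x hx hgx hne => h2 x ⟨hx, hsub hx, hgx⟩ hne, h3⟩

/-- Numerical data for a family of polytopes whose vertices satisfy the relations
`∑ v + ∑ y = (P + Q + 1) t`, `∑ y = ∑ u + t`, `t + z = 0` and, for every block `j`,
`∑ i, b j i = α j • y 0 + β j • u 0`. -/
structure Params where
  (P Q k : ℕ)
  (s α β : Fin k → ℕ)
  hQ : 1 ≤ Q
  hs : ∀ j, 1 ≤ s j
  hαβ : ∀ j, α j + β j = s j

namespace Params

/-- Labels of the vertices. -/
inductive Vtx (D : Params) : Type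
  | t : Vtx D
  | z : Vtx D
  | v (i : Fin (D.Q + 1)) : Vtx D
  | y (i : Fin (D.P + 1)) : Vtx D
  | u (i : Fin (D.P + 1)) : Vtx D
  | b (j : Fin D.k) (i : Fin (D.s j + 1)) : Vtx D

variable (D : Params)

/-- The labels as a disjoint union. -/
def vtxEquiv : D.Vtx ≃ (Fin 2 ⊕ Fin (D.Q + 1)) ⊕ (Fin (D.P + 1) ⊕ Fin (D.P + 1)) ⊕
    (Σ j, Fin (D.s j + 1)) where
  toFun
    | .t => .inl (.inl 0)
    | .z => .inl (.inl 1)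
    | .v i => .inl (.inr i)
    | .y i => .inr (.inl (.inl i))
    | .u i => .inr (.inl (.inr i))
    | .b j i => .inr (.inr ⟨j, i⟩)
  invFun
    | .inl (.inl 0) => .t
    | .inl (.inl 1) => .z
    | .inl (.inr i) => .v i
    | .inr (.inl (.inl i)) => .y i
    | .inr (.inl (.inr i)) => .u i
    | .inr (.inr ⟨j, i⟩) => .b j i
  left_inv k := by cases k <;> rfl
  right_inv k := by
    rcases k with ((i | i) | ((i | i) | ⟨j, i⟩))
    · fin_cases i <;> rfl
    all_goals rfl

noncomputable instance : DecidableEq D.Vtx := Classical.decEq _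

noncomputable instance : Fintype D.Vtx := Fintype.ofEquiv _ D.vtxEquiv.symm

lemma sum_vtx {M : Type*} [AddCommMonoid M] (f : D.Vtx → M) :
    ∑ k, f k = (f .t + f .z + ∑ i, f (.v i)) +
      ((∑ i, f (.y i) + ∑ i, f (.u i)) + ∑ j, ∑ i, f (.b j i)) := by
  rw [← D.vtxEquiv.symm.sum_comp, Fintype.sum_sum_type, Fintype.sum_sum_type,
    Fintype.sum_sum_type, Fintype.sum_sum_type, Fintype.sum_sigma, Fin.sum_univ_two]
  rfl

lemma card_vtx : Fintype.card D.Vtx = D.Q + 2 * (D.P + 1) + ∑ j, D.s j + (3 + D.k) := by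
  rw [Fintype.card_congr D.vtxEquiv]
  simp only [Fintype.card_sum, Fintype.card_sigma, Fintype.card_fin, Finset.sum_add_distrib,
    Finset.sum_const, Finset.card_univ, smul_eq_mul, mul_one]
  ring

/-- The linear relations between the vertices, for a family of reals. -/
structure HomRel (r : D.Vtx → ℝ) : Prop where
  rel₁ : ∑ i, r (.v i) + ∑ i, r (.y i) = ((D.P + D.Q + 1 : ℕ) : ℝ) * r .t
  rel₂ : ∑ i, r (.y i) = ∑ i, r (.u i) + r .t
  rel₃ : r .z = -r .t
  rel₄ : ∀ j, ∑ i, r (.b j i) = (D.α j : ℝ) * r (.y 0) + (D.β j : ℝ) * r (.u 0)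

/-- The relations satisfied by the defects `1 - r`. -/
structure AffRel (d : D.Vtx → ℝ) : Prop where
  rel₁ : ∑ i, d (.v i) + ∑ i, d (.y i) = 1 + ((D.P + D.Q + 1 : ℕ) : ℝ) * d .t
  rel₂ : ∑ i, d (.u i) + d .t = ∑ i, d (.y i) + 1
  rel₃ : d .z + d .t = 2
  rel₄ : ∀ j, ∑ i, d (.b j i) = 1 + (D.α j : ℝ) * d (.y 0) + (D.β j : ℝ) * d (.u 0)

variable {D}

lemma AffRel.homRel {d : D.Vtx → ℝ} (h : D.AffRel d) : D.HomRel fun k => 1 - d k where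
  rel₁ := by
    have := h.rel₁
    simp only [Finset.sum_sub_distrib, Finset.sum_const, Finset.card_univ, Fintype.card_fin,
      nsmul_eq_mul, mul_one]
    push_cast at this ⊢
    linarith
  rel₂ := by
    have := h.rel₂
    simp only [Finset.sum_sub_distrib, Finset.sum_const, Finset.card_univ, Fintype.card_fin,
      nsmul_eq_mul, mul_one]
    linarith
  rel₃ := by
    have := h.rel₃
    linarith
  rel₄ j := by
    have := h.rel₄ j
    have hs : (D.α j : ℝ) + D.β j = D.s j := by exact_mod_cast D.hαβ j
    simp only [Finset.sum_sub_distrib, Finset.sum_const, Finset.card_univ, Fintype.card_fin,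
      nsmul_eq_mul, mul_one]
    push_cast
    linarith

lemma HomRel.affRel {r : D.Vtx → ℝ} (h : D.HomRel r) : D.AffRel fun k => 1 - r k where
  rel₁ := by
    have := h.rel₁
    simp only [Finset.sum_sub_distrib, Finset.sum_const, Finset.card_univ, Fintype.card_fin,
      nsmul_eq_mul, mul_one]
    push_cast at this ⊢
    linarith
  rel₂ := by
    have := h.rel₂
    simp only [Finset.sum_sub_distrib, Finset.sum_const, Finset.card_univ, Fintype.card_fin,
      nsmul_eq_mul, mul_one]
    linarith
  rel₃ := by
    have := h.rel₃
    linarith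
  rel₄ j := by
    have := h.rel₄ j
    have hs : (D.α j : ℝ) + D.β j = D.s j := by exact_mod_cast D.hαβ j
    simp only [Finset.sum_sub_distrib, Finset.sum_const, Finset.card_univ, Fintype.card_fin,
      nsmul_eq_mul, mul_one]
    push_cast
    linarith

variable (D)

/-- A choice of one element in each block. -/
abbrev Sel : Type := ∀ j : Fin D.k, Fin (D.s j + 1)

/-- The types of facets. -/
inductive Fc (D : Params) : Type
  | N (l : Fin (D.Q + 1)) : Fc D
  | Tv (i : Fin (D.P + 1)) (l : Fin (D.Q + 1)) : Fc D
  | Ty (i j : Fin (D.P + 1)) : Fc D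
  | Zv (j : Fin (D.P + 1)) (l : Fin (D.Q + 1)) : Fc D
  | Zu (j i : Fin (D.P + 1)) : Fc D

variable {D}

/-- The defect of `t`. -/
def Fc.dt : D.Fc → ℤ
  | .N _ => 1
  | .Tv _ _ => 0
  | .Ty _ _ => 0
  | .Zv _ _ => 2
  | .Zu _ _ => 2

/-- The defects of the `v i`. -/
def Fc.dv : D.Fc → Fin (D.Q + 1) → ℤ
  | .N l, i => if i = l then D.P + D.Q + 2 else 0
  | .Tv _ l, i => if i = l then 1 else 0
  | .Ty _ _, _ => 0
  | .Zv _ l, i => if i = l then 2 * (D.P + D.Q + 1) else 0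
  | .Zu _ _, _ => 0

/-- The defects of the `y i`. -/
def Fc.dy : D.Fc → Fin (D.P + 1) → ℤ
  | .N _, _ => 0
  | .Tv _ _, _ => 0
  | .Ty _ j, i => if i = j then 1 else 0
  | .Zv j _, i => if i = j then 1 else 0
  | .Zu j _, i => if i = j then 2 * (D.P + D.Q + 1) + 1 else 0

/-- The defects of the `u i`. -/
def Fc.du : D.Fc → Fin (D.P + 1) → ℤ
  | .N _, _ => 0
  | .Tv l _, i => if i = l then 1 else 0
  | .Ty l _, i => if i = l then 2 else 0
  | .Zv _ _, _ => 0
  | .Zu _ l, i => if i = l then 2 * (D.P + D.Q + 1) else 0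

/-- The defect `1 - u_F` of the vertices for the facet of type `F` with selection `σ`. -/
def defect (F : D.Fc) (σ : D.Sel) : D.Vtx → ℤ
  | .t => F.dt
  | .z => 2 - F.dt
  | .v i => F.dv i
  | .y i => F.dy i
  | .u i => F.du i
  | .b j i => if i = σ j then 1 + D.α j * F.dy 0 + D.β j * F.du 0 else 0

lemma Fc.dy_nonneg (F : D.Fc) (i) : 0 ≤ F.dy i := by
  cases F <;> simp only [dy] <;> (try split_ifs) <;> positivity

lemma Fc.du_nonneg (F : D.Fc) (i) : 0 ≤ F.du i := by
  cases F <;> simp only [du] <;> (try split_ifs) <;> positivity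

lemma Fc.dv_nonneg (F : D.Fc) (i) : 0 ≤ F.dv i := by
  cases F <;> simp only [dv] <;> (try split_ifs) <;> positivity

lemma Fc.block_pos (F : D.Fc) (j) : 0 < 1 + D.α j * F.dy 0 + D.β j * F.du 0 := by
  have := F.dy_nonneg 0
  have := F.du_nonneg 0
  positivity

lemma defect_nonneg (F : D.Fc) (σ : D.Sel) (k : D.Vtx) : 0 ≤ defect F σ k := by
  cases k with
  | t => cases F <;> simp [defect, Fc.dt]
  | z => cases F <;> simp [defect, Fc.dt]
  | v i => exact F.dv_nonneg i
  | y i => exact F.dy_nonneg i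
  | u i => exact F.du_nonneg i
  | b j i =>
    simp only [defect]
    split_ifs
    · exact (F.block_pos j).le
    · exact le_rfl

lemma defect_affRel (F : D.Fc) (σ : D.Sel) : D.AffRel fun k => (defect F σ k : ℝ) where
  rel₁ := by
    have : ∑ i, F.dv i + ∑ i, F.dy i = 1 + ((D.P + D.Q + 1 : ℕ) : ℤ) * F.dt := by
      cases F <;> simp [Fc.dv, Fc.dy, Fc.dt] <;> ring
    exact_mod_cast this
  rel₂ := by
    have : ∑ i, F.du i + F.dt = ∑ i, F.dy i + 1 := by
      cases F <;> simp [Fc.du, Fc.dy, Fc.dt]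
      ring
    exact_mod_cast this
  rel₃ := by simp [defect]
  rel₄ j := by
    simp [defect]

/-- If all but one term of a sum in a subgroup and the sum belong to the subgroup, so does every
term. -/
lemma mem_of_sum_mem {ι : Type*} [Fintype ι] {A : AddSubgroup ℝ} {f : ι → ℝ} {l : ι}
    (hf : ∀ i, i ≠ l → f i ∈ A) (hsum : ∑ i, f i ∈ A) (i : ι) : f i ∈ A := by
  classical
  by_cases h : i = l
  · subst h
    rw [← Finset.add_sum_erase _ _ (Finset.mem_univ i)] at hsum
    exact (A.add_mem_cancel_right (A.sum_mem fun j hj => hf j (Finset.ne_of_mem_erase hj))).1 hsum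
  · exact hf i h

lemma natCast_mul_mem {A : AddSubgroup ℝ} {a : ℝ} (ha : a ∈ A) (m : ℕ) : (m : ℝ) * a ∈ A := by
  rw [← nsmul_eq_mul]
  exact A.nsmul_mem ha m

lemma HomRel.mem_of_defect {r : D.Vtx → ℝ} (hr : D.HomRel r) (A : AddSubgroup ℝ) (F : D.Fc)
    (σ : D.Sel) (h : ∀ k, defect F σ k = 0 → r k ∈ A) (k : D.Vtx) : r k ∈ A := by
  have h₁ := hr.rel₁
  have h₂ := hr.rel₂
  have h₃ := hr.rel₃
  have main : r .t ∈ A ∧ (∀ i, r (.v i) ∈ A) ∧ (∀ i, r (.y i) ∈ A) ∧ ∀ i, r (.u i) ∈ A := by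
    cases F with
    | N l =>
      have hy : ∀ i, r (.y i) ∈ A := fun i => h _ rfl
      have hu : ∀ i, r (.u i) ∈ A := fun i => h _ rfl
      have ht : r .t ∈ A := by
        have : r .t = ∑ i, r (.y i) - ∑ i, r (.u i) := by linarith
        rw [this]
        exact A.sub_mem (A.sum_mem fun i _ => hy i) (A.sum_mem fun i _ => hu i)
      refine ⟨ht, mem_of_sum_mem (l := l) (fun i hi => h _ ?_) ?_, hy, hu⟩
      · simp [defect, Fc.dv, hi]
      · rw [eq_sub_of_add_eq h₁]
        exact A.sub_mem (natCast_mul_mem ht _) (A.sum_mem fun i _ => hy i)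
    | Tv i₀ l =>
      have hy : ∀ i, r (.y i) ∈ A := fun i => h _ rfl
      have ht : r .t ∈ A := h _ rfl
      refine ⟨ht, mem_of_sum_mem (l := l) (fun i hi => h _ ?_) ?_, hy,
        mem_of_sum_mem (l := i₀) (fun i hi => h _ ?_) ?_⟩
      · simp [defect, Fc.dv, hi]
      · rw [eq_sub_of_add_eq h₁]
        exact A.sub_mem (natCast_mul_mem ht _) (A.sum_mem fun i _ => hy i)
      · simp [defect, Fc.du, hi]
      · rw [eq_sub_of_add_eq h₂.symm]
        exact A.sub_mem (A.sum_mem fun i _ => hy i) ht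
    | Ty i₀ j =>
      have hv : ∀ i, r (.v i) ∈ A := fun i => h _ rfl
      have ht : r .t ∈ A := h _ rfl
      have hy : ∀ i, r (.y i) ∈ A := by
        refine mem_of_sum_mem (l := j) (fun i hi => h _ ?_) ?_
        · simp [defect, Fc.dy, hi]
        · rw [eq_sub_of_add_eq' h₁]
          exact A.sub_mem (natCast_mul_mem ht _) (A.sum_mem fun i _ => hv i)
      refine ⟨ht, hv, hy, mem_of_sum_mem (l := i₀) (fun i hi => h _ ?_) ?_⟩
      · simp [defect, Fc.du, hi]
      · rw [eq_sub_of_add_eq h₂.symm]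
        exact A.sub_mem (A.sum_mem fun i _ => hy i) ht
    | Zv j l =>
      have hu : ∀ i, r (.u i) ∈ A := fun i => h _ rfl
      have ht : r .t ∈ A := by
        have := h .z rfl
        rw [h₃] at this
        exact neg_mem_iff.1 this
      have hy : ∀ i, r (.y i) ∈ A := by
        refine mem_of_sum_mem (l := j) (fun i hi => h _ ?_) ?_
        · simp [defect, Fc.dy, hi]
        · rw [h₂]
          exact A.add_mem (A.sum_mem fun i _ => hu i) ht
      refine ⟨ht, mem_of_sum_mem (l := l) (fun i hi => h _ ?_) ?_, hy, hu⟩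
      · simp [defect, Fc.dv, hi]
      · rw [eq_sub_of_add_eq h₁]
        exact A.sub_mem (natCast_mul_mem ht _) (A.sum_mem fun i _ => hy i)
    | Zu j i₀ =>
      have hv : ∀ i, r (.v i) ∈ A := fun i => h _ rfl
      have ht : r .t ∈ A := by
        have := h .z rfl
        rw [h₃] at this
        exact neg_mem_iff.1 this
      have hy : ∀ i, r (.y i) ∈ A := by
        refine mem_of_sum_mem (l := j) (fun i hi => h _ ?_) ?_
        · simp [defect, Fc.dy, hi]
        · rw [eq_sub_of_add_eq' h₁]
          exact A.sub_mem (natCast_mul_mem ht _) (A.sum_mem fun i _ => hv i)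
      refine ⟨ht, hv, hy, mem_of_sum_mem (l := i₀) (fun i hi => h _ ?_) ?_⟩
      · simp [defect, Fc.du, hi]
      · rw [eq_sub_of_add_eq h₂.symm]
        exact A.sub_mem (A.sum_mem fun i _ => hy i) ht
  obtain ⟨ht, hv, hy, hu⟩ := main
  cases k with
  | t => exact ht
  | z =>
    rw [h₃]
    exact A.neg_mem ht
  | v i => exact hv i
  | y i => exact hy i
  | u i => exact hu i
  | b j i =>
    refine mem_of_sum_mem (f := fun i => r (.b j i)) (l := σ j) (fun i hi => h _ ?_) ?_ i
    · simp [defect, hi]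
    · rw [hr.rel₄ j]
      exact A.add_mem (natCast_mul_mem (hy 0) _) (natCast_mul_mem (hu 0) _)

lemma card_defect_le (F : D.Fc) (σ : D.Sel) :
    Fintype.card {k // defect F σ k = 0} + (3 + D.k) ≤ Fintype.card D.Vtx := by
  obtain ⟨a, ha, ha'⟩ : ∃ a : Fin 3 → D.Vtx, (∀ i, defect F σ (a i) ≠ 0) ∧
      Function.Injective (Sum.elim a fun j => (.b j (σ j) : D.Vtx)) := by
    have hinj : ∀ a : Fin 3 → D.Vtx, a 0 ≠ a 1 → a 0 ≠ a 2 → a 1 ≠ a 2 →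
        (∀ i j i', a i ≠ .b j i') → Function.Injective (Sum.elim a fun j => .b j (σ j)) := by
      intro a h1 h2 h3 h4
      refine Function.Injective.sumElim ?_ ?_ fun i j => h4 i j _
      · intro i j hij
        fin_cases i <;> fin_cases j <;> simp_all
      · intro j j' h
        simp only [Vtx.b.injEq] at h
        exact h.1
    cases F with
    | N l =>
      refine ⟨![.t, .z, .v l], fun i => ?_, hinj _ (by simp) (by simp) (by simp)
        fun i j i' => ?_⟩ <;> fin_cases i <;> simp [defect, Fc.dt, Fc.dv] <;> omega
    | Tv i₀ l =>
      refine ⟨![.z, .v l, .u i₀], fun i => ?_, hinj _ (by simp) (by simp) (by simp)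
        fun i j i' => ?_⟩ <;> fin_cases i <;> simp [defect, Fc.dt, Fc.dv, Fc.du]
    | Ty i₀ l =>
      refine ⟨![.z, .y l, .u i₀], fun i => ?_, hinj _ (by simp) (by simp) (by simp)
        fun i j i' => ?_⟩ <;> fin_cases i <;> simp [defect, Fc.dt, Fc.dy, Fc.du]
    | Zv i₀ l =>
      refine ⟨![.t, .y i₀, .v l], fun i => ?_, hinj _ (by simp) (by simp) (by simp)
        fun i j i' => ?_⟩ <;> fin_cases i <;> simp [defect, Fc.dt, Fc.dy, Fc.dv] <;> omega
    | Zu i₀ l =>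
      refine ⟨![.t, .y i₀, .u l], fun i => ?_, hinj _ (by simp) (by simp) (by simp)
        fun i j i' => ?_⟩ <;> fin_cases i <;> simp [defect, Fc.dt, Fc.dy, Fc.du] <;> omega
  have hne : ∀ m, defect F σ (Sum.elim a (fun j => (.b j (σ j) : D.Vtx)) m) ≠ 0 := by
    rintro (i | j)
    · exact ha i
    · simpa [defect] using (F.block_pos j).ne'
  have := Fintype.card_le_of_injective (α := {k // defect F σ k = 0} ⊕ (Fin 3 ⊕ Fin D.k))
    (Sum.elim Subtype.val (Sum.elim a fun j => .b j (σ j)))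
    (Subtype.val_injective.sumElim ha' fun k m h => hne m (h ▸ k.2))
  simpa using this

/-- Every nonnegative family of defects vanishes only where some facet defect vanishes. -/
lemma AffRel.exists_facet {d : D.Vtx → ℝ} (hd : D.AffRel d) (h0 : ∀ k, 0 ≤ d k) :
    ∃ (F : D.Fc) (σ : D.Sel), ∀ k, d k = 0 → defect F σ k = 0 := by
  have hex : ∀ {m : ℕ} (f : Fin m → ℝ), 0 < ∑ i, f i → ∃ i, 0 < f i := fun f hf => by
    by_contra! h
    exact absurd hf (not_lt.2 (Finset.sum_nonpos fun i _ => h i))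
  have hσ : ∀ j, ∃ i, 0 < d (.b j i) := fun j => by
    apply hex
    rw [hd.rel₄]
    have := h0 (.y 0)
    have := h0 (.u 0)
    positivity
  choose σ hσ using hσ
  have key : ∀ F : D.Fc, (d .t = 0 → F.dt = 0) → (d .z = 0 → F.dt = 2) →
      (∀ i, d (.v i) = 0 → F.dv i = 0) → (∀ i, d (.y i) = 0 → F.dy i = 0) →
      (∀ i, d (.u i) = 0 → F.du i = 0) → ∃ (F : D.Fc) (σ : D.Sel), ∀ k, d k = 0 →
        defect F σ k = 0 := by
    intro F ht hz hv hy hu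
    refine ⟨F, σ, fun k hk => ?_⟩
    cases k with
    | t => exact ht hk
    | z => simp [defect, hz hk]
    | v i => exact hv i hk
    | y i => exact hy i hk
    | u i => exact hu i hk
    | b j i =>
      have : i ≠ σ j := by
        rintro rfl
        exact (hσ j).ne' hk
      simp [defect, this]
  have aux : ∀ {m : ℕ} {f : Fin m → ℝ} {l : Fin m} {c : ℤ}, 0 < f l → ∀ i, f i = 0 →
      (if i = l then c else 0) = 0 := fun hl i hi => by
    rw [if_neg]
    rintro rfl
    exact hl.ne' hi
  have h₁ := hd.rel₁
  have h₂ := hd.rel₂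
  have h₃ := hd.rel₃
  have hsv : 0 ≤ ∑ i, d (.v i) := Finset.sum_nonneg fun i _ => h0 _
  have hsy : 0 ≤ ∑ i, d (.y i) := Finset.sum_nonneg fun i _ => h0 _
  have hsu : 0 ≤ ∑ i, d (.u i) := Finset.sum_nonneg fun i _ => h0 _
  have hc : (0 : ℝ) ≤ ((D.P + D.Q + 1 : ℕ) : ℝ) * d .t := mul_nonneg (Nat.cast_nonneg _) (h0 _)
  rcases (h0 .t).eq_or_lt with ht | ht
  · rw [← ht, mul_zero, add_zero] at h₁
    rw [← ht, add_zero] at h₂ h₃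
    obtain ⟨i, hi⟩ := hex (fun i => d (.u i)) (by linarith)
    by_cases hv : 0 < ∑ i, d (.v i)
    · obtain ⟨l, hl⟩ := hex _ hv
      exact key (.Tv i l) (fun _ => rfl) (fun h => by linarith) (aux hl) (fun _ _ => rfl) (aux hi)
    · obtain ⟨j, hj⟩ := hex (fun i => d (.y i)) (by linarith)
      exact key (.Ty i j) (fun _ => rfl) (fun h => by linarith) (fun _ _ => rfl) (aux hj) (aux hi)
  rcases (h0 .z).eq_or_lt with hz | hz
  · have ht2 : d .t = 2 := by linarith
    obtain ⟨j, hj⟩ := hex (fun i => d (.y i)) (by linarith)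
    by_cases hv : 0 < ∑ i, d (.v i)
    · obtain ⟨l, hl⟩ := hex _ hv
      exact key (.Zv j l) (fun h => by linarith) (fun _ => rfl) (aux hl) (aux hj) (fun _ _ => rfl)
    · have hpos : (1 : ℝ) ≤ ((D.P + D.Q + 1 : ℕ) : ℝ) := by exact_mod_cast Nat.le_add_left 1 _
      rw [ht2] at h₁ h₂
      obtain ⟨i, hi⟩ := hex (fun i => d (.u i)) (by linarith)
      exact key (.Zu j i) (fun h => by linarith) (fun _ => rfl) (fun _ _ => rfl) (aux hj) (aux hi)
  · by_cases hv : 0 < ∑ i, d (.v i)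
    · obtain ⟨l, hl⟩ := hex _ hv
      exact key (.N l) (fun h => by linarith) (fun h => by linarith) (aux hl) (fun _ _ => rfl)
        (fun _ _ => rfl)
    · obtain ⟨j, hj⟩ := hex (fun i => d (.y i)) (by linarith)
      have hpos : (1 : ℝ) ≤ ((D.P + D.Q + 1 : ℕ) : ℝ) := by exact_mod_cast Nat.le_add_left 1 _
      obtain ⟨i, hi⟩ := hex (fun i => d (.u i)) (by nlinarith)
      exact key (.Ty i j) (fun h => by linarith) (fun h => by linarith) (fun _ _ => rfl) (aux hj)
        (aux hi)

end Params

namespace Params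

variable {D : Params} {n : ℕ}

/-- A realization of the vertices by lattice points of `ℝ^n`. -/
structure Model (D : Params) (x : D.Vtx → Fin n → ℝ) : Prop where
  lat : ∀ k, IsLatticePoint (x k)
  homRel : ∀ f : (Fin n → ℝ) →ₗ[ℝ] ℝ, D.HomRel fun k => f (x k)
  gen : ∀ w, IsLatticePoint w → ∃ ω : D.Vtx → ℤ, w = ∑ k, (ω k : ℝ) • x k
  ext : ∀ r, D.HomRel r → ∃ f : (Fin n → ℝ) →ₗ[ℝ] ℝ, ∀ k, f (x k) = r k
  card : n = D.Q + 2 * (D.P + 1) + ∑ j, D.s j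

namespace Model

variable {x : D.Vtx → Fin n → ℝ} (hx : D.Model x)

include hx

lemma two_le : 2 ≤ n := by
  rw [hx.card]
  omega

lemma linear_eq_zero {h : (Fin n → ℝ) →ₗ[ℝ] ℝ} (hh : ∀ k, h (x k) = 0) : h = 0 := by
  ext i
  obtain ⟨ω, hω⟩ := hx.gen (Pi.single i 1) (fun k => by
    rcases eq_or_ne k i with rfl | h
    · exact ⟨1, by simp⟩
    · exact ⟨0, by simp [h]⟩)
  simp [hω, hh]

lemma isLatticeIntegral {h : (Fin n → ℝ) →ₗ[ℝ] ℝ} (hh : ∀ k, ∃ m : ℤ, h (x k) = m) :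
    IsLatticeIntegral h := by
  intro w hw
  obtain ⟨ω, rfl⟩ := hx.gen w hw
  choose m hm using hh
  exact ⟨∑ k, ω k * m k, by simp [hm]⟩

/-- Functionals are determined by their values on the vertices of a facet. -/
lemma linear_eq_zero_of_defect (F : D.Fc) (σ : D.Sel) {h : (Fin n → ℝ) →ₗ[ℝ] ℝ}
    (hh : ∀ k, defect F σ k = 0 → h (x k) = 0) : h = 0 :=
  hx.linear_eq_zero fun k => by
    simpa using (hx.homRel h).mem_of_defect ⊥ F σ (by simpa using hh) k

lemma exists_linear_of_affRel {d : D.Vtx → ℝ} (hd : D.AffRel d) :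
    ∃ f : (Fin n → ℝ) →ₗ[ℝ] ℝ, ∀ k, f (x k) = 1 - d k := hx.ext _ hd.homRel

/-- The functional defining the facet of type `F` with selection `σ`. -/
noncomputable def fn (F : D.Fc) (σ : D.Sel) : (Fin n → ℝ) →ₗ[ℝ] ℝ :=
  (hx.exists_linear_of_affRel (defect_affRel F σ)).choose

lemma fn_apply (F : D.Fc) (σ : D.Sel) (k : D.Vtx) : hx.fn F σ (x k) = 1 - defect F σ k :=
  (hx.exists_linear_of_affRel (defect_affRel F σ)).choose_spec k

lemma fn_le (F : D.Fc) (σ : D.Sel) (k : D.Vtx) : hx.fn F σ (x k) ≤ 1 := by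
  rw [fn_apply]
  have : (0 : ℝ) ≤ defect F σ k := by exact_mod_cast defect_nonneg F σ k
  linarith

lemma fn_eq_one_iff (F : D.Fc) (σ : D.Sel) (k : D.Vtx) :
    hx.fn F σ (x k) = 1 ↔ defect F σ k = 0 := by
  rw [fn_apply, sub_eq_self]
  exact_mod_cast Iff.rfl

lemma isLatticeIntegral_fn (F : D.Fc) (σ : D.Sel) : IsLatticeIntegral (hx.fn F σ) :=
  hx.isLatticeIntegral fun k => ⟨1 - defect F σ k, by simp [fn_apply]⟩

lemma isDetermining (F : D.Fc) (σ : D.Sel) :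
    IsDetermining (Set.range fun k : {k // defect F σ k = 0} => x k) :=
  fun _ hh => hx.linear_eq_zero_of_defect F σ fun k hk => hh _ ⟨⟨k, hk⟩, rfl⟩

omit hx in
lemma le_card_of_isDetermining {ι : Type*} [Fintype ι] {p : ι → Fin n → ℝ}
    (hp : IsDetermining (Set.range p)) : n ≤ Fintype.card ι := by
  rw [isDetermining_iff_span_eq_top] at hp
  have := finrank_range_le_card (R := ℝ) p
  rwa [Set.finrank, hp, finrank_top, Module.finrank_fin_fun] at this

lemma card_defect (F : D.Fc) (σ : D.Sel) : Fintype.card {k // defect F σ k = 0} = n := by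
  refine le_antisymm ?_ (le_card_of_isDetermining (hx.isDetermining F σ))
  have := card_defect_le F σ
  rw [card_vtx, ← hx.card] at this
  omega

lemma isUnimodularBasis (F : D.Fc) (σ : D.Sel) :
    IsUnimodularBasis {p | ∃ k, defect F σ k = 0 ∧ p = x k} := by
  let e : Fin n ≃ {k // defect F σ k = 0} := (Fintype.equivFinOfCardEq (hx.card_defect F σ)).symm
  have hrange : {p | ∃ k, defect F σ k = 0 ∧ p = x k} = Set.range fun i => x (e i) := by
    ext p
    constructor
    · rintro ⟨k, hk, rfl⟩
      exact ⟨e.symm ⟨k, hk⟩, by simp⟩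
    · rintro ⟨i, rfl⟩
      exact ⟨e i, (e i).2, rfl⟩
  rw [hrange]
  refine isUnimodularBasis_range (fun i => hx.lat _) ?_ fun h hh => ?_
  · intro h hh
    refine hx.linear_eq_zero_of_defect F σ fun k hk => hh _ ⟨e.symm ⟨k, hk⟩, by simp⟩
  · refine hx.isLatticeIntegral fun k => ?_
    have := (hx.homRel h).mem_of_defect (Int.castAddHom ℝ).range F σ (fun k hk => by
      obtain ⟨m, hm⟩ := hh (e.symm ⟨k, hk⟩)
      exact ⟨m, by simpa using hm.symm⟩) k
    obtain ⟨m, hm⟩ := this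
    exact ⟨m, hm.symm⟩

lemma injOn_defect (F : D.Fc) (σ : D.Sel) {k k' : D.Vtx} (hk : defect F σ k = 0)
    (hk' : defect F σ k' = 0) (h : x k = x k') : k = k' := by
  classical
  have hcard : n ≤ Fintype.card (Set.range fun k : {k // defect F σ k = 0} => x k) := by
    apply le_card_of_isDetermining (p := Subtype.val)
    rw [Subtype.range_coe]
    exact hx.isDetermining F σ
  have hinj : Function.Injective fun k : {k // defect F σ k = 0} => x k := by
    have h1 : (Finset.univ : Finset {k // defect F σ k = 0}).card ≤
        (Finset.univ.image fun k : {k // defect F σ k = 0} => x k).card := by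
      rw [Finset.card_univ, hx.card_defect F σ]
      convert hcard
      rw [← Set.toFinset_card, Set.toFinset_range]
    have h2 := Finset.card_image_iff.1 (le_antisymm Finset.card_image_le h1)
    simpa using h2
  have := @hinj ⟨k, hk⟩ ⟨k', hk'⟩ h
  simpa using this

omit hx in
lemma exists_defect_eq_zero (k : D.Vtx) : ∃ (F : D.Fc) (σ : D.Sel), defect F σ k = 0 := by
  have : ∀ j, Nontrivial (Fin (D.s j + 1)) := fun j =>
    Fin.nontrivial_iff_two_le.2 (Nat.succ_le_succ (D.hs j))
  have : Nontrivial (Fin (D.Q + 1)) := Fin.nontrivial_iff_two_le.2 (Nat.succ_le_succ D.hQ)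
  cases k with
  | t => exact ⟨.Tv 0 0, fun _ => 0, rfl⟩
  | z => exact ⟨.Zv 0 0, fun _ => 0, rfl⟩
  | v i =>
    obtain ⟨l, hl⟩ := exists_ne i
    exact ⟨.N l, fun _ => 0, by simp [defect, Fc.dv, hl.symm]⟩
  | y i => exact ⟨.N 0, fun _ => 0, rfl⟩
  | u i => exact ⟨.N 0, fun _ => 0, rfl⟩
  | b j i =>
    obtain ⟨l, hl⟩ := exists_ne i
    refine ⟨.N 0, Function.update (fun _ => 0) j l, ?_⟩
    simp [defect, hl.symm]

lemma injective : Function.Injective x := by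
  intro k k' h
  obtain ⟨F, σ, hk⟩ := exists_defect_eq_zero k
  refine hx.injOn_defect F σ hk ?_ h
  rw [← hx.fn_eq_one_iff, ← h, hx.fn_eq_one_iff, hk]

lemma nonpos_linear_eq_zero {f : (Fin n → ℝ) →ₗ[ℝ] ℝ} (hf : ∀ k, f (x k) ≤ 0) : f = 0 := by
  have hr := hx.homRel f
  have h₁ := hr.rel₁
  have h₂ := hr.rel₂
  have h₃ := hr.rel₃
  have aux : ∀ {m : ℕ} {p : Fin m → ℝ}, (∀ i, p i ≤ 0) → 0 ≤ ∑ i, p i → ∀ i, p i = 0 := by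
    intro m p hp hs i
    exact (Finset.sum_eq_zero_iff_of_nonpos fun i _ => hp i).1
      (le_antisymm (Finset.sum_nonpos fun i _ => hp i) hs) i (Finset.mem_univ i)
  have nonpos : ∀ {m : ℕ} {p : Fin m → ℝ}, (∀ i, p i ≤ 0) → ∑ i, p i ≤ 0 := fun hp =>
    Finset.sum_nonpos fun i _ => hp i
  have ht : f (x .t) = 0 := by
    have := hf .t
    have := hf .z
    linarith
  have hv := nonpos fun i => hf (.v i)
  have hy := nonpos fun i => hf (.y i)
  rw [ht, mul_zero] at h₁
  rw [ht, add_zero] at h₂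
  have hv0 := aux (fun i => hf (.v i)) (by linarith)
  have hy0 := aux (fun i => hf (.y i)) (by linarith)
  have hu0 := aux (fun i => hf (.u i)) (by rw [← h₂]; simp [hy0])
  refine hx.linear_eq_zero fun k => ?_
  cases k with
  | t => exact ht
  | z => rw [h₃, ht, neg_zero]
  | v i => exact hv0 i
  | y i => exact hy0 i
  | u i => exact hu0 i
  | b j i => exact aux (fun i => hf (.b j i)) (by rw [hr.rel₄ j, hy0, hu0]; simp) i

lemma zero_mem_interior : (0 : Fin n → ℝ) ∈ interior (convexHull ℝ (Set.range x)) ∧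
    affineSpan ℝ (convexHull ℝ (Set.range x)) = ⊤ :=
  zero_mem_interior_convexHull (by have := hx.two_le; omega) fun _ hf =>
    hx.nonpos_linear_eq_zero fun k => hf _ ⟨k, rfl⟩

lemma isLatticePolytope : IsLatticePolytope (convexHull ℝ (Set.range x)) := by
  classical
  refine ⟨⟨Finset.univ.image x, fun p hp => ?_, by simp⟩, hx.zero_mem_interior.2⟩
  obtain ⟨k, -, rfl⟩ := Finset.mem_image.1 hp
  exact hx.lat k

lemma vertexSet_eq : vertexSet (convexHull ℝ (Set.range x)) = Set.range x := by
  refine (vertexSet_convexHull_subset _).antisymm ?_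
  rintro _ ⟨k, rfl⟩
  obtain ⟨F, σ, hk⟩ := exists_defect_eq_zero k
  obtain ⟨h, h1, h2, -⟩ := (hx.isUnimodularBasis F σ).exists_dual ⟨k, hk, rfl⟩
  by_contra hkv
  have hmem : x k ∈ convexHull ℝ (vertexSet (convexHull ℝ (Set.range x))) := by
    rw [hx.isLatticePolytope.convexHull_vertexSet]
    exact subset_convexHull ℝ _ ⟨k, rfl⟩
  have := linear_eq_zero_on_face (g := hx.fn F σ) (h := h) (fun p hp => ?_) (fun p hp hp1 => ?_)
    hmem ((hx.fn_eq_one_iff F σ k).2 hk)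
  · rw [h1] at this
    exact one_ne_zero this
  · obtain ⟨k', rfl⟩ := vertexSet_convexHull_subset _ hp
    exact hx.fn_le F σ k'
  · have hne : p ≠ x k := fun h => hkv (h ▸ hp)
    obtain ⟨k', rfl⟩ := vertexSet_convexHull_subset _ hp
    exact h2 _ ⟨k', (hx.fn_eq_one_iff F σ k').1 hp1, rfl⟩ hne

lemma isSmoothFano : IsSmoothFano (convexHull ℝ (Set.range x)) := by
  refine ⟨hx.isLatticePolytope, hx.zero_mem_interior.1, fun G hG => ?_⟩
  obtain ⟨g, hg, hGg, hdet⟩ := hG.exists_linear hx.two_le hx.zero_mem_interior.1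
  obtain ⟨F, σ, hF⟩ := (hx.homRel g).affRel.exists_facet fun k => sub_nonneg.2 (hg _ ⟨k, rfl⟩)
  replace hF : ∀ k, g (x k) = 1 → defect F σ k = 0 := fun k hk => hF k (by simp [hk])
  have hcard : n ≤ Fintype.card {k // g (x k) = 1} := by
    apply le_card_of_isDetermining (p := fun k : {k // g (x k) = 1} => x k)
    intro h hh
    refine hdet h ?_
    rintro _ ⟨⟨k, rfl⟩, hk⟩
    exact hh _ ⟨⟨k, hk⟩, rfl⟩
  have hF' : ∀ k, defect F σ k = 0 → g (x k) = 1 := by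
    have hinj := Subtype.impEmbedding _ _ hF
    have hbij := (Fintype.bijective_iff_injective_and_card (Subtype.impEmbedding _ _ hF)).2
      ⟨(Subtype.impEmbedding _ _ hF).injective,
        le_antisymm (Fintype.card_le_of_embedding hinj) (by rwa [hx.card_defect F σ])⟩
    intro k hk
    obtain ⟨⟨k', hk'⟩, h⟩ := hbij.2 ⟨k, hk⟩
    have : k' = k := congrArg Subtype.val h
    exact this ▸ hk'
  convert hx.isUnimodularBasis F σ using 1
  rw [hx.vertexSet_eq, hGg]
  ext p
  constructor
  · rintro ⟨⟨k, rfl⟩, -, hk⟩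
    exact ⟨k, hF k hk, rfl⟩
  · rintro ⟨k, hk, rfl⟩
    exact ⟨⟨k, rfl⟩, subset_convexHull ℝ _ ⟨k, rfl⟩, hF' k hk⟩

lemma ncard_vertexSet : (vertexSet (convexHull ℝ (Set.range x))).ncard = n + (3 + D.k) := by
  rw [hx.vertexSet_eq, ← Nat.card_coe_set_eq, Nat.card_range_of_injective hx.injective,
    Nat.card_eq_fintype_card, card_vtx, ← hx.card]

end Model

end Params

namespace Params

variable {D : Params} {n : ℕ}

/-- The family of reals with prescribed values on each group of vertices. -/
def parts (D : Params) (t z : ℝ) (v : Fin (D.Q + 1) → ℝ) (y u : Fin (D.P + 1) → ℝ)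
    (b : ∀ j, Fin (D.s j + 1) → ℝ) : D.Vtx → ℝ
  | .t => t
  | .z => z
  | .v i => v i
  | .y i => y i
  | .u i => u i
  | .b j i => b j i

/-- The numerical conditions under which no vertex can be removed. -/
def Rigid (D : Params) : Prop :=
  (1 ≤ D.P ∧ D.k = 0) ∨
    (D.P = 0 ∧ (∀ j, D.α j ≤ 1 ∧ D.β j ≤ 1) ∧ (∃ j, D.α j = 1) ∧ ∃ j, D.β j = 1)

lemma eq_zero_of_sum_eq_zero {ι : Type*} [Fintype ι] {f : ι → ℝ} {l : ι}
    (hf : ∀ i, i ≠ l → f i = 0) (hsum : ∑ i, f i = 0) (i : ι) : f i = 0 := by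
  have := mem_of_sum_mem (A := ⊥) (f := f) (l := l) (by simpa using hf) (by simpa using hsum) i
  simpa using this

namespace Model

variable {x : D.Vtx → Fin n → ℝ} (hx : D.Model x) {R : Set (Fin n → ℝ)} (hR : IsSmoothFano R)
  {k₀ : D.Vtx} (hV : ∀ p, p ∈ vertexSet R ↔ ∃ k, k ≠ k₀ ∧ p = x k)

include hx hR hV

lemma false_of_nonneg {r : D.Vtx → ℝ} (hr : D.HomRel r) (h0 : ∀ k, k ≠ k₀ → 0 ≤ r k) {k : D.Vtx}
    (hk : r k ≠ 0) : False := by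
  obtain ⟨f, hf⟩ := hx.ext r hr
  have := hR.linear_eq_zero (f := f) fun p hp => by
    obtain ⟨k, hk, rfl⟩ := (hV p).1 hp
    rw [hf]
    exact h0 k hk
  apply hk
  rw [← hf, this, LinearMap.zero_apply]

lemma exists_dual_of_defect {d : D.Vtx → ℝ} (hd : D.AffRel d) (h0 : ∀ k, k ≠ k₀ → 0 ≤ d k)
    (hdet : ∀ r, D.HomRel r → (∀ k, k ≠ k₀ → d k = 0 → r k = 0) → ∀ k, r k = 0) {k₁ : D.Vtx}
    (hk₁ : k₁ ≠ k₀) (hd₁ : d k₁ = 0) :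
    ∃ r, D.HomRel r ∧ r k₁ = 1 ∧ (∀ k, k ≠ k₀ → d k = 0 → k ≠ k₁ → r k = 0) ∧
      ∀ k, ∃ m : ℤ, r k = m := by
  obtain ⟨g, hg⟩ := hx.exists_linear_of_affRel hd
  obtain ⟨h, h1, h2, h3⟩ := hR.exists_dual (g := g) (fun p hp => by
      obtain ⟨k, hk, rfl⟩ := (hV p).1 hp
      rw [hg]
      linarith [h0 k hk]) (fun h hh => hx.linear_eq_zero fun k =>
        hdet _ (hx.homRel h) (fun k hk hdk => hh _ ⟨(hV _).2 ⟨k, hk, rfl⟩, by rw [hg, hdk]; ring⟩) k)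
      ((hV _).2 ⟨k₁, hk₁, rfl⟩) (by rw [hg, hd₁]; ring)
  refine ⟨fun k => h (x k), hx.homRel h, h1, fun k hk hdk hk₁ => ?_, fun k => h3 _ (hx.lat k)⟩
  exact h2 _ ((hV _).2 ⟨k, hk, rfl⟩) (by rw [hg, hdk]; ring) fun h => hk₁ (hx.injective h)

end Model

namespace Model

variable {x : D.Vtx → Fin n → ℝ} (hx : D.Model x) {R : Set (Fin n → ℝ)} (hR : IsSmoothFano R)

include hx hR

lemma not_remove_v (i : Fin (D.Q + 1)) :
    ¬ ∀ p, p ∈ vertexSet R ↔ ∃ k, k ≠ .v i ∧ p = x k := by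
  intro hV
  have : Nontrivial (Fin (D.Q + 1)) := Fin.nontrivial_iff_two_le.2 (Nat.succ_le_succ D.hQ)
  obtain ⟨l, hl⟩ := exists_ne i
  refine hx.false_of_nonneg hR hV (r := parts D 0 0
    (fun m => (if m = l then 1 else 0) - if m = i then 1 else 0) 0 0 0)
    ⟨by simp [parts], by simp [parts], by simp [parts], by simp [parts]⟩ ?_
    (k := .v l) (by simp [parts, hl])
  rintro (_ | _ | m | m | m | ⟨j, m⟩) hm
  case v =>
    have : m ≠ i := fun h => hm (h ▸ rfl)
    simp only [parts, this, if_false]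
    split_ifs <;> simp
  all_goals simp [parts]

lemma not_remove_b (j : Fin D.k) (i : Fin (D.s j + 1)) :
    ¬ ∀ p, p ∈ vertexSet R ↔ ∃ k, k ≠ .b j i ∧ p = x k := by
  intro hV
  have : Nontrivial (Fin (D.s j + 1)) := Fin.nontrivial_iff_two_le.2 (Nat.succ_le_succ (D.hs j))
  obtain ⟨l, hl⟩ := exists_ne i
  refine hx.false_of_nonneg hR hV (r := parts D 0 0 0 0 0
    (Function.update (fun _ _ => 0) j
      (fun m => (if m = l then 1 else 0) - if m = i then 1 else 0)))
    ⟨by simp [parts], by simp [parts], by simp [parts], ?_⟩ ?_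
    (k := .b j l) (by simp [parts, hl])
  · intro j'
    rcases eq_or_ne j' j with rfl | h
    · simp [parts]
    · simp [parts, h]
  rintro (_ | _ | m | m | m | ⟨j', m⟩) hm
  case b =>
    rcases eq_or_ne j' j with rfl | h
    · have : m ≠ i := fun h => hm (h ▸ rfl)
      simp only [parts, Function.update_self, this, if_false]
      split_ifs <;> simp
    · simp [parts, h]
  all_goals simp [parts]

lemma not_remove_y_of_k (hP : 1 ≤ D.P) (hk : D.k = 0) (i : Fin (D.P + 1)) :
    ¬ ∀ p, p ∈ vertexSet R ↔ ∃ k, k ≠ .y i ∧ p = x k := by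
  intro hV
  have : Nontrivial (Fin (D.P + 1)) := Fin.nontrivial_iff_two_le.2 (Nat.succ_le_succ hP)
  have : IsEmpty (Fin D.k) := by rw [hk]; infer_instance
  obtain ⟨l, hl⟩ := exists_ne i
  refine hx.false_of_nonneg hR hV (r := parts D 0 0 0
    (fun m => (if m = l then 1 else 0) - if m = i then 1 else 0) 0 0)
    ⟨by simp [parts], by simp [parts], by simp [parts], fun j => isEmptyElim j⟩ ?_
    (k := .y l) (by simp [parts, hl])
  rintro (_ | _ | m | m | m | ⟨j, m⟩) hm
  case y =>
    have : m ≠ i := fun h => hm (h ▸ rfl)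
    simp only [parts, this, if_false]
    split_ifs <;> simp
  all_goals simp [parts]

lemma not_remove_u_of_k (hP : 1 ≤ D.P) (hk : D.k = 0) (i : Fin (D.P + 1)) :
    ¬ ∀ p, p ∈ vertexSet R ↔ ∃ k, k ≠ .u i ∧ p = x k := by
  intro hV
  have : Nontrivial (Fin (D.P + 1)) := Fin.nontrivial_iff_two_le.2 (Nat.succ_le_succ hP)
  have : IsEmpty (Fin D.k) := by rw [hk]; infer_instance
  obtain ⟨l, hl⟩ := exists_ne i
  refine hx.false_of_nonneg hR hV (r := parts D 0 0 0 0
    (fun m => (if m = l then 1 else 0) - if m = i then 1 else 0) 0)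
    ⟨by simp [parts], by simp [parts], by simp [parts], fun j => isEmptyElim j⟩ ?_
    (k := .u l) (by simp [parts, hl])
  rintro (_ | _ | m | m | m | ⟨j, m⟩) hm
  case u =>
    have : m ≠ i := fun h => hm (h ▸ rfl)
    simp only [parts, this, if_false]
    split_ifs <;> simp
  all_goals simp [parts]

lemma not_remove_z : ¬ ∀ p, p ∈ vertexSet R ↔ ∃ k, k ≠ .z ∧ p = x k := by
  intro hV
  refine hx.false_of_nonneg hR hV (r := parts D 1 (-1)
    (fun m => if m = 0 then D.P + D.Q else 0) (fun m => if m = 0 then 1 else 0) 0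
    (fun j m => if m = 0 then D.α j else 0))
    ⟨by simp [parts], by simp [parts], by simp [parts], by simp [parts]⟩ ?_
    (k := .t) (by simp [parts])
  rintro (_ | _ | m | m | m | ⟨j, m⟩) hm
  case z => exact absurd rfl hm
  all_goals simp only [parts, Pi.zero_apply] <;> (try split_ifs) <;> positivity

lemma not_remove_t : ¬ ∀ p, p ∈ vertexSet R ↔ ∃ k, k ≠ .t ∧ p = x k := by
  intro hV
  have hc : (0 : ℝ) < ((D.P + D.Q + 1 : ℕ) : ℝ) := by positivity
  have hci : (0 : ℝ) < ((D.P + D.Q + 1 : ℕ) : ℝ)⁻¹ := inv_pos.2 hc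
  have key := hx.exists_dual_of_defect hR hV
    (d := parts D (-((D.P + D.Q + 1 : ℕ) : ℝ)⁻¹) (2 + ((D.P + D.Q + 1 : ℕ) : ℝ)⁻¹) 0 0
      (fun m => if m = 0 then 1 + ((D.P + D.Q + 1 : ℕ) : ℝ)⁻¹ else 0)
      (fun j m => if m = 0 then 1 + D.β j * (1 + ((D.P + D.Q + 1 : ℕ) : ℝ)⁻¹) else 0))
    ⟨by simp only [parts, mul_neg, mul_inv_cancel₀ hc.ne']; simp, by simp [parts],
      by simp [parts], by simp [parts]⟩ ?_ ?_ (k₁ := .v 0) (by simp) (by simp [parts])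
  · obtain ⟨r, hr, hr1, hr0, h_int⟩ := key
    have h₁ := hr.rel₁
    rw [Finset.sum_eq_single 0 (fun i _ hi => hr0 (.v i) (by simp) (by simp [parts])
      (by simpa using hi)) (by simp), hr1,
      Finset.sum_eq_zero fun i _ => hr0 (.y i) (by simp) (by simp [parts]) (by simp)] at h₁
    obtain ⟨m, hm⟩ := h_int .t
    rw [hm, add_zero] at h₁
    have h2 : ((D.P + D.Q + 1 : ℕ) : ℤ) * m = 1 := by exact_mod_cast h₁.symm
    have hQ := D.hQ
    rcases Int.eq_one_or_neg_one_of_mul_eq_one h2 with h | h <;> omega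
  · rintro (_ | _ | m | m | m | ⟨j, m⟩) hm
    case t => exact absurd rfl hm
    all_goals simp only [parts, Pi.zero_apply] <;> (try split_ifs) <;> positivity
  · intro r hr h
    have hv : ∀ i, r (.v i) = 0 := fun i => h _ (by simp) (by simp [parts])
    have hy : ∀ i, r (.y i) = 0 := fun i => h _ (by simp) (by simp [parts])
    have ht : r .t = 0 := by
      have h₁ := hr.rel₁
      simp only [hv, hy, Finset.sum_const_zero, add_zero] at h₁
      exact (mul_eq_zero.1 h₁.symm).resolve_left hc.ne'
    have hu : ∀ i, r (.u i) = 0 :=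
      eq_zero_of_sum_eq_zero (l := 0) (fun i hi => h _ (by simp) (by simp [parts, hi]))
        (by have h₂ := hr.rel₂; simp only [hy, ht, Finset.sum_const_zero, add_zero] at h₂
            exact h₂.symm)
    rintro (_ | _ | m | m | m | ⟨j, m⟩)
    · exact ht
    · rw [hr.rel₃, ht, neg_zero]
    · exact hv m
    · exact hy m
    · exact hu m
    · exact eq_zero_of_sum_eq_zero (f := fun m => r (.b j m)) (l := 0)
        (fun i hi => h _ (by simp) (by simp [parts, hi])) (by rw [hr.rel₄]; simp [hy, hu]) m

section

variable (hP : D.P = 0) (h1 : ∀ j, D.α j ≤ 1 ∧ D.β j ≤ 1)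

include hP h1

lemma not_remove_y (hα : ∃ j, D.α j = 1) (i : Fin (D.P + 1)) :
    ¬ ∀ p, p ∈ vertexSet R ↔ ∃ k, k ≠ .y i ∧ p = x k := by
  intro hV
  have : Subsingleton (Fin (D.P + 1)) := Fin.subsingleton_iff_le_one.2 (by omega)
  obtain rfl : i = 0 := Subsingleton.elim _ _
  have hsum : ∀ f : Fin (D.P + 1) → ℝ, ∑ i, f i = f 0 := fun f =>
    Fintype.sum_subsingleton f 0
  obtain ⟨j₀, hj₀⟩ := hα
  have key := hx.exists_dual_of_defect hR hV
    (d := parts D 0 2 (fun m => if m = 0 then 2 else 0) (fun _ => -1) 0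
      (fun j m => if m = 0 then 1 - D.α j else 0))
    ⟨by simp [parts, hsum]; norm_num, by simp [parts, hsum], by simp [parts],
      by simp [parts]; intro j; ring⟩ ?_ ?_ (k₁ := .t) (by simp) (by simp [parts])
  · obtain ⟨r, hr, hr1, hr0, -⟩ := key
    have h₂ := hr.rel₂
    have h₄ := hr.rel₄ j₀
    have hu : r (.u 0) = 0 := hr0 _ (by simp) (by simp [parts]) (by simp)
    rw [Finset.sum_eq_zero fun i _ => hr0 (.b j₀ i) (by simp) (by simp [parts, hj₀])
      (by simp), hu, hj₀] at h₄
    rw [hsum, hsum, hr1, hu] at h₂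
    norm_num at h₄
    linarith
  · rintro (_ | _ | m | m | m | ⟨j, m⟩) hm
    case y => exact absurd (congrArg _ (Subsingleton.elim _ _)) hm
    case b =>
      simp only [parts]
      split_ifs
      · have : (D.α j : ℝ) ≤ 1 := by exact_mod_cast (h1 j).1
        linarith
      · exact le_rfl
    all_goals simp only [parts, Pi.zero_apply] <;> (try split_ifs) <;> positivity
  · intro r hr h
    have ht : r .t = 0 := h _ (by simp) (by simp [parts])
    have hu : ∀ i, r (.u i) = 0 := fun i => h _ (by simp) (by simp [parts])
    have hy : ∀ i, r (.y i) = 0 := fun i => by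
      have h₂ := hr.rel₂
      rw [hsum, hsum, hu, ht, add_zero] at h₂
      rwa [Subsingleton.elim i 0]
    rintro (_ | _ | m | m | m | ⟨j, m⟩)
    · exact ht
    · rw [hr.rel₃, ht, neg_zero]
    · exact eq_zero_of_sum_eq_zero (f := fun m => r (.v m)) (l := 0)
        (fun i hi => h _ (by simp) (by simp [parts, hi]))
        (by have h₁ := hr.rel₁; rw [hsum, hy, ht] at h₁; simpa using h₁) m
    · exact hy m
    · exact hu m
    · exact eq_zero_of_sum_eq_zero (f := fun m => r (.b j m)) (l := 0)
        (fun i hi => h _ (by simp) (by simp [parts, hi])) (by rw [hr.rel₄]; simp [hy, hu]) m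

lemma not_remove_u (hβ : ∃ j, D.β j = 1) (i : Fin (D.P + 1)) :
    ¬ ∀ p, p ∈ vertexSet R ↔ ∃ k, k ≠ .u i ∧ p = x k := by
  intro hV
  have : Subsingleton (Fin (D.P + 1)) := Fin.subsingleton_iff_le_one.2 (by omega)
  obtain rfl : i = 0 := Subsingleton.elim _ _
  have hsum : ∀ f : Fin (D.P + 1) → ℝ, ∑ i, f i = f 0 := fun f =>
    Fintype.sum_subsingleton f 0
  obtain ⟨j₀, hj₀⟩ := hβ
  have key := hx.exists_dual_of_defect hR hV
    (d := parts D 2 0 (fun m => if m = 0 then 1 + ((D.P + D.Q + 1 : ℕ) : ℝ) * 2 else 0) 0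
      (fun _ => -1) (fun j m => if m = 0 then 1 - D.β j else 0))
    ⟨by simp [parts], by simp [parts, hsum]; norm_num, by simp [parts],
      by simp [parts]; intro j; ring⟩ ?_ ?_ (k₁ := .z) (by simp) (by simp [parts])
  · obtain ⟨r, hr, hr1, hr0, -⟩ := key
    have h₂ := hr.rel₂
    have h₃ := hr.rel₃
    have h₄ := hr.rel₄ j₀
    have hy : r (.y 0) = 0 := hr0 _ (by simp) (by simp [parts]) (by simp)
    rw [Finset.sum_eq_zero fun i _ => hr0 (.b j₀ i) (by simp) (by simp [parts, hj₀])
      (by simp), hy, hj₀] at h₄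
    rw [hsum, hsum, hy] at h₂
    norm_num at h₄
    linarith
  · rintro (_ | _ | m | m | m | ⟨j, m⟩) hm
    case u => exact absurd (congrArg _ (Subsingleton.elim _ _)) hm
    case b =>
      simp only [parts]
      split_ifs
      · have : (D.β j : ℝ) ≤ 1 := by exact_mod_cast (h1 j).2
        linarith
      · exact le_rfl
    all_goals simp only [parts, Pi.zero_apply] <;> (try split_ifs) <;> positivity
  · intro r hr h
    have ht : r .t = 0 := by
      have h₃ := hr.rel₃
      rw [h .z (by simp) (by simp [parts])] at h₃
      linarith
    have hy : ∀ i, r (.y i) = 0 := fun i => h _ (by simp) (by simp [parts])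
    have hu : ∀ i, r (.u i) = 0 := fun i => by
      have h₂ := hr.rel₂
      rw [hsum, hsum, hy, ht, add_zero] at h₂
      rw [Subsingleton.elim i 0, h₂]
    rintro (_ | _ | m | m | m | ⟨j, m⟩)
    · exact ht
    · rw [hr.rel₃, ht, neg_zero]
    · exact eq_zero_of_sum_eq_zero (f := fun m => r (.v m)) (l := 0)
        (fun i hi => h _ (by simp) (by simp [parts, hi]))
        (by have h₁ := hr.rel₁; rw [hsum, hy, ht] at h₁; simpa using h₁) m
    · exact hy m
    · exact hu m
    · exact eq_zero_of_sum_eq_zero (f := fun m => r (.b j m)) (l := 0)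
        (fun i hi => h _ (by simp) (by simp [parts, hi])) (by rw [hr.rel₄]; simp [hy, hu]) m

end

lemma not_remove (hD : D.Rigid) (k₀ : D.Vtx) :
    ¬ ∀ p, p ∈ vertexSet R ↔ ∃ k, k ≠ k₀ ∧ p = x k := by
  cases k₀ with
  | t => exact hx.not_remove_t hR
  | z => exact hx.not_remove_z hR
  | v i => exact hx.not_remove_v hR i
  | y i =>
    rcases hD with ⟨hP, hk⟩ | ⟨hP, h1, hα, -⟩
    · exact hx.not_remove_y_of_k hR hP hk i
    · exact hx.not_remove_y hR hP h1 hα i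
  | u i =>
    rcases hD with ⟨hP, hk⟩ | ⟨hP, h1, -, hβ⟩
    · exact hx.not_remove_u_of_k hR hP hk i
    · exact hx.not_remove_u hR hP h1 hβ i
  | b j i => exact hx.not_remove_b hR j i

end Model

end Params

namespace Params

variable {D : Params} {n : ℕ}

namespace Model

variable {x : D.Vtx → Fin n → ℝ} (hx : D.Model x)

include hx

lemma sum_v_add_sum_y : ∑ i, x (.v i) + ∑ i, x (.y i) = ((D.P + D.Q + 1 : ℕ) : ℝ) • x .t := by
  ext c
  simpa using (hx.homRel (LinearMap.proj c)).rel₁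

lemma sum_y : ∑ i, x (.y i) = ∑ i, x (.u i) + x .t := by
  ext c
  simpa using (hx.homRel (LinearMap.proj c)).rel₂

lemma x_z : x .z = -x .t := by
  ext c
  simpa using (hx.homRel (LinearMap.proj c)).rel₃

lemma sum_b (j : Fin D.k) :
    ∑ i, x (.b j i) = (D.α j : ℝ) • x (.y 0) + (D.β j : ℝ) • x (.u 0) := by
  ext c
  simpa using (hx.homRel (LinearMap.proj c)).rel₄ j

/-- Every lattice point is a combination of the vertices of a facet containing `t`, with
nonnegative coefficients except possibly that of `t`. -/
lemma exists_coeff {w : Fin n → ℝ} (hw : IsLatticePoint w) :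
    ∃ (F : D.Fc) (σ : D.Sel) (ω : D.Vtx → ℤ), ((∃ i l, F = .Tv i l) ∨ ∃ i j, F = .Ty i j) ∧
      w = ∑ k, (ω k : ℝ) • x k ∧ (∀ k, k ≠ .t → 0 ≤ ω k) ∧ ∀ k, defect F σ k ≠ 0 → ω k = 0 := by
  obtain ⟨ω, rfl⟩ := hx.gen w hw
  choose σ hσ using fun j => Finite.exists_min fun i => ω (.b j i)
  let cy : Fin (D.P + 1) → ℤ := fun i => if i = 0 then ∑ j, D.α j * ω (.b j (σ j)) else 0
  let cu : Fin (D.P + 1) → ℤ := fun i => if i = 0 then ∑ j, D.β j * ω (.b j (σ j)) else 0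
  obtain ⟨iu, hiu⟩ := Finite.exists_min fun i => ω (.u i) + cu i
  let mu := ω (.u iu) + cu iu
  obtain ⟨l, hl⟩ := Finite.exists_min
    (Sum.elim (fun i => ω (.v i)) fun i => ω (.y i) + cy i + mu)
  let mv := Sum.elim (fun i => ω (.v i)) (fun i => ω (.y i) + cy i + mu) l
  let ω' : D.Vtx → ℤ := fun k => match k with
    | .t => ω .t - ω .z - mu + (D.P + D.Q + 1 : ℕ) * mv
    | .z => 0
    | .v i => ω (.v i) - mv
    | .y i => ω (.y i) + cy i + mu - mv
    | .u i => ω (.u i) + cu i - mu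
    | .b j i => ω (.b j i) - ω (.b j (σ j))
  have hsum : ∑ k, (ω k : ℝ) • x k = ∑ k, (ω' k : ℝ) • x k := by
    have hcy : ∑ i, (cy i : ℝ) • x (.y i) = ∑ j, (ω (.b j (σ j)) : ℝ) • (D.α j : ℝ) • x (.y 0) := by
      rw [Finset.sum_eq_single 0 (by simp +contextual [cy]) (by simp)]
      simp only [cy, if_true, Int.cast_sum, Finset.sum_smul, smul_smul]
      exact Finset.sum_congr rfl fun j _ => by push_cast; rw [mul_comm]
    have hcu : ∑ i, (cu i : ℝ) • x (.u i) = ∑ j, (ω (.b j (σ j)) : ℝ) • (D.β j : ℝ) • x (.u 0) := by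
      rw [Finset.sum_eq_single 0 (by simp +contextual [cu]) (by simp)]
      simp only [cu, if_true, Int.cast_sum, Finset.sum_smul, smul_smul]
      exact Finset.sum_congr rfl fun j _ => by push_cast; rw [mul_comm]
    have hb : ∑ j, (ω (.b j (σ j)) : ℝ) • ∑ i, x (.b j i) =
        ∑ i, (cy i : ℝ) • x (.y i) + ∑ i, (cu i : ℝ) • x (.u i) := by
      simp only [hx.sum_b, smul_add, Finset.sum_add_distrib, hcy, hcu]
    have hv : (mv : ℝ) • ∑ i, x (.v i) =
        (mv : ℝ) • ((D.P + D.Q + 1 : ℕ) : ℝ) • x .t - (mv : ℝ) • ∑ i, x (.y i) := by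
      rw [← hx.sum_v_add_sum_y, smul_add, add_sub_cancel_right]
    have hu : (mu : ℝ) • ∑ i, x (.u i) = (mu : ℝ) • ∑ i, x (.y i) - (mu : ℝ) • x .t := by
      rw [hx.sum_y, smul_add, add_sub_cancel_right]
    rw [sum_vtx, sum_vtx]
    simp only [ω', Int.cast_sub, Int.cast_add, Int.cast_zero, zero_smul, sub_smul,
      add_smul, Finset.sum_sub_distrib, Finset.sum_add_distrib, ← Finset.smul_sum, hx.x_z, hb, hv,
      hu, Int.cast_mul, Int.cast_natCast, mul_smul, smul_neg]
    rw [smul_comm (mv : ℝ) ((D.P + D.Q + 1 : ℕ) : ℝ)]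
    abel
  rw [hsum]
  have hnn : ∀ k, k ≠ .t → 0 ≤ ω' k := by
    rintro (_ | _ | m | m | m | ⟨j, m⟩) hm
    · exact absurd rfl hm
    · exact le_rfl
    · exact sub_nonneg.2 (hl (.inl m))
    · exact sub_nonneg.2 (hl (.inr m))
    · exact sub_nonneg.2 (hiu m)
    · exact sub_nonneg.2 (hσ j m)
  have hb0 : ∀ (F : D.Fc) j i, defect F σ (.b j i) ≠ 0 → ω' (.b j i) = 0 := by
    intro F j i h
    have : i = σ j := by
      by_contra h'
      simp [defect, h'] at h
    subst this
    exact sub_self _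
  have hu0 : ω' (.u iu) = 0 := sub_self _
  rcases l with l | l
  · have hv0 : ω' (.v l) = 0 := sub_self _
    refine ⟨.Tv iu l, σ, ω', .inl ⟨_, _, rfl⟩, rfl, hnn, ?_⟩
    rintro (_ | _ | m | m | m | ⟨j, m⟩) hm
    case b => exact hb0 _ j m hm
    case z => rfl
    all_goals simp [defect, Fc.dt, Fc.dv, Fc.dy, Fc.du] at hm
    · exact hm ▸ hv0
    · exact hm ▸ hu0
  · have hy0 : ω' (.y l) = 0 := sub_self _
    refine ⟨.Ty iu l, σ, ω', .inr ⟨_, _, rfl⟩, rfl, hnn, ?_⟩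
    rintro (_ | _ | m | m | m | ⟨j, m⟩) hm
    case b => exact hb0 _ j m hm
    case z => rfl
    all_goals simp [defect, Fc.dt, Fc.dv, Fc.dy, Fc.du] at hm
    · exact hm ▸ hy0
    · exact hm ▸ hu0

lemma fn_sum (F : D.Fc) (σ : D.Sel) (ω : D.Vtx → ℤ) :
    hx.fn F σ (∑ k, (ω k : ℝ) • x k) = ((∑ k, ω k * (1 - defect F σ k) : ℤ) : ℝ) := by
  simp [fn_apply]

omit hx in
lemma one_le_sum {F : D.Fc} {σ : D.Sel} {ω : D.Vtx → ℤ} (hF : F.dt = 2) (ht : ω .t < 0)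
    (h0 : ∀ k, k ≠ .t → 0 ≤ ω k) (h : ∀ k, k ≠ .t → ω k ≠ 0 → defect F σ k ≤ 1) :
    1 ≤ ∑ k, ω k * (1 - defect F σ k) := by
  rw [← Finset.add_sum_erase _ _ (Finset.mem_univ Vtx.t)]
  have h1 : 0 ≤ ∑ k ∈ Finset.univ.erase Vtx.t, ω k * (1 - defect F σ k) := by
    refine Finset.sum_nonneg fun k hk => ?_
    have hk := Finset.ne_of_mem_erase hk
    by_cases hω : ω k = 0
    · simp [hω]
    · exact mul_nonneg (h0 k hk) (sub_nonneg.2 (h k hk hω))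
  have h2 : defect F σ .t = 2 := hF
  rw [h2]
  linarith

omit hx in
lemma sum_mul_eq_sum {F : D.Fc} {σ : D.Sel} {ω : D.Vtx → ℤ}
    (h : ∀ k, defect F σ k ≠ 0 → ω k = 0) : ∑ k, ω k * (1 - defect F σ k) = ∑ k, ω k := by
  refine Finset.sum_congr rfl fun k _ => ?_
  by_cases hk : defect F σ k = 0
  · simp [hk]
  · simp [h k hk]

/-- A nonzero lattice point beyond no facet of type `Tv`, `Ty` or `Zv` lies beyond a facet of
type `Zu`, deeply below an adjacent facet of type `Ty`. -/
lemma exists_Zu_of_nonpos {w : Fin n → ℝ} (hw : IsLatticePoint w) (hw0 : w ≠ 0)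
    (hTv : ∀ i l σ, hx.fn (.Tv i l) σ w ≤ 0) (hTy : ∀ i j σ, hx.fn (.Ty i j) σ w ≤ 0)
    (hZv : ∀ j l σ, hx.fn (.Zv j l) σ w ≤ 0) :
    ∃ (i j : Fin (D.P + 1)) (σ : D.Sel) (c : ℤ), 2 ≤ c ∧ 0 < hx.fn (.Zu j i) σ w ∧
      hx.fn (.Zu j i) σ w - hx.fn (.Ty i j) σ w = 2 * c := by
  obtain ⟨F, σ, ω, hF, rfl, hnn, hω⟩ := hx.exists_coeff hw
  have hFle : ∑ k, ω k ≤ 0 := by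
    have h1 : hx.fn F σ (∑ k, (ω k : ℝ) • x k) ≤ 0 := by
      rcases hF with ⟨i, l, rfl⟩ | ⟨i, j, rfl⟩
      · exact hTv i l σ
      · exact hTy i j σ
    rw [fn_sum, sum_mul_eq_sum hω] at h1
    exact_mod_cast h1
  have ht : ω .t < 0 := by
    by_contra! ht
    have hnn' : ∀ k ∈ Finset.univ, 0 ≤ ω k := fun k _ => by
      by_cases h : k = .t
      · exact h ▸ ht
      · exact hnn k h
    have := (Finset.sum_eq_zero_iff_of_nonneg hnn').1 (le_antisymm hFle (Finset.sum_nonneg hnn'))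
    apply hw0
    exact Finset.sum_eq_zero fun k hk => by simp [this k hk]
  have hZv' : ∀ j l, ¬ ∀ k, k ≠ .t → ω k ≠ 0 → defect (.Zv j l) σ k ≤ 1 := by
    intro j l h
    have h1 := hZv j l σ
    rw [fn_sum] at h1
    have h2 : ∑ k, ω k * (1 - defect (.Zv j l) σ k) ≤ 0 := by exact_mod_cast h1
    have := one_le_sum (F := .Zv j l) (σ := σ) rfl ht hnn h
    omega
  have hb : ∀ F' j m, ω (.b j m) ≠ 0 → defect F' σ (.b j m) = 0 := by
    intro F' j m h
    have : m ≠ σ j := by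
      rintro rfl
      exact h (hω _ (by simpa [defect] using (F.block_pos j).ne'))
    simp [defect, this]
  have hz : ω .z = 0 := by
    rcases hF with ⟨i, l, rfl⟩ | ⟨i, j, rfl⟩ <;> exact hω _ (by simp [defect, Fc.dt])
  rcases hF with ⟨i, l, rfl⟩ | ⟨i, j, rfl⟩
  · exfalso
    refine hZv' 0 l ?_
    rintro (_ | _ | m | m | m | ⟨j', m⟩) hm h
    case v =>
      have : m ≠ l := by
        rintro rfl
        exact h (hω _ (by simp [defect, Fc.dv]))
      simp [defect, Fc.dv, this]
    case y =>
      simp only [defect, Fc.dy]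
      split_ifs <;> simp
    case b => simp [hb _ _ _ h]
    case t => exact absurd rfl hm
    all_goals simp [defect, Fc.dt, Fc.du]
  have hyj : ω (.y j) = 0 := hω _ (by simp [defect, Fc.dy])
  have hui : ω (.u i) = 0 := hω _ (by simp [defect, Fc.du])
  have hv : ∀ l, 1 ≤ ω (.v l) := by
    intro l
    by_contra! hl
    have hl0 : ω (.v l) = 0 := le_antisymm (by omega) (hnn _ (by simp))
    refine hZv' j l ?_
    rintro (_ | _ | m | m | m | ⟨j', m⟩) hm h
    case v =>
      have : m ≠ l := by
        rintro rfl
        exact h hl0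
      simp [defect, Fc.dv, this]
    case y =>
      simp only [defect, Fc.dy]
      split_ifs <;> simp
    case b => simp [hb _ _ _ h]
    case t => exact absurd rfl hm
    all_goals simp [defect, Fc.dt, Fc.du]
  have hc : 2 ≤ -ω .t := by
    have hQ := D.hQ
    have h1 : ((D.Q + 1 : ℕ) : ℤ) ≤ ∑ l, ω (.v l) := by
      have := Finset.card_nsmul_le_sum Finset.univ (fun l => ω (.v l)) 1 fun l _ => hv l
      simpa using this
    have h2 : 0 ≤ ∑ i, ω (.y i) := Finset.sum_nonneg fun i _ => hnn _ (by simp)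
    have h3 : 0 ≤ ∑ i, ω (.u i) := Finset.sum_nonneg fun i _ => hnn _ (by simp)
    have h4 : 0 ≤ ∑ j, ∑ i, ω (.b j i) := Finset.sum_nonneg fun j _ =>
      Finset.sum_nonneg fun i _ => hnn _ (by simp)
    rw [sum_vtx, hz] at hFle
    push_cast at h1
    omega
  refine ⟨i, j, σ, -ω .t, hc, ?_, ?_⟩
  · rw [fn_sum]
    have := one_le_sum (F := .Zu j i) (σ := σ) rfl ht hnn (by
      rintro (_ | _ | m | m | m | ⟨j', m⟩) hm h
      case y =>
        have : m ≠ j := by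
          rintro rfl
          exact h hyj
        simp [defect, Fc.dy, this]
      case u =>
        have : m ≠ i := by
          rintro rfl
          exact h hui
        simp [defect, Fc.du, this]
      case b => simp [hb _ _ _ h]
      case t => exact absurd rfl hm
      all_goals simp [defect, Fc.dt, Fc.dv])
    exact_mod_cast lt_of_lt_of_le one_pos this
  · rw [fn_sum, fn_sum, ← Int.cast_sub, ← Finset.sum_sub_distrib, Finset.sum_eq_single .t]
    · simp [defect, Fc.dt]
      ring
    · rintro (_ | _ | m | m | m | ⟨j', m⟩) - hm
      case t => exact absurd rfl hm
      case z => simp [hz]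
      case v => simp [defect, Fc.dv]
      case y =>
        rcases eq_or_ne m j with rfl | h
        · simp [hyj]
        · simp [defect, Fc.dy, h]
      case u =>
        rcases eq_or_ne m i with rfl | h
        · simp [hui]
        · simp [defect, Fc.du, h]
      case b =>
        by_cases h : ω (.b j' m) = 0
        · simp [h]
        · simp [hb _ _ _ h]
    · simp

end Model

end Params

namespace Params

variable {D : Params} {n : ℕ}

lemma defect_b_eq_zero_iff (F : D.Fc) (σ : D.Sel) (j : Fin D.k) (i : Fin (D.s j + 1)) :
    defect F σ (.b j i) = 0 ↔ i ≠ σ j := by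
  simp only [defect]
  split_ifs with h
  · simp [h, (F.block_pos j).ne']
  · simp [h]

/-- `Wall F σ F' σ' k k'` says that the facets `(F, σ)` and `(F', σ')` are adjacent, `k` and `k'`
being the vertices in only one of them, at height `0` over the other one. -/
structure Wall (F : D.Fc) (σ : D.Sel) (F' : D.Fc) (σ' : D.Sel) (k k' : D.Vtx) : Prop where
  left : defect F σ k = 0
  right : defect F' σ' k = 1
  left' : defect F σ k' = 1
  right' : defect F' σ' k' = 0
  iff : ∀ κ, κ ≠ k → κ ≠ k' → (defect F σ κ = 0 ↔ defect F' σ' κ = 0)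

lemma Wall.symm {F F' : D.Fc} {σ σ' : D.Sel} {k k' : D.Vtx} (h : Wall F σ F' σ' k k') :
    Wall F' σ' F σ k' k :=
  ⟨h.right', h.left', h.right, h.left, fun κ h₁ h₂ => (h.iff κ h₂ h₁).symm⟩

lemma wall_update (l : Fin (D.Q + 1)) (σ : D.Sel) {j : Fin D.k} {i : Fin (D.s j + 1)}
    (hi : i ≠ σ j) :
    Wall (.N l) σ (.N l) (Function.update σ j i) (.b j i) (.b j (σ j)) where
  left := (defect_b_eq_zero_iff _ _ _ _).2 hi
  right := by simp [defect, Fc.dy, Fc.du]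
  left' := by simp [defect, Fc.dy, Fc.du]
  right' := (defect_b_eq_zero_iff _ _ _ _).2 (by simpa using hi.symm)
  iff κ h₁ h₂ := by
    rcases κ with _ | _ | m | m | m | ⟨j', m⟩
    case b =>
      rw [defect_b_eq_zero_iff, defect_b_eq_zero_iff]
      rcases eq_or_ne j' j with rfl | h
      · have h₁ : m ≠ i := fun h => h₁ (by rw [h])
        have h₂ : m ≠ σ j' := fun h => h₂ (by rw [h])
        simp [h₁, h₂]
      · rw [Function.update_of_ne h]
    all_goals exact Iff.rfl

lemma wall_N_Tv (i : Fin (D.P + 1)) (l : Fin (D.Q + 1)) (σ : D.Sel) :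
    Wall (.N l) σ (.Tv i l) σ (.u i) .t where
  left := rfl
  right := by simp [defect, Fc.du]
  left' := rfl
  right' := rfl
  iff κ h₁ h₂ := by
    rcases κ with _ | _ | m | m | m | ⟨j', m⟩
    case t => exact absurd rfl h₂
    case z => simp [defect, Fc.dt]
    case v =>
      have : (D.P + D.Q + 2 : ℤ) ≠ 0 := by positivity
      simp [defect, Fc.dv, this]
    case y => simp [defect, Fc.dy]
    case u =>
      have h₁ : m ≠ i := fun h => h₁ (by rw [h])
      simp [defect, Fc.du, h₁]
    case b => rw [defect_b_eq_zero_iff, defect_b_eq_zero_iff]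

lemma wall_N_Zv (j : Fin (D.P + 1)) (l : Fin (D.Q + 1)) (σ : D.Sel) :
    Wall (.N l) σ (.Zv j l) σ (.y j) .z where
  left := rfl
  right := by simp [defect, Fc.dy]
  left' := rfl
  right' := rfl
  iff κ h₁ h₂ := by
    rcases κ with _ | _ | m | m | m | ⟨j', m⟩
    case t => simp [defect, Fc.dt]
    case z => exact absurd rfl h₂
    case v =>
      have : (D.P + D.Q + 2 : ℤ) ≠ 0 := by positivity
      have : (D.P + D.Q + 1 : ℤ) ≠ 0 := by positivity
      simp [defect, Fc.dv, *]
    case y =>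
      have h₁ : m ≠ j := fun h => h₁ (by rw [h])
      simp [defect, Fc.dy, h₁]
    case u => simp [defect, Fc.du]
    case b => rw [defect_b_eq_zero_iff, defect_b_eq_zero_iff]

lemma wall_Tv_Tv (i : Fin (D.P + 1)) {l l' : Fin (D.Q + 1)} (hl : l ≠ l') (σ : D.Sel) :
    Wall (.Tv i l) σ (.Tv i l') σ (.v l') (.v l) where
  left := by simp [defect, Fc.dv, hl.symm]
  right := by simp [defect, Fc.dv]
  left' := by simp [defect, Fc.dv]
  right' := by simp [defect, Fc.dv, hl]
  iff κ h₁ h₂ := by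
    rcases κ with _ | _ | m | m | m | ⟨j', m⟩
    case v =>
      have h₁ : m ≠ l' := fun h => h₁ (by rw [h])
      have h₂ : m ≠ l := fun h => h₂ (by rw [h])
      simp [defect, Fc.dv, h₁, h₂]
    case b => rw [defect_b_eq_zero_iff, defect_b_eq_zero_iff]
    all_goals exact Iff.rfl

lemma wall_Tv_Ty (i j : Fin (D.P + 1)) (l : Fin (D.Q + 1)) (σ : D.Sel) :
    Wall (.Tv i l) σ (.Ty i j) σ (.y j) (.v l) where
  left := rfl
  right := by simp [defect, Fc.dy]
  left' := by simp [defect, Fc.dv]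
  right' := rfl
  iff κ h₁ h₂ := by
    rcases κ with _ | _ | m | m | m | ⟨j', m⟩
    case t => exact Iff.rfl
    case z => exact Iff.rfl
    case v =>
      have h₂ : m ≠ l := fun h => h₂ (by rw [h])
      simp [defect, Fc.dv, h₂]
    case y =>
      have h₁ : m ≠ j := fun h => h₁ (by rw [h])
      simp [defect, Fc.dy, h₁]
    case u => simp [defect, Fc.du]
    case b => rw [defect_b_eq_zero_iff, defect_b_eq_zero_iff]

namespace Model

variable {x : D.Vtx → Fin n → ℝ} (hx : D.Model x)

section

variable {R : Set (Fin n → ℝ)} (hR : IsSmoothFano R) {w : Fin n → ℝ}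
  (hw : IsLatticePoint w) (hwx : ∀ k, w ≠ x k)
  (hV : ∀ p, p ∈ vertexSet R ↔ (∃ k, p = x k) ∨ p = w)

include hx hR hw hwx hV

lemma fn_le_zero_or_two_le (F : D.Fc) (σ : D.Sel) : hx.fn F σ w ≤ 0 ∨ 2 ≤ hx.fn F σ w := by
  obtain ⟨m, hm⟩ := hx.isLatticeIntegral_fn F σ w hw
  have hne : hx.fn F σ w ≠ 1 := by
    intro h1
    have key := hR.exists_dual (g := hx.fn F σ) (x₀ := w) (fun p hp => ?_) (fun h hh => ?_)
      ((hV w).2 (Or.inr rfl)) h1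
    · obtain ⟨h, hhw, hh, -⟩ := key
      have : h = 0 := hx.linear_eq_zero_of_defect F σ fun k hk =>
        hh _ ((hV _).2 (Or.inl ⟨k, rfl⟩)) ((hx.fn_eq_one_iff F σ k).2 hk) (hwx k).symm
      simp [this] at hhw
    · rcases (hV p).1 hp with ⟨k, rfl⟩ | rfl
      · exact hx.fn_le F σ k
      · exact h1.le
    · exact hx.linear_eq_zero_of_defect F σ fun k hk =>
        hh _ ⟨(hV _).2 (Or.inl ⟨k, rfl⟩), (hx.fn_eq_one_iff F σ k).2 hk⟩
  rw [hm] at hne ⊢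
  have : m ≠ 1 := by exact_mod_cast hne
  have : m ≤ 0 ∨ 2 ≤ m := by omega
  exact_mod_cast this

/-- If a facet is visible from `w` and an adjacent one is not, then the common ridge and `w` span
a facet, which has to be unimodular. -/
lemma exists_int_mul_sub_eq {F F' : D.Fc} {σ σ' : D.Sel} {k : D.Vtx}
    (hF : ∀ κ, κ ≠ k → defect F σ κ = 0 → defect F' σ' κ = 0) (hk : defect F σ k = 0)
    (hk' : defect F' σ' k ≠ 0) (h₁ : 2 ≤ hx.fn F σ w) (h₂ : hx.fn F' σ' w ≤ 0) :
    ∃ N : ℤ, (N : ℝ) * (hx.fn F σ w - hx.fn F' σ' w) = defect F' σ' k := by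
  set a := hx.fn F σ w with ha
  set a' := hx.fn F' σ' w with ha'
  have hpos : 0 < a - a' := by linarith
  set μ := (a - 1) / (a - a') with hμ
  have hμ0 : 0 < μ := div_pos (by linarith) hpos
  have hμ1 : 0 < 1 - μ := by
    rw [hμ, one_sub_div hpos.ne']
    exact div_pos (by linarith) hpos
  set f := (1 - μ) • hx.fn F σ + μ • hx.fn F' σ' with hf
  have hfw : f w = 1 := by
    have : μ * (a - a') = a - 1 := div_mul_cancel₀ _ hpos.ne'
    simp only [hf, LinearMap.add_apply, LinearMap.smul_apply, smul_eq_mul, ← ha, ← ha']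
    linarith
  have hfx : ∀ κ, f (x κ) = 1 - ((1 - μ) * defect F σ κ + μ * defect F' σ' κ) := fun κ => by
    simp only [hf, LinearMap.add_apply, LinearMap.smul_apply, smul_eq_mul, fn_apply]
    ring
  have hd : ∀ κ, (0 : ℝ) ≤ defect F σ κ := fun κ => by exact_mod_cast defect_nonneg F σ κ
  have hd' : ∀ κ, (0 : ℝ) ≤ defect F' σ' κ := fun κ => by exact_mod_cast defect_nonneg F' σ' κ
  have hk'' : (defect F' σ' k : ℝ) ≠ 0 := by exact_mod_cast hk'
  have hfz : ∀ κ, defect F σ κ = 0 → defect F' σ' κ = 0 → f (x κ) = 1 := fun κ h h' => by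
    simp [hfx, h, h']
  have hVx : ∀ κ, x κ ∈ vertexSet R := fun κ => (hV _).2 (Or.inl ⟨κ, rfl⟩)
  have hVw : w ∈ vertexSet R := (hV w).2 (Or.inr rfl)
  have hline : ∀ h : (Fin n → ℝ) →ₗ[ℝ] ℝ,
      (∀ κ, defect F σ κ = 0 → defect F' σ' κ = 0 → h (x κ) = 0) →
      h = (h (x k) / defect F' σ' k) • (hx.fn F σ - hx.fn F' σ') := by
    intro h hh
    rw [← sub_eq_zero]
    refine hx.linear_eq_zero_of_defect F σ fun κ hκ => ?_
    rcases eq_or_ne κ k with rfl | hne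
    · simp [fn_apply, hκ, div_mul_cancel₀ _ hk'']
    · simp [fn_apply, hκ, hF κ hne hκ, hh κ hκ (hF κ hne hκ)]
  have key := hR.exists_dual (g := f) (x₀ := w) (fun p hp => ?_) (fun h hh => ?_) hVw hfw
  · obtain ⟨h, hhw, hh, h_int⟩ := key
    obtain ⟨N, hN⟩ := h_int _ (hx.lat k)
    refine ⟨N, ?_⟩
    rw [hline h fun κ h₁ h₂ => hh _ (hVx κ) (hfz κ h₁ h₂) (hwx κ).symm] at hhw
    simp only [LinearMap.smul_apply, LinearMap.sub_apply, smul_eq_mul, ← ha, ← ha', hN] at hhw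
    field_simp at hhw
    exact hhw
  · rcases (hV p).1 hp with ⟨κ, rfl⟩ | rfl
    · rw [hfx]
      have := hd κ
      have := hd' κ
      have : 0 ≤ (1 - μ) * defect F σ κ + μ * defect F' σ' κ := by positivity
      linarith
    · exact hfw.le
  · rw [hline h fun κ h₁ h₂ => hh _ ⟨hVx κ, hfz κ h₁ h₂⟩]
    have hw0 := hh w ⟨hVw, hfw⟩
    rw [hline h fun κ h₁ h₂ => hh _ ⟨hVx κ, hfz κ h₁ h₂⟩] at hw0
    simp only [LinearMap.smul_apply, LinearMap.sub_apply, smul_eq_mul, ← ha, ← ha'] at hw0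
    rw [(mul_eq_zero.1 hw0).resolve_right hpos.ne', zero_smul]

lemma two_le_of_wall {F F' : D.Fc} {σ σ' : D.Sel} {k k' : D.Vtx} (h : Wall F σ F' σ' k k')
    (h₁ : 2 ≤ hx.fn F σ w) : 2 ≤ hx.fn F' σ' w := by
  refine (hx.fn_le_zero_or_two_le hR hw hwx hV F' σ').resolve_left fun h₂ => ?_
  obtain ⟨N, hN⟩ := hx.exists_int_mul_sub_eq hR hw hwx hV (F := F) (σ := σ) (F' := F') (σ' := σ')
    (k := k) (fun κ hne hκ => (h.iff κ hne fun hk' => by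
      have := h.left'
      rw [← hk', hκ] at this
      exact zero_ne_one this).1 hκ) h.left (by rw [h.right]; exact one_ne_zero) h₁ h₂
  rw [h.right, Int.cast_one] at hN
  rcases le_or_gt N 0 with h0 | h0
  · have : (N : ℝ) ≤ 0 := by exact_mod_cast h0
    nlinarith
  · have : (1 : ℝ) ≤ N := by exact_mod_cast h0
    nlinarith

lemma two_le_iff_of_wall {F F' : D.Fc} {σ σ' : D.Sel} {k k' : D.Vtx}
    (h : Wall F σ F' σ' k k') : 2 ≤ hx.fn F σ w ↔ 2 ≤ hx.fn F' σ' w :=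
  ⟨hx.two_le_of_wall hR hw hwx hV h, hx.two_le_of_wall hR hw hwx hV h.symm⟩

lemma two_le_fn_N_iff (l : Fin (D.Q + 1)) (σ τ : D.Sel) :
    2 ≤ hx.fn (.N l) σ w ↔ 2 ≤ hx.fn (.N l) τ w := by
  have key : ∀ s : Finset (Fin D.k),
      2 ≤ hx.fn (.N l) σ w ↔ 2 ≤ hx.fn (.N l) (s.piecewise τ σ) w := by
    intro s
    induction s using Finset.induction_on with
    | empty => rw [Finset.piecewise_empty]
    | insert j s hj ih =>
      rw [Finset.piecewise_insert, ih]
      by_cases h : τ j = s.piecewise τ σ j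
      · rw [h, Function.update_eq_self]
      · exact hx.two_le_iff_of_wall hR hw hwx hV (wall_update l _ h)
  rw [key Finset.univ, Finset.piecewise_univ]

/-- All facets of type `N`, `Tv`, `Ty` and `Zv` are visible from `w`, or none is. -/
lemma two_le_fn_iff (F : D.Fc) (hF : ∀ j i, F ≠ .Zu j i) (σ τ : D.Sel) :
    2 ≤ hx.fn F σ w ↔ 2 ≤ hx.fn (.N 0) τ w := by
  have hwall : ∀ {F F' : D.Fc} {σ σ' : D.Sel} {k k' : D.Vtx}, Wall F σ F' σ' k k' →
      (2 ≤ hx.fn F σ w ↔ 2 ≤ hx.fn F' σ' w) := fun h => hx.two_le_iff_of_wall hR hw hwx hV h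
  have hTv : ∀ i l, 2 ≤ hx.fn (.Tv i l) σ w ↔ 2 ≤ hx.fn (.N 0) τ w := by
    intro i l
    rw [hx.two_le_fn_N_iff hR hw hwx hV 0 τ σ, hwall (wall_N_Tv i 0 σ)]
    by_cases h : l = 0
    · rw [h]
    · exact hwall (wall_Tv_Tv i h σ)
  have hN : ∀ l, 2 ≤ hx.fn (.N l) σ w ↔ 2 ≤ hx.fn (.N 0) τ w := fun l => by
    rw [hwall (wall_N_Tv 0 l σ), hTv]
  cases F with
  | N l => exact hN l
  | Tv i l => exact hTv i l
  | Ty i j => rw [← hwall (wall_Tv_Ty i j 0 σ), hTv]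
  | Zv j l => rw [← hwall (wall_N_Zv j l σ), hN]
  | Zu j i => exact absurd rfl (hF j i)

lemma not_forall_two_le (hTv : ∀ i l σ, 2 ≤ hx.fn (.Tv i l) σ w)
    (hTy : ∀ i j σ, 2 ≤ hx.fn (.Ty i j) σ w) : False := by
  have hn : 0 < n := by have := hx.two_le; omega
  have hsub : vertexSet R ⊆ R := extremePoints_subset
  have hVx : ∀ κ, x κ ∈ vertexSet R := fun κ => (hV _).2 (Or.inl ⟨κ, rfl⟩)
  obtain ⟨F, σ, ω, hF, hwω, hnn, hω⟩ := hx.exists_coeff (w := -w) fun i => by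
    obtain ⟨m, hm⟩ := hw i
    exact ⟨-m, by simp [hm]⟩
  have h2 : 2 ≤ hx.fn F σ w := by
    rcases hF with ⟨i, l, rfl⟩ | ⟨i, j, rfl⟩
    · exact hTv i l σ
    · exact hTy i j σ
  have hsum : ∑ k, (ω k : ℝ) ≤ -2 := by
    have h3 := hx.fn_sum F σ ω
    rw [← hwω, sum_mul_eq_sum hω, map_neg] at h3
    push_cast at h3
    linarith
  rw [← Finset.add_sum_erase _ _ (Finset.mem_univ Vtx.t)] at hsum hwω
  have hnn' : ∀ k ∈ Finset.univ.erase Vtx.t, (0 : ℝ) ≤ ω k := fun k hk => by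
    exact_mod_cast hnn k (Finset.ne_of_mem_erase hk)
  have hnns := Finset.sum_nonneg hnn'
  refine notMem_vertexSet_of_smul_eq_sum (Q := R) (t := x .t) (l := -(ω .t : ℝ))
    (p := fun k => if k = .t then w else x k) (c := fun k => if k = .t then 1 else (ω k : ℝ))
    ?_ (interior_subset hR.2.1) ?_ ?_ ?_ ?_ ?_ ?_ ?_ (hVx .t)
  · rw [← hR.1.convexHull_vertexSet]
    exact convex_convexHull ℝ _
  · intro h
    exact hR.zero_notMem_vertexSet hn (h ▸ hVx .t)
  · intro k
    split_ifs
    · exact hsub ((hV w).2 (Or.inr rfl))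
    · exact hsub (hVx k)
  · intro k _
    split_ifs with h
    · exact hwx .t
    · exact hx.injective.ne h
  · intro k
    split_ifs with h
    · exact zero_le_one
    · exact hnn' k (Finset.mem_erase.2 ⟨h, Finset.mem_univ k⟩)
  · linarith
  · rw [← Finset.add_sum_erase _ _ (Finset.mem_univ Vtx.t), if_pos rfl,
      Finset.sum_congr rfl fun k hk => if_neg (Finset.ne_of_mem_erase hk)]
    linarith
  · rw [← Finset.add_sum_erase _ _ (Finset.mem_univ Vtx.t), if_pos rfl, if_pos rfl, one_smul,
      Finset.sum_congr rfl fun k hk => by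
        rw [if_neg (Finset.ne_of_mem_erase hk), if_neg (Finset.ne_of_mem_erase hk)],
      neg_smul, ← sub_eq_zero]
    rw [← sub_eq_zero] at hwω
    rw [← hwω]
    abel

omit hw hwx hV in
lemma not_add (hw : IsLatticePoint w) (hwx : ∀ k, w ≠ x k) :
    ¬ ∀ p, p ∈ vertexSet R ↔ (∃ k, p = x k) ∨ p = w := by
  intro hV
  by_cases h : 2 ≤ hx.fn (.N 0) (fun _ => 0) w
  · refine hx.not_forall_two_le hR hw hwx hV (fun i l σ => ?_) fun i j σ => ?_
    all_goals exact (hx.two_le_fn_iff hR hw hwx hV _ (by simp) _ _).2 h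
  · have hle : ∀ (F : D.Fc) (σ : D.Sel), (∀ j i, F ≠ .Zu j i) → hx.fn F σ w ≤ 0 :=
      fun F σ hF => (hx.fn_le_zero_or_two_le hR hw hwx hV F σ).resolve_right fun h' =>
        h ((hx.two_le_fn_iff hR hw hwx hV F hF _ _).1 h')
    have hw0 : w ≠ 0 := by
      rintro rfl
      exact hR.zero_notMem_vertexSet (by have := hx.two_le; omega) ((hV 0).2 (Or.inr rfl))
    obtain ⟨i, j, σ, c, hc, hpos, hdiff⟩ := hx.exists_Zu_of_nonpos hw hw0
      (fun i l σ => hle _ σ (by simp)) (fun i j σ => hle _ σ (by simp))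
      fun j l σ => hle _ σ (by simp)
    have key := hx.exists_int_mul_sub_eq hR hw hwx hV (F := .Zu j i) (σ := σ) (F' := .Ty i j)
      (σ' := σ) (k := .z) (fun κ hne hκ => ?_) rfl (by simp [defect, Fc.dt])
      ((hx.fn_le_zero_or_two_le hR hw hwx hV _ σ).resolve_left hpos.not_ge)
      (hle _ σ (by simp))
    · obtain ⟨N, hN⟩ := key
      rw [hdiff] at hN
      have hN : N * (2 * c) = 2 := by
        simp only [defect, Fc.dt] at hN
        exact_mod_cast hN
      have : N * c = 1 := by linarith
      rcases Int.eq_one_or_neg_one_of_mul_eq_one' this with h | h <;> omega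
    · have h₁ : (D.P + D.Q + 1 : ℤ) ≠ 0 := by positivity
      have h₂ : (2 * (D.P + D.Q + 1) + 1 : ℤ) ≠ 0 := by positivity
      rcases κ with _ | _ | m | m | m | ⟨j', m⟩
      case t => exact absurd hκ (by simp [defect, Fc.dt])
      case z => exact absurd rfl hne
      case v => rfl
      case y => simpa [defect, Fc.dy, h₂] using hκ
      case u => simpa [defect, Fc.du, h₁] using hκ
      case b => rwa [defect_b_eq_zero_iff] at hκ ⊢

omit hw hwx hV in
lemma not_iStep (hD : D.Rigid) : ¬ IStep R (convexHull ℝ (Set.range x)) := by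
  rintro (⟨w, -, hwR, h⟩ | ⟨w, hw, hwx, h⟩)
  · rw [hx.vertexSet_eq] at h
    obtain ⟨k₀, rfl⟩ : w ∈ Set.range x := h ▸ Or.inr rfl
    refine hx.not_remove hR hD k₀ fun p => ⟨fun hp => ?_, ?_⟩
    · obtain ⟨k, rfl⟩ : p ∈ Set.range x := h ▸ Or.inl hp
      exact ⟨k, fun hk => hwR (hk ▸ hp), rfl⟩
    · rintro ⟨k, hk, rfl⟩
      have : x k ∈ vertexSet R ∪ {x k₀} := h ▸ ⟨k, rfl⟩
      exact this.resolve_right fun h => hk (hx.injective h)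
  · rw [hx.vertexSet_eq] at h hwx
    refine hx.not_add hR hw (fun k hk => hwx ⟨k, hk.symm⟩) fun p => ?_
    rw [h]
    simp [eq_comm, or_comm]

end

end Model

end Params

/-- The affine map in a unimodular equivalence is invertible. -/
lemma exists_affineEquiv_of_image_isLatticePoint {n : ℕ} {φ : (Fin n → ℝ) →ᵃ[ℝ] (Fin n → ℝ)}
    (h : φ '' {x | IsLatticePoint x} = {x | IsLatticePoint x}) :
    ∃ e : (Fin n → ℝ) ≃ᵃ[ℝ] (Fin n → ℝ),
      ⇑e = φ ∧ ∀ p, IsLatticePoint (e p) ↔ IsLatticePoint p := by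
  have hsurj : Function.Surjective φ.linear := by
    have hpre : ∀ q : Fin n → ℝ, IsLatticePoint q → ∃ p, φ p = q := fun q hq => by
      obtain ⟨p, -, hp⟩ := h.ge hq
      exact ⟨p, hp⟩
    obtain ⟨q₀, hq₀⟩ := hpre 0 fun _ => ⟨0, by simp⟩
    rw [← LinearMap.range_eq_top, eq_top_iff, ← (Pi.basisFun ℝ (Fin n)).span_eq,
      Submodule.span_le]
    rintro _ ⟨i, rfl⟩
    obtain ⟨q, hq⟩ := hpre (Pi.single i 1) fun k => by
      rcases eq_or_ne k i with rfl | h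
      · exact ⟨1, by simp⟩
      · exact ⟨0, by simp [h]⟩
    refine ⟨q -ᵥ q₀, ?_⟩
    rw [AffineMap.linearMap_vsub, hq, hq₀]
    simp
  have hbij : Function.Bijective φ :=
    (AffineMap.linear_bijective_iff φ).1 ⟨LinearMap.injective_iff_surjective.2 hsurj, hsurj⟩
  refine ⟨AffineEquiv.ofBijective hbij, rfl, fun p => ⟨fun hp => ?_, fun hp => ?_⟩⟩
  · obtain ⟨q, hq, hqp⟩ := h.ge hp
    exact hbij.1 hqp ▸ hq
  · exact h.le ⟨p, hp, rfl⟩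

lemma unimodularEquiv_iff {n : ℕ} {Q Q' : Set (Fin n → ℝ)} :
    UnimodularEquiv Q Q' ↔ ∃ e : (Fin n → ℝ) ≃ᵃ[ℝ] (Fin n → ℝ),
      (∀ p, IsLatticePoint (e p) ↔ IsLatticePoint p) ∧ e '' Q = Q' := by
  constructor
  · rintro ⟨φ, h, rfl⟩
    obtain ⟨e, he, hl⟩ := exists_affineEquiv_of_image_isLatticePoint h
    exact ⟨e, hl, by rw [he]⟩
  · rintro ⟨e, hl, rfl⟩
    refine ⟨e, Set.ext fun p => ⟨?_, fun hp => ⟨e.symm p, ?_, by simp⟩⟩, rfl⟩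
    · rintro ⟨q, hq, rfl⟩
      exact (hl q).2 hq
    · exact (hl _).1 (by simpa using hp)

namespace UnimodularEquiv

variable {n : ℕ} {Q Q' Q'' : Set (Fin n → ℝ)}

lemma symm (h : UnimodularEquiv Q Q') : UnimodularEquiv Q' Q := by
  rw [unimodularEquiv_iff] at h ⊢
  obtain ⟨e, hl, rfl⟩ := h
  refine ⟨e.symm, fun p => by rw [← hl, e.apply_symm_apply], ?_⟩
  rw [Set.image_image]
  simp

lemma trans (h : UnimodularEquiv Q Q') (h' : UnimodularEquiv Q' Q'') :
    UnimodularEquiv Q Q'' := by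
  rw [unimodularEquiv_iff] at h h' ⊢
  obtain ⟨e, hl, rfl⟩ := h
  obtain ⟨e', hl', rfl⟩ := h'
  exact ⟨e.trans e', fun p => by simp [hl, hl'], by rw [Set.image_image]; rfl⟩

end UnimodularEquiv

namespace Params

variable {D : Params} {n : ℕ}

namespace Model

variable {x : D.Vtx → Fin n → ℝ} (hx : D.Model x)

include hx

/-- The origin is the only lattice point lying beyond no facet and on no facet. -/
lemma eq_zero_of_fn_nonpos {w : Fin n → ℝ} (hw : IsLatticePoint w)
    (h : ∀ F σ, hx.fn F σ w ≤ 0) : w = 0 := by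
  by_contra hw0
  obtain ⟨i, j, σ, -, -, hpos, -⟩ := hx.exists_Zu_of_nonpos hw hw0 (fun _ _ _ => h _ _)
    (fun _ _ _ => h _ _) fun _ _ _ => h _ _
  exact hpos.not_ge (h _ _)

lemma map {e : (Fin n → ℝ) ≃ᵃ[ℝ] (Fin n → ℝ)}
    (he : ∀ p, IsLatticePoint (e p) ↔ IsLatticePoint p)
    (h0 : (0 : Fin n → ℝ) ∈ interior (e '' convexHull ℝ (Set.range x))) : D.Model (e ∘ x) := by
  have hL : ∀ p, e p = e.linear (p - e.symm 0) := fun p => by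
    have := e.toAffineMap.linearMap_vsub p (e.symm 0)
    simpa using this.symm
  have hlat : IsLatticePoint (e.symm 0) := (he _).1 (by
    rw [e.apply_symm_apply]
    exact fun _ => ⟨0, by simp⟩)
  have hmem : e.symm 0 ∈ convexHull ℝ (Set.range x) := by
    obtain ⟨p, hp, hp0⟩ := interior_subset h0
    rwa [← hp0, e.symm_apply_apply]
  have hle : ∀ F σ, ∀ p ∈ convexHull ℝ (Set.range x), hx.fn F σ p ≤ 1 := fun F σ p hp =>
    linear_le_of_mem_convexHull (by rintro _ ⟨k, rfl⟩; exact hx.fn_le F σ k) hp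
  have hsymm : e.symm 0 = 0 := by
    refine hx.eq_zero_of_fn_nonpos hlat fun F σ => ?_
    obtain ⟨m, hm⟩ := hx.isLatticeIntegral_fn F σ _ hlat
    have h1 := hle F σ _ hmem
    have hne : hx.fn F σ (e.symm 0) ≠ 1 := by
      intro h1
      have hzero : -(hx.fn F σ ∘ₗ e.linear.symm.toLinearMap) = 0 := by
        refine linear_eq_zero_of_nonneg_of_zero_mem_interior h0 ?_
        rintro _ ⟨p, hp, rfl⟩
        have := hle F σ p hp
        rw [hL p]
        simp [h1, this]
      have := LinearMap.congr_fun hzero (e.linear (e.symm 0))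
      simp [h1] at this
    rw [hm] at h1 hne ⊢
    have h1 : m ≤ 1 := by exact_mod_cast h1
    have hne : m ≠ 1 := by exact_mod_cast hne
    have : m ≤ 0 := by omega
    exact_mod_cast this
  have hL : ∀ p, e p = e.linear p := fun p => by rw [hL, hsymm, sub_zero]
  refine ⟨fun k => (he _).2 (hx.lat k), fun f => ?_, fun w hw => ?_, fun r hr => ?_, hx.card⟩
  · simpa [hL] using hx.homRel (f ∘ₗ e.linear.toLinearMap)
  · obtain ⟨ω, hω⟩ := hx.gen (e.symm w) ((he _).1 (by rwa [e.apply_symm_apply]))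
    refine ⟨ω, ?_⟩
    rw [← e.apply_symm_apply w, hω, hL]
    simp [hL]
  · obtain ⟨f, hf⟩ := hx.ext r hr
    exact ⟨f ∘ₗ e.linear.symm.toLinearMap, fun k => by simp [hL, hf]⟩

lemma iIsolated (hD : D.Rigid) : IIsolated (convexHull ℝ (Set.range x)) := by
  rintro Q - ⟨k, c, hc, hQ, hP, hstep⟩
  cases k with
  | zero => exact hQ.trans hP.symm
  | succ k =>
    obtain ⟨e, he, heP⟩ := unimodularEquiv_iff.1 hP
    have hex : D.Model (e ∘ x) := hx.map he (heP ▸ (hc _).2.1)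
    refine absurd (hstep (Fin.last k)) ?_
    have : c (Fin.last k).succ = convexHull ℝ (Set.range (e ∘ x)) := by
      rw [Fin.succ_last, ← heP, Set.range_comp]
      exact e.toAffineMap.image_convexHull _
    rw [this]
    exact hex.not_iStep (hc _) hD

end Model

end Params

namespace Params

variable (D : Params)

/-- Labels of the vertices forming a basis, which determine all others. -/
abbrev Idx : Type :=
  (Fin D.Q ⊕ Fin (D.P + 1)) ⊕ (Fin (D.P + 1) ⊕ Σ j, Fin (D.s j))

variable {D}

/-- The family with the given values on the basis satisfying the linear relations. -/
def extend {M : Type*} [AddCommGroup M] (B : D.Idx → M) : D.Vtx → M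
  | .t => ∑ i, B (.inl (.inr i)) - ∑ i, B (.inr (.inl i))
  | .z => ∑ i, B (.inr (.inl i)) - ∑ i, B (.inl (.inr i))
  | .v i => Fin.cases ((D.P + D.Q + 1) • (∑ i, B (.inl (.inr i)) - ∑ i, B (.inr (.inl i)))
      - ∑ i, B (.inl (.inr i)) - ∑ i, B (.inl (.inl i))) (fun i => B (.inl (.inl i))) i
  | .y i => B (.inl (.inr i))
  | .u i => B (.inr (.inl i))
  | .b j i => Fin.cases (D.α j • B (.inl (.inr 0)) + D.β j • B (.inr (.inl 0))
      - ∑ i, B (.inr (.inr ⟨j, i⟩))) (fun i => B (.inr (.inr ⟨j, i⟩))) i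

lemma map_extend {M N G : Type*} [AddCommGroup M] [AddCommGroup N] [FunLike G M N]
    [AddMonoidHomClass G M N] (f : G) (B : D.Idx → M) (k : D.Vtx) :
    f (extend B k) = extend (f ∘ B) k := by
  rcases k with _ | _ | i | i | i | ⟨j, i⟩
  case v => cases i using Fin.cases <;> simp [extend]
  case b => cases i using Fin.cases <;> simp [extend]
  all_goals simp [extend]

lemma homRel_extend (B : D.Idx → ℝ) : D.HomRel (extend B) where
  rel₁ := by
    simp [extend, Fin.sum_univ_succ]
  rel₂ := by simp [extend]
  rel₃ := by simp [extend]
  rel₄ j := by simp [extend, Fin.sum_univ_succ]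

lemma HomRel.exists_eq_extend {r : D.Vtx → ℝ} (hr : D.HomRel r) :
    ∃ B : D.Idx → ℝ, r = extend B := by
  have h₁ := hr.rel₁
  have h₂ := hr.rel₂
  have h₃ := hr.rel₃
  have h₄ := hr.rel₄
  have ht : r .t = ∑ i, r (.y i) - ∑ i, r (.u i) := by linarith
  refine ⟨fun i => match i with
    | .inl (.inl i) => r (.v i.succ)
    | .inl (.inr i) => r (.y i)
    | .inr (.inl i) => r (.u i)
    | .inr (.inr ⟨j, i⟩) => r (.b j i.succ), funext fun k => ?_⟩
  rcases k with _ | _ | i | i | i | ⟨j, i⟩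
  case t => exact ht
  case z =>
    simp only [extend]
    linarith
  case v =>
    cases i using Fin.cases with
    | zero =>
      rw [Fin.sum_univ_succ, ht] at h₁
      simp only [extend, Fin.cases_zero, nsmul_eq_mul]
      linarith
    | succ i => rfl
  case b =>
    cases i using Fin.cases with
    | zero =>
      have h₄ := h₄ j
      rw [Fin.sum_univ_succ] at h₄
      simp only [extend, Fin.cases_zero, nsmul_eq_mul]
      linarith
    | succ i => rfl
  all_goals rfl

lemma sum_mul_extend (m : D.Idx → ℤ) {M : Type*} [AddCommGroup M] (B : D.Idx → M) :
    ∃ ω : D.Vtx → ℤ, ∑ i, m i • B i = ∑ k, ω k • extend B k := by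
  refine ⟨fun k => match k with
    | .t => 0
    | .z => 0
    | .v i => Fin.cases 0 (fun i => m (.inl (.inl i))) i
    | .y i => m (.inl (.inr i))
    | .u i => m (.inr (.inl i))
    | .b j i => Fin.cases (motive := fun _ => ℤ) 0 (fun i => m (.inr (.inr ⟨j, i⟩))) i, ?_⟩
  simp only [sum_vtx, Fin.sum_univ_succ, Fintype.sum_sum_type, Fintype.sum_sigma, extend,
    Fin.cases_zero, Fin.cases_succ, zero_smul, zero_add]
  abel

lemma exists_model (D : Params) {n : ℕ} (hn : n = D.Q + 2 * (D.P + 1) + ∑ j, D.s j) :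
    ∃ x : D.Vtx → Fin n → ℝ, D.Model x := by
  have hcard : Fintype.card D.Idx = n := by
    simp only [Fintype.card_sum, Fintype.card_sigma, Fintype.card_fin]
    omega
  let e : D.Idx ≃ Fin n := Fintype.equivFinOfCardEq hcard
  let B : D.Idx → Fin n → ℝ := fun i => Pi.single (e i) 1
  refine ⟨extend B, fun k c => ?_, fun f => ?_, fun w hw => ?_, fun r hr => ?_, hn⟩
  · refine ⟨extend (fun i => Pi.single (M := fun _ => ℤ) (e i) 1 c) k, ?_⟩
    change LinearMap.proj (R := ℝ) (φ := fun _ => ℝ) c (extend B k) = Int.castAddHom ℝ _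
    rw [map_extend, map_extend]
    congr 1
    funext i
    simp [B, Pi.single_apply]
  · simpa only [map_extend] using homRel_extend (f ∘ B)
  · choose m hm using hw
    obtain ⟨ω, hω⟩ := sum_mul_extend (fun i => m (e i)) B
    refine ⟨ω, ?_⟩
    simp only [Int.cast_smul_eq_zsmul]
    rw [← hω, e.sum_comp (fun c => m c • (Pi.single c 1 : Fin n → ℝ))]
    ext c
    simp [hm, Finset.sum_apply, Pi.single_apply]
  · obtain ⟨r', rfl⟩ := hr.exists_eq_extend
    refine ⟨(Pi.basisFun ℝ (Fin n)).constr ℝ (r' ∘ e.symm), fun k => ?_⟩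
    rw [map_extend]
    congr 1
    funext i
    have := (Pi.basisFun ℝ (Fin n)).constr_basis ℝ (r' ∘ e.symm) (e i)
    simpa using this

/-- Every rigid choice of numerical data gives rise to an isolated polytope. -/
lemma Rigid.exists_iIsolated (hD : D.Rigid) {n : ℕ}
    (hn : n = D.Q + 2 * (D.P + 1) + ∑ j, D.s j) :
    ∃ P : Set (Fin n → ℝ), IsSmoothFano P ∧ IIsolated P ∧
      (vertexSet P).ncard = n + (3 + D.k) := by
  obtain ⟨x, hx⟩ := exists_model D hn
  exact ⟨_, hx.isSmoothFano, hx.iIsolated hD, hx.ncard_vertexSet⟩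

end Params

/-- For all integers `n ≥ 5` and `3 ≤ ρ ≤ n`, there exists an
I-isolated smooth Fano `n`-polytope with `n + ρ` vertices. -/
theorem exists_I_isolated_smooth_Fano (n ρ : ℕ) (hn : 5 ≤ n) (hρ₁ : 3 ≤ ρ)
    (hρ₂ : ρ ≤ n) :
    ∃ P : Set (Fin n → ℝ), IsSmoothFano P ∧ IIsolated P ∧
      (vertexSet P).ncard = n + ρ := by
  obtain ⟨D, hD, hk, hcard⟩ : ∃ D : Params, D.Rigid ∧ ρ = 3 + D.k ∧
      n = D.Q + 2 * (D.P + 1) + ∑ j, D.s j := by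
    obtain rfl | rfl | hρ : ρ = 3 ∨ ρ = 4 ∨ 5 ≤ ρ := by omega
    · refine ⟨⟨1, n - 4, 0, fun _ => 1, fun _ => 1, fun _ => 0, by omega, by simp, by simp⟩,
        Or.inl ⟨le_rfl, rfl⟩, rfl, ?_⟩
      simp only [Finset.univ_eq_empty, Finset.sum_empty]
      omega
    · refine ⟨⟨0, n - 4, 1, fun _ => 2, fun _ => 1, fun _ => 1, by omega, by simp, by simp⟩,
        Or.inr ⟨rfl, by simp, ⟨0, rfl⟩, ⟨0, rfl⟩⟩, rfl, ?_⟩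
      simp only [Finset.univ_unique, Finset.sum_singleton]
      omega
    · obtain ⟨k, rfl⟩ : ∃ k, ρ = 3 + (k + 2) := ⟨ρ - 5, by omega⟩
      refine ⟨⟨0, n - (k + 4), k + 2, fun _ => 1, fun j => if j = 0 then 1 else 0,
        fun j => if j = 0 then 0 else 1, by omega, by simp, fun j => by split_ifs <;> rfl⟩,
        Or.inr ⟨rfl, fun j => ?_, ⟨0, by simp⟩, ⟨1, by simp⟩⟩, rfl, ?_⟩
      · dsimp only
        split_ifs <;> simp
      · simp only [Finset.sum_const, Finset.card_univ, Fintype.card_fin, smul_eq_mul]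
        omega
  rw [hk]
  exact hD.exists_iIsolated hcard
end
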